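/- arXiv:1812.00830 — 14 statements merged into one kernel-verified Lean document; each statement's English description precedes it below -/
import Mathlib

section
/- Let (R,𝔪) be an artinian local ring which is injective as a module over itself (i.e., a zero-dimensional Gorenstein local ring). Then an arbitrary (not necessarily finitely generated) R-module M is weakly reflexive if and only if M is finitely generated. -/
theorem aux_soc (R : Type u) [CommRing R] [IsArtinianRing R] [IsLocalRing R] :
    ∃ x : R, x ≠ 0 ∧ ∀ r ∈ IsLocalRing.maximalIdeal R, r * x = 0 := by
  classical
  have hA : IsNilpotent (IsLocalRing.maximalIdeal R) := by
    rw [← IsLocalRing.jacobson_eq_maximalIdeal (⊥ : Ideal R) bot_ne_top]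
    exact IsArtinianRing.isNilpotent_jacobson_bot
  have h0 := Nat.find_spec hA
  have h1 : Nat.find hA ≠ 0 := by
    intro h
    rw [h] at h0
    simp at h0
  obtain ⟨n, hn⟩ := Nat.exists_eq_succ_of_ne_zero h1
  have h2 : (IsLocalRing.maximalIdeal R) ^ n ≠ 0 := Nat.find_min hA (by omega)
  obtain ⟨x, hx, hx0⟩ := Submodule.exists_mem_ne_zero_of_ne_bot h2
  refine ⟨x, hx0, fun r hr => ?_⟩
  have := Ideal.mul_mem_mul hr hx
  rw [← pow_succ', ← Nat.succ_eq_add_one, ← hn, h0] at this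
  simpa using this

theorem aux_cogen (R : Type u) [CommRing R] [IsArtinianRing R] [IsLocalRing R]
    [Module.Injective R R] (N : Type u) [AddCommGroup N] [Module R N] (n : N) (hn : n ≠ 0) :
    ∃ f : N →ₗ[R] R, f n ≠ 0 := by
  obtain ⟨x, hx0, hx⟩ := aux_soc R
  let s := LinearMap.toSpanSingleton R N n
  have hs : LinearMap.ker s ≤ IsLocalRing.maximalIdeal R := by
    apply IsLocalRing.le_maximalIdeal
    intro h
    apply hn
    have : (1 : R) ∈ LinearMap.ker s := by rw [h]; trivial
    simpa [s] using this
  obtain ⟨h, hh⟩ := Module.Injective.out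
    ((LinearMap.ker s).liftQ s le_rfl)
    (LinearMap.ker_eq_bot.1 (Submodule.ker_liftQ_eq_bot _ _ _ le_rfl))
    ((LinearMap.ker s).liftQ (LinearMap.toSpanSingleton R R x) (fun r hr => by
      simpa using hx r (hs hr)))
  refine ⟨h, ?_⟩
  have := hh (Submodule.Quotient.mk 1)
  rw [← Submodule.mkQ_apply, Submodule.mkQ_apply, Submodule.liftQ_apply,
    Submodule.liftQ_apply] at this
  simp only [s, LinearMap.toSpanSingleton_apply, one_smul] at this
  rwa [this]

theorem aux_main (R : Type u) [CommRing R] [IsArtinianRing R] [IsLocalRing R]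
    [Module.Injective R R]
    (M : Type u) [AddCommGroup M] [Module R M]
    (k : Type u) [Field k] [Algebra R k] (Q : Type u) [AddCommGroup Q] [Module R Q] [Module k Q]
    [IsScalarTower R k Q] (p : M →ₗ[R] Q) (hp : Function.Surjective p)
    (j : k →ₗ[R] R) (hj : Function.Injective j)
    (H : Function.Surjective (Module.Dual.eval R M)) : Module.Finite k Q := by
  classical
  let b := Module.Basis.ofVectorSpace k Q
  rcases finite_or_infinite (Module.Basis.ofVectorSpaceIndex k Q) with hfin | hinf
  · exact Module.Finite.of_basis b
  exfalso
  let D : (Q →ₗ[k] k) → Module.Dual R M := fun c => j ∘ₗ (c.restrictScalars R) ∘ₗ p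
  have hD : ∀ c m, D c m = j (c (p m)) := fun _ _ => rfl
  choose q hq using hp
  let U : Submodule R (Module.Dual R M) := Submodule.span R (Set.range fun i => D (b.coord i))
  let f0 := D (b.constr k (fun _ => (1 : k)))
  have hU : ∀ f ∈ U, {i | f (q (b i)) ≠ 0}.Finite := by
    intro f hf
    induction hf using Submodule.span_induction with
    | mem f hf =>
      obtain ⟨i, rfl⟩ := hf
      apply (Set.finite_singleton i).subset
      intro l hl
      by_contra hne
      apply hl
      simp only [hD, hq, Module.Basis.coord_apply, Module.Basis.repr_self]
      rw [Finsupp.single_eq_of_ne (by simpa [eq_comm] using hne), map_zero]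
    | zero => simp
    | add f g _ _ hf hg =>
      apply (hf.union hg).subset
      intro l hl
      by_contra hne
      simp only [Set.mem_union, Set.mem_ofPred_eq, not_or, not_not] at hne
      apply hl
      simp [hne.1, hne.2]
    | smul a f _ hf =>
      apply hf.subset
      intro l hl h
      apply hl
      simp [h]
  have hf0 : f0 ∉ U := by
    intro h
    have := hU _ h
    have h2 : {i | f0 (q (b i)) ≠ 0} = Set.univ := by
      ext i
      simp only [Set.mem_ofPred_eq, Set.mem_univ, iff_true]
      rw [hD, hq, Module.Basis.constr_basis, ← map_zero j]
      exact fun h => one_ne_zero (hj h)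
    rw [h2] at this
    exact Set.infinite_univ this
  obtain ⟨g, hg⟩ := aux_cogen R (Module.Dual R M ⧸ U) (U.mkQ f0) (by simpa using hf0)
  obtain ⟨m, hm⟩ := H (g ∘ₗ U.mkQ)
  have hm' : ∀ f : Module.Dual R M, f m = g (U.mkQ f) := fun f => by
    have := LinearMap.congr_fun hm f
    simpa using this
  have hpm : p m = 0 := by
    apply b.ext_elem
    intro i
    have h1 := hm' (D (b.coord i))
    have h2 : U.mkQ (D (b.coord i)) = 0 := by
      simpa using Submodule.subset_span (Set.mem_range_self i)
    rw [h2, map_zero, hD, ← map_zero j] at h1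
    simpa using hj h1
  apply hg
  rw [← hm', hD, hpm, map_zero, map_zero]

theorem aux_nak (R : Type u) [CommRing R] [IsArtinianRing R] [IsLocalRing R]
    (M : Type u) [AddCommGroup M] [Module R M]
    (h : Module.Finite R (M ⧸ (IsLocalRing.maximalIdeal R • (⊤ : Submodule R M)))) :
    Module.Finite R M := by
  set I := IsLocalRing.maximalIdeal R with hI
  have hA : IsNilpotent I := by
    rw [hI, ← IsLocalRing.jacobson_eq_maximalIdeal (⊥ : Ideal R) bot_ne_top]
    exact IsArtinianRing.isNilpotent_jacobson_bot
  obtain ⟨n, hn⟩ := hA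
  obtain ⟨l, p, hp⟩ := Module.Finite.exists_fin' R (M ⧸ (I • (⊤ : Submodule R M)))
  obtain ⟨g, hg⟩ := Module.projective_lifting_property
    (Submodule.mkQ (I • (⊤ : Submodule R M))) p (Submodule.mkQ_surjective _)
  have h1 : (⊤ : Submodule R M) ≤ LinearMap.range g ⊔ I • ⊤ := by
    intro m _
    obtain ⟨v, hv⟩ := hp (Submodule.mkQ _ m)
    rw [← hg, LinearMap.comp_apply] at hv
    have h2 := (Submodule.Quotient.eq _).1 hv.symm
    exact Submodule.mem_sup.2 ⟨g v, ⟨v, rfl⟩, m - g v, h2, by abel⟩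
  have h2 : ∀ i : ℕ, (⊤ : Submodule R M) ≤ LinearMap.range g ⊔ I ^ i • ⊤ := by
    intro i
    induction i with
    | zero => simp
    | succ i ih =>
      refine h1.trans (sup_le le_sup_left ?_)
      refine (Submodule.smul_mono le_rfl ih : I • (⊤ : Submodule R M) ≤ _).trans ?_
      rw [Submodule.smul_sup, pow_succ', ← smul_eq_mul, Submodule.smul_assoc]
      exact sup_le_sup_right Submodule.smul_le_right _
  have h3 := h2 n
  rw [hn] at h3
  have h4 : (0 : Ideal R) • (⊤ : Submodule R M) = ⊥ := Submodule.bot_smul _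
  rw [h4, sup_bot_eq] at h3
  exact Module.Finite.of_surjective g (LinearMap.range_eq_top.1 (top_le_iff.1 h3))

theorem stmt0 (R : Type u) [CommRing R] [IsArtinianRing R] [IsLocalRing R]
    [Module.Injective R R]
    (M : Type u) [AddCommGroup M] [Module R M] :
    Function.Surjective (Module.Dual.eval R M) ↔ Module.Finite R M := by
  constructor
  · intro H
    obtain ⟨x, hx0, hx⟩ := aux_soc R
    let j : R ⧸ IsLocalRing.maximalIdeal R →ₗ[R] R :=
      (IsLocalRing.maximalIdeal R).liftQ (LinearMap.toSpanSingleton R R x) (fun r hr => by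
        simpa using hx r hr)
    have hj : Function.Injective j := by
      refine LinearMap.ker_eq_bot.1 (Submodule.ker_liftQ_eq_bot _ _ _ ?_)
      apply IsLocalRing.le_maximalIdeal
      intro h
      apply hx0
      have : (1 : R) ∈ LinearMap.ker (LinearMap.toSpanSingleton R R x) := by rw [h]; trivial
      simpa using this
    let Q := M ⧸ (IsLocalRing.maximalIdeal R • (⊤ : Submodule R M))
    let _ : Field (R ⧸ IsLocalRing.maximalIdeal R) := Ideal.Quotient.field _
    have h1 : Module.Finite (R ⧸ IsLocalRing.maximalIdeal R) Q :=
      aux_main R M (R ⧸ IsLocalRing.maximalIdeal R) Q (Submodule.mkQ _) (Submodule.mkQ_surjective _)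
        j hj H
    exact aux_nak R M (Module.Finite.trans (R ⧸ IsLocalRing.maximalIdeal R) Q)
  · intro hM φ
    obtain ⟨n, p, hp⟩ := Module.Finite.exists_fin' R M
    obtain ⟨ψ, hψ⟩ := Module.Injective.out p.dualMap
      (LinearMap.dualMap_injective_of_surjective hp) φ
    obtain ⟨v, hv⟩ := (Module.evalEquiv R (Fin n → R)).surjective ψ
    refine ⟨p v, ?_⟩
    ext f
    rw [← hψ, ← hv]
    simp
end

section
/- Let (R,𝔪) be a noetherian local ring with 𝔪² = 0 and let M be a finitely generated weakly reflexive R-module. Then M is totally reflexive: M is reflexive and Ext^i_R(M,R) = 0 and Ext^i_R(M*,R) = 0 for all i > 0. -/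
open CategoryTheory

theorem aux_functional {R : Type*} [CommRing R] [IsLocalRing R]
    {X Y : Type*} [AddCommGroup X] [Module R X] [AddCommGroup Y] [Module R Y]
    (hX : ∀ r ∈ IsLocalRing.maximalIdeal R, ∀ x : X, r • x = 0)
    (x : X) (hx : x ≠ 0) (y : Y) (hy : ∀ r ∈ IsLocalRing.maximalIdeal R, r • y = 0) :
    ∃ φ : X →ₗ[R] Y, φ x = y := by
  let : Field (R ⧸ IsLocalRing.maximalIdeal R) := Ideal.Quotient.field _
  have ht : Module.IsTorsionBySet R X (IsLocalRing.maximalIdeal R : Set R) := by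
    intro x r
    exact hX r.1 r.2 x
  let : Module (R ⧸ IsLocalRing.maximalIdeal R) X := ht.module
  have : IsScalarTower R (R ⧸ IsLocalRing.maximalIdeal R) X := ht.isScalarTower
  obtain ⟨f, -, hf⟩ := LinearMap.exists_extend_of_notMem
    (K := R ⧸ IsLocalRing.maximalIdeal R) (V' := R ⧸ IsLocalRing.maximalIdeal R)
    (p := (⊥ : Submodule (R ⧸ IsLocalRing.maximalIdeal R) X)) (v := x) 0 (by simpa using hx) 1
  let q : (R ⧸ IsLocalRing.maximalIdeal R) →ₗ[R] Y :=
    Submodule.liftQ (IsLocalRing.maximalIdeal R) (LinearMap.toSpanSingleton R Y y)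
      (fun r hr => hy r hr)
  have hq : q 1 = y := by
    have : q 1 = (1 : R) • y := rfl
    rw [this, one_smul]
  refine ⟨q ∘ₗ f.restrictScalars R, ?_⟩
  simp [hf, hq]

theorem aux_principal {R : Type*} [CommRing R] [IsLocalRing R]
    (hm : IsLocalRing.maximalIdeal R ^ 2 = ⊥)
    {N : Type*} [AddCommGroup N] [Module R N] [Module.Finite R N] [Nontrivial N]
    (hwr : Function.Surjective (Module.Dual.eval R N))
    (hN : ∀ f : N →ₗ[R] R, ∀ v, f v ∈ IsLocalRing.maximalIdeal R)
    (a b : R) (ha : a ∈ IsLocalRing.maximalIdeal R) (hb : b ∈ IsLocalRing.maximalIdeal R)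
    (ha0 : a ≠ 0) : ∃ c, b = c * a := by
  have hmm : ∀ r ∈ IsLocalRing.maximalIdeal R, ∀ s ∈ IsLocalRing.maximalIdeal R, r * s = 0 := by
    intro r hr s hs
    have : r * s ∈ IsLocalRing.maximalIdeal R ^ 2 := by
      rw [pow_two]; exact Ideal.mul_mem_mul hr hs
    rw [hm] at this
    simpa using this
  set P : Submodule R N := IsLocalRing.maximalIdeal R • (⊤ : Submodule R N) with hP
  have hPt : P ≠ ⊤ := by
    intro h
    have := Submodule.eq_bot_of_le_smul_of_le_jacobson_bot (IsLocalRing.maximalIdeal R)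
      (⊤ : Submodule R N) Module.Finite.fg_top (by rw [← hP, h])
      (IsLocalRing.maximalIdeal_le_jacobson _)
    exact top_ne_bot this
  obtain ⟨v, hv⟩ : ∃ v, v ∉ P := by
    by_contra! h
    exact hPt (eq_top_iff.2 fun x _ => h x)
  obtain ⟨l, hl⟩ := aux_functional (R := R) (X := N ⧸ P) (Y := Submodule.span R {a}) (by
      intro r hr x
      obtain ⟨x, rfl⟩ := Submodule.Quotient.mk_surjective _ x
      rw [← Submodule.Quotient.mk_smul, Submodule.Quotient.mk_eq_zero]
      exact Submodule.smul_mem_smul hr trivial) (Submodule.Quotient.mk v)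
      (by rwa [Ne, Submodule.Quotient.mk_eq_zero]) ⟨a, Submodule.mem_span_singleton_self a⟩
      (fun r hr => Subtype.ext (hmm r hr a ha))
  let h0 : Module.Dual R N := (Submodule.span R {a}).subtype ∘ₗ l ∘ₗ P.mkQ
  have h0v : h0 v = a := by
    simp [h0, hl]
  obtain ⟨ω, hω⟩ := aux_functional (R := R) (X := Module.Dual R N) (Y := R) (by
      intro r hr f
      ext w
      exact hmm r hr _ (hN f w)) h0 (by
        intro h
        rw [h] at h0v
        exact ha0 h0v.symm) b (fun r hr => hmm r hr b hb)
  obtain ⟨w, rfl⟩ := hwr ω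
  have : b ∈ Submodule.span R {a} := by
    rw [← hω]
    exact (l (P.mkQ w)).2
  obtain ⟨c, hc⟩ := Submodule.mem_span_singleton.1 this
  exact ⟨c, hc.symm⟩

theorem aux_retract {R : Type*} [CommRing R]
    {M N : Type*} [AddCommGroup M] [Module R M] [AddCommGroup N] [Module R N]
    (hwr : Function.Surjective (Module.Dual.eval R M))
    (i : N →ₗ[R] M) (p : M →ₗ[R] N) (hpi : ∀ x, p (i x) = x) :
    Function.Surjective (Module.Dual.eval R N) := by
  intro ω
  obtain ⟨v, hv⟩ := hwr (ω ∘ₗ i.dualMap)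
  refine ⟨p v, ?_⟩
  ext f
  have := congrArg (fun g => g (p.dualMap f)) hv
  have h2 : i.dualMap (p.dualMap f) = f := by
    ext x
    simp [hpi]
  simpa [h2] using this

theorem aux_free {R : Type*} [CommRing R] [IsNoetherianRing R] [IsLocalRing R]
    (hm : IsLocalRing.maximalIdeal R ^ 2 = ⊥)
    (hP : ¬ ∀ a ∈ IsLocalRing.maximalIdeal R, ∀ b ∈ IsLocalRing.maximalIdeal R,
      a ≠ 0 → ∃ c, b = c * a)
    {M : Type*} [AddCommGroup M] [Module R M] [Module.Finite R M]
    (hwr : Function.Surjective (Module.Dual.eval R M)) : Module.Free R M := by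
  by_contra hfree
  have key : ∀ n : ℕ, ∃ f : M →ₗ[R] (Fin n → R), Function.Surjective f := by
    intro n
    induction n with
    | zero => exact ⟨0, fun x => ⟨0, Subsingleton.elim _ _⟩⟩
    | succ n ih =>
      obtain ⟨f, hf⟩ := ih
      obtain ⟨s, hs⟩ := Module.projective_lifting_property f LinearMap.id hf
      have hs' : ∀ x, f (s x) = x := fun x => LinearMap.congr_fun hs x
      let p : M →ₗ[R] LinearMap.ker f := LinearMap.codRestrict _ (LinearMap.id - s ∘ₗ f)
        (by intro x; simp [hs'])
      have hpi : ∀ x, p ((LinearMap.ker f).subtype x) = x := by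
        intro x
        ext
        simp [p]
      have hw := aux_retract hwr (LinearMap.ker f).subtype p hpi
      rcases subsingleton_or_nontrivial (LinearMap.ker f) with hsub | hnt
      · exfalso
        apply hfree
        have hinj : Function.Injective f :=
          LinearMap.ker_eq_bot.1 ((Submodule.subsingleton_iff_eq_bot).1 hsub)
        exact Module.Free.of_equiv (LinearEquiv.ofBijective f ⟨hinj, hf⟩).symm
      · obtain ⟨h, v, hv⟩ : ∃ h : LinearMap.ker f →ₗ[R] R, ∃ v,
            h v ∉ IsLocalRing.maximalIdeal R := by
          by_contra! hcon
          exact hP fun a ha b hb ha0 => aux_principal hm hw hcon a b ha hb ha0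
        have hu : IsUnit (h v) := by simpa using hv
        obtain ⟨u, hu⟩ := hu
        refine ⟨(Fin.consLinearEquiv R (fun _ : Fin (n+1) => R)).toLinearMap ∘ₗ
          LinearMap.prod (h ∘ₗ p) f, ?_⟩
        rw [LinearMap.coe_comp]
        refine (LinearEquiv.surjective _).comp ?_
        rintro ⟨r, x⟩
        refine ⟨s x + ((r * (u⁻¹ : Rˣ)) • v : LinearMap.ker f), ?_⟩
        have hps : p (s x) = 0 := by
          ext
          simp [p, hs']
        have hpv : p (v : M) = v := hpi v
        simp [hps, hs', hpv, ← hu]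
  obtain ⟨k, g, hg⟩ := Module.Finite.exists_fin' R M
  obtain ⟨f, hf⟩ := key (k + 1)
  have := card_le_of_surjective R (f ∘ₗ g) (hf.comp hg)
  simp at this

theorem aux_baer {R : Type*} [CommRing R] [IsLocalRing R]
    (hm : IsLocalRing.maximalIdeal R ^ 2 = ⊥)
    (hP : ∀ a ∈ IsLocalRing.maximalIdeal R, ∀ b ∈ IsLocalRing.maximalIdeal R,
      a ≠ 0 → ∃ c, b = c * a) : Module.Baer R R := by
  intro I g
  by_cases hI : I = ⊤
  · subst hI
    exact ⟨g ∘ₗ (Submodule.topEquiv (R := R) (M := R)).symm.toLinearMap, fun x hx => rfl⟩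
  by_cases hb : I = ⊥
  · subst hb
    refine ⟨0, fun x hx => ?_⟩
    have : (⟨x, hx⟩ : (⊥ : Ideal R)) = 0 := Subsingleton.elim _ _
    rw [this, map_zero]
    rfl
  have hle := IsLocalRing.le_maximalIdeal hI
  obtain ⟨a, haI, ha0⟩ := Submodule.exists_mem_ne_zero_of_ne_bot hb
  have hga : g ⟨a, haI⟩ ∈ IsLocalRing.maximalIdeal R := by
    by_contra hcon
    have hu : IsUnit (g ⟨a, haI⟩) := by simpa using hcon
    have h1 : a * g ⟨a, haI⟩ = 0 := by
      rw [← smul_eq_mul, ← map_smul]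
      have : a • (⟨a, haI⟩ : I) = 0 := by
        ext
        have : a * a ∈ IsLocalRing.maximalIdeal R ^ 2 := by
          rw [pow_two]; exact Ideal.mul_mem_mul (hle haI) (hle haI)
        rw [hm] at this
        simpa using this
      rw [this, map_zero]
    exact ha0 ((hu.mul_left_eq_zero).1 h1)
  obtain ⟨c, hc⟩ := hP a (hle haI) _ hga ha0
  refine ⟨LinearMap.mulLeft R c, fun x hx => ?_⟩
  obtain ⟨d, rfl⟩ := hP a (hle haI) x (hle hx) ha0
  have : (⟨d * a, hx⟩ : I) = d • ⟨a, haI⟩ := rfl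
  rw [this, map_smul, hc]
  simp only [LinearMap.mulLeft_apply, smul_eq_mul]
  ring

theorem aux_inj {R : Type u} [CommRing R] [IsLocalRing R]
    (hm : IsLocalRing.maximalIdeal R ^ 2 = ⊥) [Module.Injective R R]
    {M : Type u} [AddCommGroup M] [Module R M] :
    Function.Injective (Module.Dual.eval R M) := by
  rw [injective_iff_map_eq_zero]
  intro v hv
  by_contra hv0
  obtain ⟨s, hs0, hs⟩ : ∃ s : R, s ≠ 0 ∧ ∀ r ∈ IsLocalRing.maximalIdeal R, r * s = 0 := by
    by_cases hz : IsLocalRing.maximalIdeal R = ⊥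
    · exact ⟨1, one_ne_zero, fun r hr => by simpa [hz] using hr⟩
    · obtain ⟨a, ha, ha0⟩ := Submodule.exists_mem_ne_zero_of_ne_bot hz
      refine ⟨a, ha0, fun r hr => ?_⟩
      have : r * a ∈ IsLocalRing.maximalIdeal R ^ 2 := by
        rw [pow_two]; exact Ideal.mul_mem_mul hr ha
      rw [hm] at this
      simpa using this
  let t := LinearMap.toSpanSingleton R M v
  have hk : LinearMap.ker t ≤ LinearMap.ker (LinearMap.toSpanSingleton R R s) := by
    intro r hr
    have hr' : r • v = 0 := hr
    refine hs r ?_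
    rw [IsLocalRing.mem_maximalIdeal]
    intro hu
    exact hv0 ((hu.smul_eq_zero).1 hr')
  obtain ⟨h, hh⟩ := Module.Injective.out ((LinearMap.ker t).liftQ t le_rfl)
    (LinearMap.ker_eq_bot.1 (Submodule.ker_liftQ_eq_bot _ _ _ le_rfl))
    ((LinearMap.ker t).liftQ (LinearMap.toSpanSingleton R R s) hk)
  have h1 : h ((1 : R) • v) = (1 : R) • s := hh (Submodule.Quotient.mk 1)
  rw [one_smul, one_smul] at h1
  have h2 : h v = 0 := LinearMap.congr_fun hv h
  exact hs0 (h1.symm.trans h2)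

theorem aux_ext {R : Type u} [CommRing R] (X Y : ModuleCat.{u} R) [Injective Y] (n : ℕ) :
    Limits.IsZero (((Ext R (ModuleCat R) (n + 1)).obj (Opposite.op X)).obj Y) := by
  let P := ProjectiveResolution.of X
  refine Limits.IsZero.of_iso ?_ (P.isoExt (n + 1) Y)
  rw [← HomologicalComplex.exactAt_iff_isZero_homology,
    HomologicalComplex.exactAt_iff' _ n (n+1) (n+2) (by simp) (by simp)]
  rw [ShortComplex.moduleCat_exact_iff]
  intro (x : P.complex.X (n+1) ⟶ Y) hx
  have hx' : P.complex.d (n+2) (n+1) ≫ x = 0 := hx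
  exact ⟨(P.exact_succ n).descToInjective x hx', (P.exact_succ n).comp_descToInjective x hx'⟩

/-- Let `(R,𝔪)` be a noetherian local ring with `𝔪² = 0` and let `M` be a
finitely generated weakly reflexive `R`-module (the evaluation map `M → M**` is surjective).
Then `M` is totally reflexive: `M` is reflexive and `Ext^i_R(M,R) = 0` and
`Ext^i_R(M*,R) = 0` for all `i > 0`. -/
theorem stmt1 (R : Type u) [CommRing R] [IsNoetherianRing R] [IsLocalRing R]
    (hm : IsLocalRing.maximalIdeal R ^ 2 = ⊥)
    (M : Type u) [AddCommGroup M] [Module R M] [Module.Finite R M]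
    (hwr : Function.Surjective (Module.Dual.eval R M)) :
    Module.IsReflexive R M ∧
      (∀ i : ℕ, 0 < i →
        Subsingleton (((Ext R (ModuleCat R) i).obj
          (Opposite.op (ModuleCat.of R M))).obj (ModuleCat.of R R))) ∧
      (∀ i : ℕ, 0 < i →
        Subsingleton (((Ext R (ModuleCat R) i).obj
          (Opposite.op (ModuleCat.of R (Module.Dual R M)))).obj (ModuleCat.of R R))) := by
  by_cases hP : ∀ a ∈ IsLocalRing.maximalIdeal R, ∀ b ∈ IsLocalRing.maximalIdeal R,
      a ≠ 0 → ∃ c, b = c * a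
  · have : Module.Injective R R := (aux_baer hm hP).injective
    have : Injective (ModuleCat.of R R) := Module.injective_object_of_injective_module R R
    refine ⟨⟨aux_inj hm, hwr⟩, ?_, ?_⟩
    all_goals
      rintro (_ | i) hi
      · exact absurd hi (lt_irrefl 0)
      · exact ModuleCat.subsingleton_of_isZero (aux_ext _ _ i)
  · have := aux_free hm hP hwr
    have : Projective (ModuleCat.of R M) :=
      (IsProjective.iff_projective M).1 inferInstance
    have : Projective (ModuleCat.of R (Module.Dual R M)) :=
      (IsProjective.iff_projective (Module.Dual R M)).1 inferInstance
    refine ⟨inferInstance, ?_, ?_⟩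
    all_goals
      rintro (_ | i) hi
      · exact absurd hi (lt_irrefl 0)
      · exact ModuleCat.subsingleton_of_isZero (isZero_Ext_succ_of_projective _ _ i)
end

section
/- Let (R,𝔪) be an artinian local ring. Then every finitely generated R-module is torsion-less if and only if R is injective as a module over itself (i.e., R is Gorenstein of dimension zero). -/
theorem exists_socle_elt (R : Type u) [CommRing R] [IsArtinianRing R] [IsLocalRing R] :
    ∃ s : R, s ≠ 0 ∧ ∀ a : R, a * s ≠ 0 ↔ IsUnit a := by
  obtain ⟨P, hP⟩ := associatedPrimes.nonempty R R
  have hP' : IsAssociatedPrime P R := hP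
  have := hP'.isPrime
  have hm : P = IsLocalRing.maximalIdeal R :=
    IsLocalRing.eq_maximalIdeal (Ideal.IsPrime.isMaximal' this)
  obtain ⟨_, s, hs⟩ := isAssociatedPrime_iff.mp hP'
  have key : ∀ a : R, a * s ≠ 0 ↔ IsUnit a := by
    intro a
    have h1 : a ∈ P ↔ a * s = 0 := by
      rw [hs, Submodule.mem_colon_singleton]; simp
    rw [Ne, ← h1, hm, IsLocalRing.mem_maximalIdeal, mem_nonunits_iff, not_not]
  refine ⟨s, ?_, key⟩
  have := (key 1).2 isUnit_one
  simpa using this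

/-- Let `(R,𝔪)` be an artinian local ring. Then every finitely generated
`R`-module is torsion-less (the evaluation map `M → M**` is injective) if and only if `R`
is injective as a module over itself (i.e. `R` is Gorenstein of dimension zero). -/
theorem stmt2 (R : Type u) [CommRing R] [IsArtinianRing R] [IsLocalRing R] :
    (∀ (M : Type u) [AddCommGroup M] [Module R M], Module.Finite R M →
      Function.Injective (Module.Dual.eval R M)) ↔ Module.Injective R R := by
  obtain ⟨s, hs0, hs⟩ := exists_socle_elt R
  constructor
  · intro H
    refine Module.Baer.injective fun I f => ?_
    let N : Submodule R (R × R) := LinearMap.range (LinearMap.prod I.subtype (-f))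
    have hj : N.mkQ (0, s) ≠ 0 := by
      intro h
      rw [Submodule.mkQ_apply, Submodule.Quotient.mk_eq_zero] at h
      obtain ⟨i, hi⟩ := h
      simp only [LinearMap.prod_apply, Function.prod_apply, Prod.mk.injEq] at hi
      have : i = 0 := Subtype.ext hi.1
      rw [this] at hi
      exact hs0 (by simpa using hi.2.symm)
    have hinj := H ((R × R) ⧸ N) inferInstance
    obtain ⟨φ, hφ⟩ : ∃ φ : Module.Dual R ((R × R) ⧸ N), φ (N.mkQ (0, s)) ≠ 0 := by
      by_contra! hc
      exact hj (hinj (LinearMap.ext fun φ => by simpa using hc φ))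
    have hlin : ∀ r : R, φ (N.mkQ (0, r)) = r * φ (N.mkQ (0, 1)) := by
      intro r
      rw [← smul_eq_mul, ← map_smul, ← map_smul]
      simp
    have hu : IsUnit (φ (N.mkQ (0, 1))) := by
      rw [← hs, mul_comm, ← hlin]; exact hφ
    obtain ⟨b, hb⟩ := hu.exists_right_inv
    refine ⟨b • (φ ∘ₗ N.mkQ ∘ₗ LinearMap.inl R R R), fun x hx => ?_⟩
    have hq : N.mkQ (x, 0) = N.mkQ (0, f ⟨x, hx⟩) := by
      rw [← sub_eq_zero, ← map_sub, Submodule.mkQ_apply, Submodule.Quotient.mk_eq_zero]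
      exact ⟨⟨x, hx⟩, by simp⟩
    simp only [LinearMap.smul_apply, LinearMap.comp_apply, LinearMap.inl_apply, smul_eq_mul]
    rw [hq, hlin]
    linear_combination (f ⟨x, hx⟩) * hb
  · intro hR M _ _ _
    rw [← LinearMap.ker_eq_bot, LinearMap.ker_eq_bot']
    intro x hx
    by_contra hx0
    let K := LinearMap.ker (LinearMap.toSpanSingleton R M x)
    have hle : K ≤ LinearMap.ker (LinearMap.toSpanSingleton R R s) := by
      intro a ha
      have ha' : a • x = 0 := by simpa [K] using ha
      rw [LinearMap.mem_ker, LinearMap.toSpanSingleton_apply, smul_eq_mul]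
      by_contra h
      exact hx0 (((hs a).1 h).smul_eq_zero.1 ha')
    obtain ⟨h, hh⟩ := hR.out (K.liftQ (LinearMap.toSpanSingleton R M x) le_rfl)
      (LinearMap.ker_eq_bot.1 (Submodule.ker_liftQ_eq_bot _ _ _ le_rfl))
      (K.liftQ (LinearMap.toSpanSingleton R R s) hle)
    have h1 := hh (K.mkQ 1)
    simp only [Submodule.mkQ_apply, Submodule.liftQ_apply, LinearMap.toSpanSingleton_apply,
      one_smul] at h1
    have h2 : h x = 0 := by simpa using LinearMap.congr_fun hx h
    exact hs0 (h1.symm.trans h2)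
end

section
/- Let k be a field and let R = k[X,Y]/(X,Y)², the quotient of the polynomial ring in two variables by the square of the ideal generated by the variables. Then every reflexive R-module is finitely generated and free. -/
/-- The ring `R = k[X,Y]/(X,Y)²`. -/
abbrev LamRing (k : Type u) [Field k] : Type u :=
  MvPolynomial (Fin 2) k ⧸
    ((Ideal.span {MvPolynomial.X 0, MvPolynomial.X 1} :
      Ideal (MvPolynomial (Fin 2) k)) ^ 2)

open Module

section Abstract

variable {k R M : Type*} [Field k] [CommRing R] [Algebra k R] [AddCommGroup M] [Module R M]
  [Module k M] [IsScalarTower k R M]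

/-- Multiply a functional on `M` that kills the maximal ideal by a socle element. -/
def socMap (ε : R →ₐ[k] k) (c : R) (hc : ∀ r : R, r * c = ε r • c) (l : M →ₗ[k] k)
    (hl : ∀ (r : R) (m : M), l (r • m) = ε r * l m) : Dual R M where
  toFun m := l m • c
  map_add' a b := by simp [add_smul]
  map_smul' r m := by
    simp only [hl, RingHom.id_apply, smul_eq_mul]
    rw [mul_smul_comm, hc, smul_smul, mul_comm]

theorem abstract_free (ε : R →ₐ[k] k) (α β : R →ₗ[k] k) (x y : R)
    (hr : ∀ r, r = algebraMap k R (ε r) + α r • x + β r • y)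
    (hxx : x * x = 0) (hxy : x * y = 0) (hyy : y * y = 0) (ex : ε x = 0) (ey : ε y = 0)
    (ax : α x = 1) (ay : α y = 0) (bx : β x = 0) (bY : β y = 1)
    (h : IsReflexive R M) : Module.Finite R M ∧ Module.Free R M := by
  have hyx : y * x = 0 := by rw [mul_comm, hxy]
  have rx : ∀ r : R, r * x = ε r • x := by
    intro r
    conv_lhs => rw [hr r]
    simp [add_mul, hxx, hyx, Algebra.smul_def, mul_assoc]
  have ry : ∀ r : R, r * y = ε r • y := by
    intro r
    conv_lhs => rw [hr r]
    simp [add_mul, hxy, hyy, Algebra.smul_def, mul_assoc]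
  have hsurj : Function.Surjective (Dual.eval R M) := h.bijective_dual_eval'.2
  -- the socle-valued bidual elements
  have key : ∀ φ : Dual R M →ₗ[k] k, (∀ (r : R) f, φ (r • f) = ε r * φ f) →
      ∃ u : M, ∀ f : Dual R M, f u = φ f • x := by
    intro φ hφ
    obtain ⟨u, hu⟩ := hsurj (socMap ε x rx φ hφ)
    exact ⟨u, fun f => by rw [← Dual.eval_apply, hu]; rfl⟩
  have decM : ∀ (l : M →ₗ[k] k) (_ : ∀ n, l (x • n) = 0) (_ : ∀ n, l (y • n) = 0)
      (r : R) (n : M), l (r • n) = ε r * l n := by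
    intro l h1 h2 r n
    conv_lhs => rw [hr r]
    simp [add_smul, h1, h2]
  have decD : ∀ (l : Dual R M →ₗ[k] k) (_ : ∀ n, l (x • n) = 0) (_ : ∀ n, l (y • n) = 0)
      (r : R) (n : Dual R M), l (r • n) = ε r * l n := by
    intro l h1 h2 r n
    conv_lhs => rw [hr r]
    simp [add_smul, h1, h2]
  -- step 1
  have step1 : ∀ (l : M →ₗ[k] k), (∀ (r : R) (m : M), l (r • m) = ε r * l m) →
      ∃ f : Dual R M, ∀ m, ε (f m) = l m := by
    intro l hl
    by_contra hno
    let X := LinearMap.range (LinearMap.lsmul R (Dual R M) x |>.restrictScalars k)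
    let Y := LinearMap.range (LinearMap.lsmul R (Dual R M) y |>.restrictScalars k)
    let S : Submodule k (Dual R M) := (X ⊔ Y) ⊔ Submodule.span k {socMap ε y ry l hl}
    have hS : socMap ε x rx l hl ∉ S := by
      intro hmem
      obtain ⟨s, hs, t, ht, hst⟩ := Submodule.mem_sup.1 hmem
      obtain ⟨p, ⟨f, hf⟩, q, ⟨g, hg⟩, hpq⟩ := Submodule.mem_sup.1 hs
      obtain ⟨c, hc⟩ := Submodule.mem_span_singleton.1 ht
      apply hno
      refine ⟨f, fun m => ?_⟩
      have h1 := congrArg (fun F : Dual R M => α (F m)) hst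
      rw [← hpq, ← hf, ← hg, ← hc] at h1
      simpa [socMap, mul_comm x, mul_comm y, rx, ry, ax, ay] using h1
    obtain ⟨φ, hφ1, hφ2⟩ := Submodule.exists_le_ker_of_notMem hS
    have hφx : ∀ n, φ (x • n) = 0 := fun n => hφ2
      (Submodule.mem_sup_left (Submodule.mem_sup_left ⟨n, rfl⟩))
    have hφy : ∀ n, φ (y • n) = 0 := fun n => hφ2
      (Submodule.mem_sup_left (Submodule.mem_sup_right ⟨n, rfl⟩))
    have hφl : φ (socMap ε y ry l hl) = 0 := hφ2
      (Submodule.mem_sup_right (Submodule.mem_span_singleton_self _))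
    obtain ⟨u, hu⟩ := key φ (decD φ hφx hφy)
    have h1 := congrArg α (hu (socMap ε x rx l hl))
    have h2 := congrArg β (hu (socMap ε y ry l hl))
    simp [socMap, ax] at h1
    rw [hφl] at h2
    simp [socMap, bY] at h2
    exact hφ1 (by rw [← h2, h1]; rfl)
  -- step 2
  let S : Submodule k M := LinearMap.range (LinearMap.lsmul R M x |>.restrictScalars k) ⊔
    LinearMap.range (LinearMap.lsmul R M y |>.restrictScalars k)
  have Sx : ∀ m : M, x • m ∈ S := fun m => Submodule.mem_sup_left ⟨m, rfl⟩
  have Sy : ∀ m : M, y • m ∈ S := fun m => Submodule.mem_sup_right ⟨m, rfl⟩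
  have Smem : ∀ u ∈ S, ∃ a b : M, u = x • a + y • b := by
    intro u hu
    obtain ⟨p, ⟨f, hf⟩, q, ⟨g, hg⟩, hpq⟩ := Submodule.mem_sup.1 hu
    exact ⟨f, g, by rw [← hpq, ← hf, ← hg]; rfl⟩
  have hbar : ∀ f : Dual R M, S ≤ LinearMap.ker (ε.toLinearMap ∘ₗ f.restrictScalars k) := by
    intro f u hu
    obtain ⟨a, b, rfl⟩ := Smem u hu
    simp [ex, ey]
  let bar : Dual R M →ₗ[k] Dual k (M ⧸ S) :=
    { toFun := fun f => S.liftQ (ε.toLinearMap ∘ₗ f.restrictScalars k) (hbar f)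
      map_add' := by
        intro f g
        apply Submodule.linearMap_qext
        ext m
        simp
      map_smul' := by
        intro f g
        apply Submodule.linearMap_qext
        ext m
        simp }
  have bar_apply : ∀ f m, bar f (S.mkQ m) = ε (f m) := fun f m => rfl
  have bar_surj : Function.Surjective bar := by
    intro l
    obtain ⟨f, hf⟩ := step1 (l ∘ₗ S.mkQ) (decM _
      (fun n => by simp [(Submodule.Quotient.mk_eq_zero S).2 (Sx n)])
      (fun n => by simp [(Submodule.Quotient.mk_eq_zero S).2 (Sy n)]))
    refine ⟨f, ?_⟩
    apply Submodule.linearMap_qext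
    ext m
    exact hf m
  have hrefl : IsReflexive k (M ⧸ S) := by
    refine ⟨⟨Module.eval_apply_injective k, ?_⟩⟩
    intro Φ
    obtain ⟨u, hu⟩ := key (Φ ∘ₗ bar) (decD _
      (fun n => by
        have : bar (x • n) = 0 := by
          apply Submodule.linearMap_qext
          ext m
          simp [bar, ex]
        simp [this])
      (fun n => by
        have : bar (y • n) = 0 := by
          apply Submodule.linearMap_qext
          ext m
          simp [bar, ey]
        simp [this]))
    have huS : u ∈ S := by
      by_contra hn
      obtain ⟨l, hl1, hl2⟩ := Submodule.exists_le_ker_of_notMem hn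
      have hl := decM l (fun n => hl2 (Sx n)) (fun n => hl2 (Sy n))
      have h0 : bar (socMap ε x rx l hl) = 0 := by
        apply Submodule.linearMap_qext
        ext m
        simp [bar, socMap, ex]
      have h1 := congrArg α (hu (socMap ε x rx l hl))
      rw [LinearMap.comp_apply, h0] at h1
      simp [socMap, ax] at h1
      exact hl1 h1
    obtain ⟨a, b, rfl⟩ := Smem u huS
    refine ⟨S.mkQ a, ?_⟩
    ext l
    obtain ⟨f, rfl⟩ := bar_surj l
    have h1 := congrArg α (hu f)
    simp [mul_comm x, mul_comm y, rx, ry, ax, ay] at h1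
    rw [Dual.eval_apply, bar_apply, h1]
  -- step 3
  have hfin : FiniteDimensional k (M ⧸ S) := inferInstance
  let b := Module.finBasis k (M ⧸ S)
  choose e he using fun i => S.mkQ_surjective (b i)
  choose f hf using fun i => bar_surj (b.coord i)
  have hfe : ∀ i j, ε (f j (e i)) = if i = j then 1 else 0 := by
    intro i j
    rw [← bar_apply, hf, he]
    simp [Finsupp.single_apply]
  have hli : LinearIndependent R e := by
    rw [Fintype.linearIndependent_iff]
    intro g hg
    have h0 : ∀ j, ε (g j) = 0 := by
      intro j
      have := congrArg (fun m => ε (f j m)) hg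
      simpa [hfe] using this
    have hmul : ∀ i (s : R), g i * s = ε s • g i := by
      intro i s
      rw [hr (g i), h0 i]
      simp [add_mul, mul_comm x, mul_comm y, rx, ry, smul_comm (ε s)]
    intro j
    have := congrArg (f j) hg
    simpa [hmul, hfe] using this
  have hsp : ⊤ ≤ Submodule.span R (Set.range e) := by
    set N := Submodule.span R (Set.range e)
    have hdec : ∀ m : M, ∃ n ∈ N, m - n ∈ S := by
      intro m
      refine ⟨∑ i, algebraMap k R (b.repr (S.mkQ m) i) • e i, ?_, ?_⟩
      · exact Submodule.sum_mem _ fun i _ => N.smul_mem _ (Submodule.subset_span ⟨i, rfl⟩)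
      · rw [← Submodule.Quotient.mk_eq_zero, ← Submodule.mkQ_apply, map_sub, map_sum]
        simp only [algebraMap_smul, map_smul, he]
        rw [b.sum_repr, sub_self]
    have hx : ∀ c : R, c * x = 0 → c * y = 0 → ∀ m : M, c • m ∈ N := by
      intro c h1 h2 m
      obtain ⟨n, hn, hs⟩ := hdec m
      obtain ⟨p, q, hpq⟩ := Smem _ hs
      have : c • m = c • n := by
        rw [← sub_eq_zero, ← smul_sub, hpq, smul_add, smul_smul, smul_smul, h1, h2]
        simp
      rw [this]
      exact N.smul_mem _ hn
    intro m _
    obtain ⟨n, hn, hs⟩ := hdec m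
    obtain ⟨p, q, hpq⟩ := Smem _ hs
    rw [← sub_add_cancel m n, hpq]
    exact N.add_mem (N.add_mem (hx x hxx hxy p) (hx y hyx hyy q)) hn
  let B := Basis.mk hli hsp
  exact ⟨Module.Finite.of_basis B, Module.Free.of_basis B⟩

end Abstract

theorem lam_data (k : Type u) [Field k] :
    ∃ (ε : LamRing k →ₐ[k] k) (α β : LamRing k →ₗ[k] k) (x y : LamRing k),
      (∀ r, r = algebraMap k (LamRing k) (ε r) + α r • x + β r • y) ∧
      x * x = 0 ∧ x * y = 0 ∧ y * y = 0 ∧ ε x = 0 ∧ ε y = 0 ∧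
      α x = 1 ∧ α y = 0 ∧ β x = 0 ∧ β y = 1 := by
  let I : Ideal (MvPolynomial (Fin 2) k) := Ideal.span {MvPolynomial.X 0, MvPolynomial.X 1}
  let g : MvPolynomial (Fin 2) k →ₐ[k] TrivSqZeroExt k (k × k) :=
    MvPolynomial.aeval ![TrivSqZeroExt.inr (1, 0), TrivSqZeroExt.inr (0, 1)]
  have hI : I ≤ Ideal.comap g (RingHom.ker (TrivSqZeroExt.fstHom k k (k × k))) := by
    rw [Ideal.span_le]
    rintro _ (rfl | rfl) <;> simp [g, RingHom.mem_ker]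
  have hg : ∀ a ∈ I ^ 2, g a = 0 := by
    intro a ha
    have : I ^ 2 ≤ RingHom.ker g := by
      rw [pow_two, Ideal.mul_le]
      intro p hp q hq
      have h1 : (g p).fst = 0 := hI hp
      have h2 : (g q).fst = 0 := hI hq
      rw [RingHom.mem_ker, map_mul]
      ext <;> simp [h1, h2]
    exact this ha
  let G : LamRing k →ₐ[k] TrivSqZeroExt k (k × k) := Ideal.Quotient.liftₐ (I ^ 2) g hg
  have Gmk : ∀ p, G (Ideal.Quotient.mk _ p) = g p := fun p => rfl
  let x : LamRing k := Ideal.Quotient.mk _ (MvPolynomial.X 0)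
  let y : LamRing k := Ideal.Quotient.mk _ (MvPolynomial.X 1)
  have m0 : MvPolynomial.X 0 ∈ I := Ideal.subset_span (by simp)
  have m1 : MvPolynomial.X 1 ∈ I := Ideal.subset_span (by simp)
  have mulz : ∀ p ∈ I, ∀ q ∈ I,
      (Ideal.Quotient.mk (I ^ 2) p) * (Ideal.Quotient.mk (I ^ 2) q) = 0 := by
    intro p hp q hq
    rw [← map_mul, Ideal.Quotient.eq_zero_iff_mem, pow_two]
    exact Ideal.mul_mem_mul hp hq
  have hxx : x * x = 0 := mulz _ m0 _ m0
  have hxy : x * y = 0 := mulz _ m0 _ m1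
  have hyy : y * y = 0 := mulz _ m1 _ m1
  have Gx : G x = TrivSqZeroExt.inr (1, 0) := by simp [x, Gmk, g]
  have Gy : G y = TrivSqZeroExt.inr (0, 1) := by simp [y, Gmk, g]
  let sn : TrivSqZeroExt k (k × k) →ₗ[k] k × k := TrivSqZeroExt.sndHom k (k × k)
  have sn_apply : ∀ t, sn t = t.snd := fun t => rfl
  refine ⟨(TrivSqZeroExt.fstHom k k (k × k)).comp G,
    LinearMap.fst k k k ∘ₗ sn ∘ₗ G.toLinearMap,
    LinearMap.snd k k k ∘ₗ sn ∘ₗ G.toLinearMap, x, y, ?_, hxx, hxy, hyy, ?_⟩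
  · intro r
    have hyx : y * x = 0 := by rw [mul_comm, hxy]
    obtain ⟨p, rfl⟩ := Ideal.Quotient.mk_surjective r
    have hspan : ∃ a b c : k, Ideal.Quotient.mk (I ^ 2) p =
        algebraMap k (LamRing k) a + b • x + c • y := by
      induction p using MvPolynomial.induction_on with
      | C a => exact ⟨a, 0, 0, by simp; rfl⟩
      | add p q hp hq =>
        obtain ⟨a, b, c, h1⟩ := hp
        obtain ⟨a', b', c', h2⟩ := hq
        refine ⟨a + a', b + b', c + c', ?_⟩
        rw [map_add, h1, h2, map_add, add_smul, add_smul]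
        abel
      | mul_X p n hp =>
        obtain ⟨a, b, c, h1⟩ := hp
        fin_cases n
        · refine ⟨0, a, 0, ?_⟩
          rw [map_mul, h1]
          change _ * x = _
          simp [add_mul, hxx, hyx, Algebra.smul_def, mul_assoc]
        · refine ⟨0, 0, a, ?_⟩
          rw [map_mul, h1]
          change _ * y = _
          simp [add_mul, hxy, hyy, Algebra.smul_def, mul_assoc]
    obtain ⟨a, b, c, h1⟩ := hspan
    rw [h1]
    simp [Gx, Gy, sn_apply, TrivSqZeroExt.algebraMap_eq_inl]
  · simp [Gx, Gy, sn_apply]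

/-- Let `k` be a field and `R = k[X,Y]/(X,Y)²`. Then every reflexive
`R`-module is finitely generated and free. -/
theorem stmt3 (k : Type u) [Field k]
    (M : Type u) [AddCommGroup M] [Module (LamRing k) M]
    (h : Module.IsReflexive (LamRing k) M) :
    Module.Finite (LamRing k) M ∧ Module.Free (LamRing k) M := by
  obtain ⟨ε, α, β, x, y, hr, hxx, hxy, hyy, ex, ey, ax, ay, bx, bY⟩ := lam_data k
  let _ : Module k M := Module.compHom M (algebraMap k (LamRing k))
  have _ : IsScalarTower k (LamRing k) M := ⟨fun a r m => by
    rw [Algebra.smul_def, mul_smul]; rfl⟩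
  exact abstract_free ε α β x y hr hxx hxy hyy ex ey ax ay bx bY h
end

section
/- Let (R,𝔪) be a noetherian local ring with 𝔪² = 0 and 𝔪 not generated by a single element. If M is a finitely generated R-module with Ext^i_R(M,R) = 0 for some i ≥ 2, then M is free. -/
open CategoryTheory

namespace Stmt5Aux

open Abelian IsLocalRing TensorProduct

section Cat

variable {R : Type u} [CommRing R]

/-- Vanishing of the classical `Ext` gives vanishing of the derived category `Ext`. -/
lemma subsingleton_ext (X Y : ModuleCat.{u} R) (n : ℕ)
    (h : Subsingleton (((_root_.Ext R (ModuleCat.{u} R) (n + 1)).obj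
      (Opposite.op X)).obj Y)) : Subsingleton (Abelian.Ext.{u} X Y (n + 1)) := by
  let P := projectiveResolution X
  have hz : Limits.IsZero ((P.complex.linearYonedaObj R Y).homology (n + 1)) :=
    Limits.IsZero.of_iso (ModuleCat.isZero_of_subsingleton _) (P.isoExt (R := R) (n + 1) Y).symm
  rw [← HomologicalComplex.exactAt_iff_isZero_homology,
    HomologicalComplex.exactAt_iff' _ n (n + 1) (n + 2) (by simp) (by simp),
    ShortComplex.moduleCat_exact_iff] at hz
  refine subsingleton_of_forall_eq 0 fun α => ?_
  obtain ⟨f, hf, rfl⟩ := P.extMk_surjective α (n + 2) rfl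
  rw [P.extMk_eq_zero_iff _ _ _ _ n rfl]
  obtain ⟨g, hg⟩ := hz f hf
  exact ⟨g, hg⟩

lemma shift {S : ShortComplex (ModuleCat.{u} R)} (hS : S.ShortExact) [Projective S.X₂]
    (Y : ModuleCat.{u} R) (n : ℕ) (h : Subsingleton (Abelian.Ext.{u} S.X₃ Y (n + 2))) :
    Subsingleton (Abelian.Ext.{u} S.X₁ Y (n + 1)) := by
  refine subsingleton_of_forall_eq 0 fun α => ?_
  obtain ⟨x, rfl⟩ := Ext.contravariant_sequence_exact₁ hS Y α
    (show 1 + (n + 1) = n + 2 by omega) (Subsingleton.elim _ _)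
  rw [Ext.eq_zero_of_projective x, Ext.comp_zero]

lemma extend {S : ShortComplex (ModuleCat.{u} R)} (hS : S.ShortExact)
    (Y : ModuleCat.{u} R) (h : Subsingleton (Abelian.Ext.{u} S.X₃ Y 1)) (f : S.X₁ ⟶ Y) :
    ∃ g : S.X₂ ⟶ Y, S.f ≫ g = f := by
  obtain ⟨x, hx⟩ := Ext.contravariant_sequence_exact₁ hS Y (Ext.mk₀ f)
    (show 1 + 0 = 1 by omega) (Subsingleton.elim _ _)
  obtain ⟨g, rfl⟩ := (Ext.mk₀_bijective _ _).2 x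
  rw [Ext.mk₀_comp_mk₀] at hx
  exact ⟨g, (Ext.mk₀_bijective _ _).1 hx⟩

lemma retract {K X Y : ModuleCat.{u} R} (i : K ⟶ X) (p : X ⟶ K) (hip : i ≫ p = 𝟙 K) (n : ℕ)
    (h : Subsingleton (Abelian.Ext.{u} X Y n)) : Subsingleton (Abelian.Ext.{u} K Y n) := by
  refine subsingleton_of_forall_eq 0 fun α => ?_
  have h1 : (Ext.mk₀ p).comp α (zero_add n) = 0 := Subsingleton.elim _ _
  have h2 : (Ext.mk₀ i).comp ((Ext.mk₀ p).comp α (zero_add n)) (zero_add n) = α := by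
    rw [Ext.mk₀_comp_mk₀_assoc, hip, Ext.mk₀_id_comp]
  rw [← h2, h1, Ext.comp_zero]

end Cat

section Alg

variable {R : Type u} [CommRing R] [IsLocalRing R]

lemma exists_functional {N : Type u} [AddCommGroup N] [Module R N]
    (hN : ∀ a ∈ maximalIdeal R, ∀ x : N, a • x = 0) (x : N) (hx : x ≠ 0) :
    ∃ φ : N →ₗ[R] (R ⧸ maximalIdeal R), φ x = 1 := by
  have ht : Module.IsTorsionBySet R N (maximalIdeal R) := fun y a => hN a a.2 y
  let : Module (R ⧸ maximalIdeal R) N := ht.module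
  let : Field (R ⧸ maximalIdeal R) := Ideal.Quotient.field _
  have : IsScalarTower R (R ⧸ maximalIdeal R) N := ht.isScalarTower
  obtain ⟨f, hf⟩ := Module.Projective.exists_dual_eq_one (R ⧸ maximalIdeal R) hx
  exact ⟨f.restrictScalars R, hf⟩

/-- The map `k → N` sending `1` to `x`. -/
noncomputable def incl {N : Type u} [AddCommGroup N] [Module R N]
    (x : N) (hN : ∀ a ∈ maximalIdeal R, a • x = 0) : (R ⧸ maximalIdeal R) →ₗ[R] N :=
  Submodule.liftQ (maximalIdeal R) (LinearMap.toSpanSingleton R N x) (fun a ha => by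
    simpa using hN a ha)

lemma incl_one {N : Type u} [AddCommGroup N] [Module R N]
    (x : N) (hN : ∀ a ∈ maximalIdeal R, a • x = 0) : incl x hN 1 = x := by
  have : incl x hN (Submodule.Quotient.mk 1) = (1 : R) • x := Submodule.liftQ_apply _ _ _
  rw [one_smul] at this
  exact this

lemma ext_residue {N : Type u} [AddCommGroup N] [Module R N]
    (hN : ∀ a ∈ maximalIdeal R, ∀ x : N, a • x = 0) (x : N) (hx : x ≠ 0) (Y : ModuleCat.{u} R)
    (n : ℕ) (h : Subsingleton (Abelian.Ext.{u} (ModuleCat.of R N) Y n)) :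
    Subsingleton (Abelian.Ext.{u} (ModuleCat.of R (R ⧸ maximalIdeal R)) Y n) := by
  obtain ⟨φ, hφ⟩ := exists_functional hN x hx
  refine retract (ModuleCat.ofHom (incl x fun a ha => hN a ha x)) (ModuleCat.ofHom φ) ?_ n h
  rw [← ModuleCat.ofHom_comp]
  congr 1
  refine LinearMap.ext fun q => ?_
  obtain ⟨r, rfl⟩ := Ideal.Quotient.mk_surjective q
  have : (Ideal.Quotient.mk (maximalIdeal R) r) = r • (1 : R ⧸ maximalIdeal R) := by
    rw [Algebra.smul_def, mul_one]; rfl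
  rw [this, map_smul, LinearMap.comp_apply, incl_one, hφ]
  rfl

lemma mul_zero_of_sq (hm : maximalIdeal R ^ 2 = ⊥) {a b : R} (ha : a ∈ maximalIdeal R)
    (hb : b ∈ maximalIdeal R) : a * b = 0 := by
  have : a * b ∈ maximalIdeal R ^ 2 := by rw [pow_two]; exact Ideal.mul_mem_mul ha hb
  rwa [hm, Ideal.mem_bot] at this

lemma residue_false (hm : maximalIdeal R ^ 2 = ⊥) (hmp : ¬ (maximalIdeal R).IsPrincipal) (n : ℕ)
    (h : Subsingleton (Abelian.Ext.{u} (ModuleCat.of R (R ⧸ maximalIdeal R))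
      (ModuleCat.of R R) (n + 1))) : False := by
  have hne : maximalIdeal R ≠ ⊥ := fun h0 => hmp (h0 ▸ bot_isPrincipal)
  obtain ⟨x, hxm, hx0⟩ := Submodule.exists_mem_ne_zero_of_ne_bot hne
  let f : R →ₗ[R] (R ⧸ maximalIdeal R) := (maximalIdeal R).mkQ
  have hf : LinearMap.ker f = maximalIdeal R := Submodule.ker_mkQ _
  have hmem : ∀ z : LinearMap.ker f, (z : R) ∈ maximalIdeal R := fun z => hf.le z.2
  have hS := LinearMap.shortExact_shortComplexKer (f := f) (Submodule.mkQ_surjective _)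
  have hN : ∀ a ∈ maximalIdeal R, ∀ z : LinearMap.ker f, a • z = 0 := fun a ha z =>
    Subtype.ext (mul_zero_of_sq hm ha (hmem z))
  have : Projective f.shortComplexKer.X₂ :=
    inferInstanceAs (Projective (ModuleCat.of R R))
  let x' : LinearMap.ker f := ⟨x, hf.ge hxm⟩
  have hx' : x' ≠ 0 := fun h0 => hx0 (congrArg Subtype.val h0)
  induction n with
  | succ n ih => exact ih (ext_residue hN x' hx' _ _ (shift hS _ n h))
  | zero =>
    obtain ⟨y, hym, hy⟩ : ∃ y ∈ maximalIdeal R, y ∉ Ideal.span {x} := by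
      by_contra! hc
      exact hmp ⟨x, le_antisymm hc ((Ideal.span_singleton_le_iff_mem _).2 hxm)⟩
    let y' : LinearMap.ker f := ⟨y, hf.ge hym⟩
    let W : Submodule R (LinearMap.ker f) := Submodule.span R {x'}
    have hyW : W.mkQ y' ≠ 0 := by
      rw [Submodule.mkQ_apply, Ne, Submodule.Quotient.mk_eq_zero, Submodule.mem_span_singleton]
      rintro ⟨a, ha⟩
      exact hy (Ideal.mem_span_singleton'.2 ⟨a, congrArg Subtype.val ha⟩)
    obtain ⟨φ, hφ⟩ := exists_functional (N := LinearMap.ker f ⧸ W) (fun a ha q => by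
      obtain ⟨z, rfl⟩ := W.mkQ_surjective q
      rw [← map_smul, hN a ha, map_zero]) _ hyW
    let g : LinearMap.ker f →ₗ[R] R :=
      incl y (fun a ha => mul_zero_of_sq hm ha hym) ∘ₗ φ ∘ₗ W.mkQ
    have hgy : g y' = y := by
      change incl y (fun a ha => mul_zero_of_sq hm ha hym) (φ (W.mkQ y')) = y
      rw [hφ, incl_one]
    have hgx : g x' = 0 := by
      change incl y (fun a ha => mul_zero_of_sq hm ha hym) (φ (W.mkQ x')) = 0
      have : W.mkQ x' = 0 := by
        rw [Submodule.mkQ_apply, Submodule.Quotient.mk_eq_zero]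
        exact Submodule.mem_span_singleton_self _
      rw [this, map_zero, map_zero]
    obtain ⟨G, hG⟩ := extend hS (ModuleCat.of R R) h (ModuleCat.ofHom g)
    have hG' : ∀ z : LinearMap.ker f, (z : R) * G.hom (1 : R) = g z := fun z => by
      have h1 : G.hom (z : R) = g z := congrArg (fun t => t.hom z) hG
      rw [← h1]
      have h2 := G.hom.map_smul (z : R) (1 : R)
      rw [smul_eq_mul (z : R) (1 : R), mul_one] at h2
      exact h2.symm
    have e1 : x * G.hom (1 : R) = 0 := (hG' x').trans hgx
    have e2 : y * G.hom (1 : R) = y := (hG' y').trans hgy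
    have hr : (G.hom (1 : R) : R) ∈ maximalIdeal R := by
      rw [mem_maximalIdeal, mem_nonunits_iff]
      intro hu
      exact hx0 (hu.mul_left_eq_zero.1 e1)
    rw [mul_zero_of_sq hm hym hr] at e2
    exact hy (e2 ▸ Ideal.zero_mem _)

end Alg

/-- Minimal free cover. -/
lemma exists_cover {R : Type u} [CommRing R] [IsLocalRing R] (M : Type u) [AddCommGroup M]
    [Module R M] [Module.Finite R M] :
    ∃ (ι : Type u) (f : (ι →₀ R) →ₗ[R] M), Function.Surjective f ∧
      ∀ v, f v = 0 → ∀ i, v i ∈ maximalIdeal R := by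
  let w := Module.Free.chooseBasis (ResidueField R) (ResidueField R ⊗[R] M)
  obtain ⟨v, eq⟩ := (TensorProduct.mk_surjective R M (ResidueField R)
    Ideal.Quotient.mk_surjective).comp_left w
  have hv : ∀ i, (1 : ResidueField R) ⊗ₜ[R] v i = w i := congr_fun eq
  refine ⟨_, Finsupp.linearCombination R v, ?_, ?_⟩
  · rw [← LinearMap.range_eq_top, Finsupp.range_linearCombination]
    exact span_eq_top_of_tmul_eq_basis _ w hv
  · intro c hc i
    have h1 : (TensorProduct.mk R (ResidueField R) M 1) (Finsupp.linearCombination R v c) = 0 := by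
      rw [hc, map_zero]
    rw [Finsupp.linearCombination_apply, Finsupp.sum, map_sum] at h1
    have h2 : ∑ j ∈ c.support, residue R (c j) • w j = 0 := by
      rw [← h1]
      refine Finset.sum_congr rfl fun j _ => ?_
      rw [map_smul, TensorProduct.mk_apply, hv]
      exact algebraMap_smul (ResidueField R) (c j) (w j)
    by_cases hi : i ∈ c.support
    · exact (residue_eq_zero_iff _).1 (linearIndependent_iff'.1 w.linearIndependent _ _ h2 i hi)
    · rw [Finsupp.notMem_support_iff.1 hi]
      exact Ideal.zero_mem _

end Stmt5Aux


/-- Let `(R,𝔪)` be a noetherian local ring with `𝔪² = 0` and `𝔪` not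
generated by a single element. If `M` is a finitely generated `R`-module with
`Ext^i_R(M,R) = 0` for some `i ≥ 2`, then `M` is free. -/
theorem stmt5 (R : Type u) [CommRing R] [IsNoetherianRing R] [IsLocalRing R]
    (hm : IsLocalRing.maximalIdeal R ^ 2 = ⊥)
    (hmp : ¬ (IsLocalRing.maximalIdeal R).IsPrincipal)
    (M : Type u) [AddCommGroup M] [Module R M] [Module.Finite R M]
    (i : ℕ) (hi : 2 ≤ i)
    (hext : Subsingleton (((Ext R (ModuleCat R) i).obj
      (Opposite.op (ModuleCat.of R M))).obj (ModuleCat.of R R))) :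
    Module.Free R M := by
  obtain ⟨n, rfl⟩ : ∃ n, i = n + 2 := ⟨i - 2, by omega⟩
  have h := Stmt5Aux.subsingleton_ext (ModuleCat.of R M) (ModuleCat.of R R) (n + 1) hext
  obtain ⟨ι, f, hf, hk⟩ := Stmt5Aux.exists_cover (R := R) M
  by_cases hinj : LinearMap.ker f = ⊥
  · exact Module.Free.of_equiv (LinearEquiv.ofBijective f ⟨LinearMap.ker_eq_bot.1 hinj, hf⟩)
  · exfalso
    obtain ⟨x, hxk, hx0⟩ := Submodule.exists_mem_ne_zero_of_ne_bot hinj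
    have hS := LinearMap.shortExact_shortComplexKer hf
    have : Projective f.shortComplexKer.X₂ :=
      inferInstanceAs (Projective (ModuleCat.of R (ι →₀ R)))
    have h1 := Stmt5Aux.shift hS _ n h
    refine Stmt5Aux.residue_false hm hmp n
      (Stmt5Aux.ext_residue (N := LinearMap.ker f) ?_ ⟨x, hxk⟩ ?_ _ _ h1)
    · intro a ha z
      refine Subtype.ext (Finsupp.ext fun i => ?_)
      exact Stmt5Aux.mul_zero_of_sq hm ha (hk z.1 z.2 i)
    · exact fun h0 => hx0 (congrArg Subtype.val h0)
end

section
/- Let (R,𝔪) be a noetherian local ring with 𝔪² = 0 and 𝔪 not generated by a single element. Then every reflexive R-module is finitely generated and free. -/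
open IsLocalRing in
/-- The reduction `M / 𝔪 M`. -/
abbrev RedMod (R : Type*) [CommRing R] [IsLocalRing R] (M : Type*) [AddCommGroup M] [Module R M] :=
  M ⧸ (maximalIdeal R • ⊤ : Submodule R M)

open IsLocalRing in
noncomputable instance redModModule (R : Type*) [CommRing R] [IsLocalRing R] (M : Type*)
    [AddCommGroup M] [Module R M] : Module (ResidueField R) (RedMod R M) :=
  inferInstanceAs (Module (R ⧸ maximalIdeal R) (M ⧸ (maximalIdeal R • ⊤ : Submodule R M)))

open IsLocalRing in
instance redModTower (R : Type*) [CommRing R] [IsLocalRing R] (M : Type*)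
    [AddCommGroup M] [Module R M] : IsScalarTower R (ResidueField R) (RedMod R M) :=
  inferInstanceAs (IsScalarTower R (R ⧸ maximalIdeal R) (M ⧸ (maximalIdeal R • ⊤ : Submodule R M)))

section
open IsLocalRing
variable {R : Type*} [CommRing R] [IsLocalRing R]

/-- elements outside `𝔪 M` are detected by maps to the residue field. -/
theorem exists_toResidue {M : Type*} [AddCommGroup M] [Module R M] (x : M)
    (hx : x ∉ (maximalIdeal R • ⊤ : Submodule R M)) :
    ∃ μ : M →ₗ[R] ResidueField R, μ x = 1 := by
  have h0 : (Submodule.Quotient.mk x : RedMod R M) ≠ 0 := by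
    rwa [Ne, Submodule.Quotient.mk_eq_zero]
  rw [Ne, ← Module.forall_dual_apply_eq_zero_iff (ResidueField R)] at h0
  push Not at h0
  obtain ⟨φ, hφ⟩ := h0
  refine ⟨(((φ (Submodule.Quotient.mk x))⁻¹ • φ).restrictScalars R).comp (Submodule.mkQ _), ?_⟩
  simp [hφ]

/-- For `b` killed by `𝔪`, the map `k → R`, `1 ↦ b`. -/
theorem exists_ofResidue (hm : maximalIdeal R ^ 2 = ⊥) (b : R) (hb : b ∈ maximalIdeal R) :
    ∃ ι : ResidueField R →ₗ[R] R, ∀ r : R, ι (residue R r) = r * b := by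
  refine ⟨Submodule.liftQ (maximalIdeal R) (LinearMap.toSpanSingleton R R b) ?_, ?_⟩
  · intro r hr
    have : r * b ∈ maximalIdeal R ^ 2 := by
      rw [pow_two]; exact Ideal.mul_mem_mul hr hb
    rw [hm] at this
    simpa using this
  · intro r
    exact (Submodule.liftQ_apply _ _ _).trans (by simp)

theorem mul_zero_of_mem (hm : maximalIdeal R ^ 2 = ⊥) {a b : R} (ha : a ∈ maximalIdeal R)
    (hb : b ∈ maximalIdeal R) : a * b = 0 := by
  have : a * b ∈ maximalIdeal R ^ 2 := by
    rw [pow_two]; exact Ideal.mul_mem_mul ha hb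
  rwa [hm] at this

theorem exists_functional (hm : maximalIdeal R ^ 2 = ⊥) (b : R) (hb : b ∈ maximalIdeal R)
    (hb0 : b ≠ 0) : ∃ T : maximalIdeal R →ₗ[R] ResidueField R, T ⟨b, hb⟩ = 1 := by
  apply exists_toResidue
  intro h
  apply hb0
  have := Submodule.smul_induction_on (p := fun y : maximalIdeal R => (y : R) = 0) h
    (fun r hr n _ => by simpa using mul_zero_of_mem hm hr n.2)
    (fun x y hx hy => by simp [hx, hy])
  exact this

/-- If all functionals take `x` into `𝔪`, then `x ∈ 𝔪 M`. -/
theorem mem_smul_top (hm : maximalIdeal R ^ 2 = ⊥) (hmp : ¬ (maximalIdeal R).IsPrincipal)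
    {M : Type*} [AddCommGroup M] [Module R M] [Module.IsReflexive R M] (x : M)
    (hx : ∀ f : Module.Dual R M, f x ∈ maximalIdeal R) :
    x ∈ (maximalIdeal R • ⊤ : Submodule R M) := by
  by_contra hxm
  obtain ⟨b, hb, hb0⟩ : ∃ b ∈ maximalIdeal R, b ≠ 0 := by
    by_contra! hcon
    apply hmp
    have : maximalIdeal R = ⊥ := (Submodule.eq_bot_iff _).2 hcon
    rw [this]; infer_instance
  obtain ⟨a, ha, hab⟩ : ∃ a ∈ maximalIdeal R, a ∉ Ideal.span {b} := by
    by_contra! hcon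
    apply hmp
    have : maximalIdeal R = Ideal.span {b} :=
      le_antisymm hcon ((Ideal.span_singleton_le_iff_mem _).2 hb)
    exact ⟨⟨b, this⟩⟩
  obtain ⟨μ, hμ⟩ := exists_toResidue x hxm
  obtain ⟨T, hT⟩ := exists_functional hm b hb hb0
  obtain ⟨ιa, hιa⟩ := exists_ofResidue hm a ha
  obtain ⟨ιb, hιb⟩ := exists_ofResidue hm b hb
  let ψ : Module.Dual R (Module.Dual R M) :=
    ιa.comp (T.comp ((Module.Dual.eval R M x).codRestrict (maximalIdeal R) hx))
  obtain ⟨w, hw⟩ := (Module.bijective_dual_eval R M).2 ψ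
  have h1 : (ιb.comp μ) w = ψ (ιb.comp μ) := by rw [← hw]; rfl
  have e : (ιb.comp μ) x = b := by
    have := hιb 1
    simp only [map_one, one_mul] at this
    simp [hμ, this]
  have h2 : ψ (ιb.comp μ) = a := by
    have : ψ (ιb.comp μ) = ιa (T ⟨(ιb.comp μ) x, hx _⟩) := rfl
    rw [this]
    have e2 : (⟨(ιb.comp μ) x, hx _⟩ : maximalIdeal R) = ⟨b, hb⟩ := Subtype.ext e
    rw [e2, hT]
    have := hιa 1
    simpa using this
  apply hab
  obtain ⟨r, hr⟩ := residue_surjective (μ w)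
  rw [← h2, ← h1, LinearMap.comp_apply, ← hr, hιb]
  exact Ideal.mul_mem_left _ _ (Ideal.mem_span_singleton_self b)

theorem toResidue_smul_top {M : Type*} [AddCommGroup M] [Module R M]
    (μ : M →ₗ[R] ResidueField R) (x : M) (hx : x ∈ (maximalIdeal R • ⊤ : Submodule R M)) :
    μ x = 0 := by
  refine Submodule.smul_induction_on (p := fun y => μ y = 0) hx ?_ ?_
  · intro r hr n _
    rw [map_smul, Algebra.smul_def, ResidueField.algebraMap_eq, (residue_eq_zero_iff r).2 hr,
      zero_mul]
  · intro x y hx hy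
    rw [map_add, hx, hy, add_zero]

/-- Every map `M* → k` is given by an element of `M`. -/
theorem exists_eval_eq (hm : maximalIdeal R ^ 2 = ⊥) (hmp : ¬ (maximalIdeal R).IsPrincipal)
    {M : Type*} [AddCommGroup M] [Module R M] [Module.IsReflexive R M]
    (l : Module.Dual R M →ₗ[R] ResidueField R) :
    ∃ x : M, ∀ f : Module.Dual R M, residue R (f x) = l f := by
  obtain ⟨a, ha, ha0⟩ : ∃ b ∈ maximalIdeal R, b ≠ 0 := by
    by_contra! hcon
    apply hmp
    have : maximalIdeal R = ⊥ := (Submodule.eq_bot_iff _).2 hcon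
    rw [this]; infer_instance
  obtain ⟨ι, hι⟩ := exists_ofResidue hm a ha
  obtain ⟨T, hT⟩ := exists_functional hm a ha ha0
  have hι1 : ι 1 = a := by simpa using hι 1
  obtain ⟨w, hw⟩ := (Module.bijective_dual_eval R M).2 (ι.comp l)
  have hw' : ∀ f : Module.Dual R M, f w = ι (l f) := fun f => by
    have := congrArg (fun g => g f) hw
    simpa using this
  have hwm : w ∈ (maximalIdeal R • ⊤ : Submodule R M) := by
    by_contra hcon
    obtain ⟨μ, hμ⟩ := exists_toResidue w hcon
    have hfm : ι.comp μ ∈ (maximalIdeal R • ⊤ : Submodule R (Module.Dual R M)) := by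
      apply mem_smul_top hm hmp
      intro F
      obtain ⟨y, rfl⟩ := (Module.bijective_dual_eval R M).2 F
      obtain ⟨r, hr⟩ := residue_surjective (μ y)
      rw [Module.Dual.eval_apply, LinearMap.comp_apply, ← hr, hι]
      exact Ideal.mul_mem_left _ _ ha
    have h1 := hw' (ι.comp μ)
    rw [toResidue_smul_top l _ hfm, map_zero, LinearMap.comp_apply, hμ, hι1] at h1
    exact ha0 h1
  have key : ∀ w ∈ (maximalIdeal R • ⊤ : Submodule R M), ∃ x : M, ∀ f : Module.Dual R M,
      ∃ h : f w ∈ maximalIdeal R, T ⟨f w, h⟩ = residue R (f x) := by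
    intro w hw
    refine Submodule.smul_induction_on (p := fun w => ∃ x : M, ∀ f : Module.Dual R M,
      ∃ h : f w ∈ maximalIdeal R, T ⟨f w, h⟩ = residue R (f x)) hw ?_ ?_
    · intro r hr n _
      obtain ⟨c, hc⟩ := residue_surjective (T ⟨r, hr⟩)
      refine ⟨c • n, fun f => ?_⟩
      have h : f (r • n) ∈ maximalIdeal R := by
        rw [map_smul, smul_eq_mul]; exact Ideal.mul_mem_right _ _ hr
      refine ⟨h, ?_⟩
      have : (⟨f (r • n), h⟩ : maximalIdeal R) = f n • ⟨r, hr⟩ := by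
        ext; simp [mul_comm]
      rw [this, map_smul, ← hc, map_smul, smul_eq_mul, map_mul, Algebra.smul_def,
        ResidueField.algebraMap_eq, mul_comm]
    · rintro u v ⟨x, hx⟩ ⟨y, hy⟩
      refine ⟨x + y, fun f => ?_⟩
      obtain ⟨h1, h1'⟩ := hx f
      obtain ⟨h2, h2'⟩ := hy f
      have h : f (u + v) ∈ maximalIdeal R := by
        rw [map_add]; exact add_mem h1 h2
      refine ⟨h, ?_⟩
      have : (⟨f (u + v), h⟩ : maximalIdeal R) = ⟨f u, h1⟩ + ⟨f v, h2⟩ := by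
        ext; simp
      rw [this, map_add, map_add, map_add, h1', h2']
  obtain ⟨x, hx⟩ := key w hwm
  refine ⟨x, fun f => ?_⟩
  obtain ⟨h, h'⟩ := hx f
  rw [← h']
  obtain ⟨r, hr⟩ := residue_surjective (l f)
  have : (⟨f w, h⟩ : maximalIdeal R) = r • ⟨a, ha⟩ := by
    ext; simp [hw', ← hr, hι]
  rw [this, map_smul, hT, ← hr, Algebra.smul_def, ResidueField.algebraMap_eq, mul_one]

/-- Every map `M → k` lifts to a functional. -/
theorem exists_lift_eq (hm : maximalIdeal R ^ 2 = ⊥) (hmp : ¬ (maximalIdeal R).IsPrincipal)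
    {M : Type*} [AddCommGroup M] [Module R M] [Module.IsReflexive R M]
    (μ : M →ₗ[R] ResidueField R) :
    ∃ f : Module.Dual R M, ∀ x : M, residue R (f x) = μ x := by
  obtain ⟨f, hf⟩ := exists_eval_eq hm hmp (M := Module.Dual R M)
    (μ.comp (Module.evalEquiv R M).symm.toLinearMap)
  refine ⟨f, fun x => ?_⟩
  have h1 := hf (Module.evalEquiv R M x)
  rw [LinearMap.comp_apply, LinearEquiv.coe_coe, LinearEquiv.symm_apply_apply] at h1
  exact h1

theorem redMod_finite (hm : maximalIdeal R ^ 2 = ⊥) (hmp : ¬ (maximalIdeal R).IsPrincipal)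
    {M : Type*} [AddCommGroup M] [Module R M] [Module.IsReflexive R M] :
    Module.Finite (ResidueField R) (RedMod R M) := by
  have : Module.IsReflexive (ResidueField R) (RedMod R M) := by
    refine ⟨⟨?_, ?_⟩⟩
    · rw [injective_iff_map_eq_zero]
      intro v hv
      rw [← Module.forall_dual_apply_eq_zero_iff (ResidueField R)]
      intro φ
      rw [← Module.Dual.eval_apply, hv, LinearMap.zero_apply]
    · intro l
      -- the reduction map `M* → V*`
      have hsurj : ∀ φ : Module.Dual (ResidueField R) (RedMod R M), ∃ f : Module.Dual R M,
          ∀ x : M, residue R (f x) = φ (Submodule.Quotient.mk x) := fun φ =>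
        exists_lift_eq hm hmp ((φ.restrictScalars R).comp (Submodule.mkQ _))
      have hred : ∀ f : Module.Dual R M, ∃ φ : Module.Dual (ResidueField R) (RedMod R M),
          ∀ x : M, φ (Submodule.Quotient.mk x) = residue R (f x) := by
        intro f
        let g : RedMod R M →ₗ[R] ResidueField R :=
          Submodule.liftQ _ ((Algebra.linearMap R (ResidueField R)).comp f)
            (fun x hx => toResidue_smul_top _ x hx)
        refine ⟨g.extendScalarsOfSurjective residue_surjective, fun x => ?_⟩
        rfl
      choose red hr using hred
      have ext' : ∀ φ φ' : Module.Dual (ResidueField R) (RedMod R M),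
          (∀ x : M, φ (Submodule.Quotient.mk x) = φ' (Submodule.Quotient.mk x)) → φ = φ' := by
        intro φ φ' h
        refine LinearMap.ext fun v => ?_
        obtain ⟨x, rfl⟩ := Submodule.Quotient.mk_surjective _ v
        exact h x
      let redL : Module.Dual R M →ₗ[R] Module.Dual (ResidueField R) (RedMod R M) :=
        { toFun := red
          map_add' := fun f g => ext' _ _ fun x => by
            rw [hr, LinearMap.add_apply, map_add, LinearMap.add_apply, hr, hr]
          map_smul' := fun c f => ext' _ _ fun x => by
            rw [hr, LinearMap.smul_apply, RingHom.id_apply, LinearMap.smul_apply, hr,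
              smul_eq_mul, map_mul, Algebra.smul_def, ResidueField.algebraMap_eq] }
      obtain ⟨x, hx⟩ := exists_eval_eq hm hmp ((l.restrictScalars R).comp redL)
      refine ⟨Submodule.Quotient.mk x, ?_⟩
      refine LinearMap.ext fun φ => ?_
      obtain ⟨f, hf⟩ := hsurj φ
      have : φ = red f := ext' _ _ fun y => by rw [hr, hf]
      rw [Module.Dual.eval_apply, this, hr, hx]
      rfl
  infer_instance

end

/-- Let `(R,𝔪)` be a noetherian local ring with `𝔪² = 0` and `𝔪` not
generated by a single element. Then every reflexive `R`-module is finitely generated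
and free. -/
theorem stmt6 (R : Type u) [CommRing R] [IsNoetherianRing R] [IsLocalRing R]
    (hm : IsLocalRing.maximalIdeal R ^ 2 = ⊥)
    (hmp : ¬ (IsLocalRing.maximalIdeal R).IsPrincipal)
    (M : Type u) [AddCommGroup M] [Module R M]
    (h : Module.IsReflexive R M) :
    Module.Finite R M ∧ Module.Free R M := by
  open IsLocalRing in
  have hfin := redMod_finite hm hmp (M := M)
  let b := Module.finBasis (ResidueField R) (RedMod R M)
  have hx : ∀ i, ∃ x : M, (Submodule.Quotient.mk x : RedMod R M) = b i := fun i =>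
    Submodule.Quotient.mk_surjective _ _
  choose x hx using hx
  have hf : ∀ i, ∃ f : Module.Dual R M, ∀ y : M,
      residue R (f y) = b.coord i (Submodule.Quotient.mk y) := fun i =>
    exists_lift_eq hm hmp (((b.coord i).restrictScalars R).comp (Submodule.mkQ _))
  choose f hf using hf
  have hli : LinearIndependent R x := by
    rw [Fintype.linearIndependent_iff]
    intro r hr
    have hrm : ∀ i, r i ∈ maximalIdeal R := by
      intro i
      rw [← residue_eq_zero_iff]
      have := congrArg (fun y => residue R (f i y)) hr
      simpa [hf, hx, Finsupp.single_apply] using this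
    intro i
    have h1 : f i (∑ j, r j • x j) = r i := by
      rw [map_sum, Finset.sum_eq_single i]
      · have : f i (x i) - 1 ∈ maximalIdeal R := by
          rw [← residue_eq_zero_iff]
          simp [hf, hx]
        have := mul_zero_of_mem hm (hrm i) this
        rw [map_smul, smul_eq_mul]
        linear_combination this
      · intro j _ hj
        have : f i (x j) ∈ maximalIdeal R := by
          rw [← residue_eq_zero_iff]
          simp [hf, hx, Finsupp.single_apply, hj]
        rw [map_smul, smul_eq_mul]
        exact mul_zero_of_mem hm (hrm j) this
      · simp
    rw [← h1, hr, map_zero]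
  have hsup : ∀ y : M, ∃ s ∈ Submodule.span R (Set.range x),
      y - s ∈ (maximalIdeal R • ⊤ : Submodule R M) := by
    intro y
    have hc : ∀ i, ∃ r : R, residue R r = b.repr (Submodule.Quotient.mk y) i := fun i =>
      residue_surjective _
    choose c hc using hc
    refine ⟨∑ i, c i • x i, Submodule.sum_mem _ fun i _ =>
      Submodule.smul_mem _ _ (Submodule.subset_span ⟨i, rfl⟩), ?_⟩
    rw [← Submodule.Quotient.mk_eq_zero, Submodule.Quotient.mk_sub, sub_eq_zero]
    have h1 := b.sum_repr (Submodule.Quotient.mk y)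
    rw [← h1, ← Submodule.mkQ_apply _ (∑ i, c i • x i), map_sum]
    refine Finset.sum_congr rfl fun i _ => ?_
    rw [map_smul, Submodule.mkQ_apply, hx, ← hc, ← ResidueField.algebraMap_eq, algebraMap_smul]
  have hsm : (maximalIdeal R • ⊤ : Submodule R M) ≤ Submodule.span R (Set.range x) := by
    rw [Submodule.smul_le]
    intro r hr n _
    obtain ⟨s, hs, hn⟩ := hsup n
    have h0 : r • (n - s) = 0 := by
      refine Submodule.smul_induction_on (p := fun y => r • y = 0) hn ?_ ?_
      · intro t ht z _
        rw [smul_smul, mul_zero_of_mem hm hr ht, zero_smul]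
      · intro u v hu hv
        rw [smul_add, hu, hv, add_zero]
    rw [smul_sub, sub_eq_zero] at h0
    rw [h0]
    exact Submodule.smul_mem _ _ hs
  have hspan : ⊤ ≤ Submodule.span R (Set.range x) := by
    intro y _
    obtain ⟨s, hs, hn⟩ := hsup y
    have := add_mem (hsm hn) hs
    simpa using this
  let B := Module.Basis.mk hli hspan
  exact ⟨Module.Finite.of_basis B, Module.Free.of_basis B⟩
end

section
/- Let (R,𝔪) be a noetherian local ring with 𝔪³ = 0, with 𝔪 not generated by a single element, and with 𝔪² ≠ (0 :_R 𝔪), where (0 :_R 𝔪) = {x ∈ R : 𝔪x = 0} is the socle of R. Then for a finitely generated R-module M the following are equivalent: (1) M is free; (2) M is reflexive; (3) the evaluation map M → M** is surjective; (4) Ext^i_R(M,R) = 0 for all i > 0; (5) Ext^i_R(M*,R) = 0 for all i > 0. -/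
open CategoryTheory

namespace Stmt7
open IsLocalRing

/-- The basic data attached to the ring. -/
lemma exists_data (R : Type*) [CommRing R] [IsNoetherianRing R] [IsLocalRing R]
    (hm3 : maximalIdeal R ^ 3 = ⊥)
    (hmp : ¬ (maximalIdeal R).IsPrincipal)
    (hsoc : maximalIdeal R ^ 2 ≠ Submodule.colon (⊥ : Ideal R) (maximalIdeal R)) :
    ∃ (x : maximalIdeal R) (θ : maximalIdeal R →ₗ[R] R),
      (∀ a ∈ maximalIdeal R, a * x = 0) ∧ (x : R) ≠ 0 ∧ ∀ r : R, θ x ≠ (x : R) * r := by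
  have h2 : ∀ a ∈ maximalIdeal R ^ 2, ∀ b ∈ maximalIdeal R, a * b = 0 := by
    intro a ha b hb
    have : a * b ∈ maximalIdeal R ^ 3 := by
      rw [pow_succ]; exact Ideal.mul_mem_mul ha hb
    rw [hm3] at this
    simpa using this
  have hle : maximalIdeal R ^ 2 ≤ Submodule.colon (⊥ : Ideal R) (maximalIdeal R) := by
    intro a ha
    rw [Submodule.mem_colon]
    intro b hb
    simpa using h2 a ha b hb
  obtain ⟨x, hx, hx2⟩ := SetLike.exists_of_lt (lt_of_le_of_ne hle hsoc)
  have hxs : ∀ a ∈ maximalIdeal R, a * x = 0 := by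
    intro a ha
    rw [Submodule.mem_colon] at hx
    simpa [mul_comm] using hx a ha
  have hxm : x ∈ maximalIdeal R := by
    by_contra hxm
    have hu : IsUnit x := by simpa using hxm
    apply hmp
    have : maximalIdeal R = ⊥ := by
      rw [eq_bot_iff]
      intro a ha
      simpa using (hu.mul_left_eq_zero).1 (hxs a ha)
    rw [this]
    exact ⟨0, by simp⟩
  have hy : ∃ y : R, (∀ a ∈ maximalIdeal R, a * y = 0) ∧ ∀ r, y ≠ x * r := by
    by_contra! hcon
    apply hmp
    refine ⟨x, le_antisymm ?_ ?_⟩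
    · intro z hz
      by_cases hzs : ∀ a ∈ maximalIdeal R, a * z = 0
      · obtain ⟨r, hr⟩ := hcon z hzs
        exact Submodule.mem_span_singleton.2 ⟨r, by rw [hr, smul_eq_mul, mul_comm]⟩
      · push Not at hzs
        obtain ⟨w, hw, hwz⟩ := hzs
        have hwz2 : w * z ∈ maximalIdeal R ^ 2 := by
          rw [sq]; exact Ideal.mul_mem_mul hw hz
        obtain ⟨r, hr⟩ := hcon (w * z) (fun a ha => by rw [mul_comm]; exact h2 _ hwz2 a ha)
        by_cases hr' : r ∈ maximalIdeal R
        · exact absurd (by rw [hr, mul_comm]; exact hxs r hr') hwz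
        · have hu : IsUnit r := by simpa using hr'
          exfalso; apply hx2
          rw [hr] at hwz2
          exact (Ideal.mul_unit_mem_iff_mem _ hu).1 hwz2
    · rw [Submodule.span_singleton_le_iff_mem]; exact hxm
  obtain ⟨y, hys, hyx⟩ := hy
  have hc : (maximalIdeal R).toCotangent ⟨x, hxm⟩ ≠ 0 := by
    rw [Ne, Ideal.toCotangent_eq_zero]; exact hx2
  obtain ⟨φ, hφ⟩ : ∃ φ : CotangentSpace R →ₗ[ResidueField R] ResidueField R,
      φ ((maximalIdeal R).toCotangent ⟨x, hxm⟩) = 1 := by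
    have h := mt (Module.forall_dual_apply_eq_zero_iff (ResidueField R)
      (V := CotangentSpace R) ((maximalIdeal R).toCotangent ⟨x, hxm⟩)).1 hc
    push Not at h
    obtain ⟨φ, hφ⟩ := h
    exact ⟨(φ ((maximalIdeal R).toCotangent ⟨x, hxm⟩))⁻¹ • φ, inv_mul_cancel₀ hφ⟩
  let ψ : (R ⧸ maximalIdeal R) →ₗ[R] R :=
    (maximalIdeal R).liftQ (LinearMap.toSpanSingleton R R y) (by
      intro a ha
      simpa using hys a ha)
  have hψ : ψ (Ideal.Quotient.mk _ 1) = y := by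
    exact (Submodule.liftQ_apply _ _ _).trans (by simp)
  let φ' : (maximalIdeal R).Cotangent →ₗ[R] (R ⧸ maximalIdeal R) :=
    φ.restrictScalars R
  refine ⟨⟨x, hxm⟩, ψ ∘ₗ φ' ∘ₗ (maximalIdeal R).toCotangent, hxs, ?_, ?_⟩
  · rintro rfl; exact hx2 (zero_mem _)
  · intro r
    have : (ψ ∘ₗ φ' ∘ₗ (maximalIdeal R).toCotangent) ⟨x, hxm⟩ = y := by
      rw [← hψ]
      show ψ (φ ((maximalIdeal R).toCotangent ⟨x, hxm⟩)) = _
      rw [hφ]; rfl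
    rw [this]; exact hyx r

/-- A nontrivial finite module surjects onto the residue field. -/
lemma exists_functional (R : Type*) [CommRing R] [IsLocalRing R]
    (N : Type*) [AddCommGroup N] [Module R N] [Module.Finite R N] [Nontrivial N] :
    ∃ (l : N →ₗ[R] (R ⧸ maximalIdeal R)) (n : N), l n = Ideal.Quotient.mk _ 1 := by
  obtain ⟨K, hK, -⟩ := (eq_top_or_exists_le_coatom (⊥ : Submodule R N)).resolve_left bot_ne_top
  have : IsSimpleModule R (N ⧸ K) := isSimpleModule_iff_isCoatom.2 hK
  obtain ⟨I, hI, ⟨e⟩⟩ := isSimpleModule_iff_quot_maximal.1 this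
  obtain rfl := eq_maximalIdeal hI
  obtain ⟨n, hn⟩ := K.mkQ_surjective (e.symm (Ideal.Quotient.mk _ 1))
  exact ⟨e.toLinearMap ∘ₗ K.mkQ, n, by simp [hn]⟩

lemma quot_smul (R : Type*) [CommRing R] [IsLocalRing R] {a : R} (ha : a ∈ maximalIdeal R)
    (t : R ⧸ maximalIdeal R) : a • t = 0 := by
  obtain ⟨t, rfl⟩ := Ideal.Quotient.mk_surjective t
  show Ideal.Quotient.mk _ (a * t) = 0
  exact Ideal.Quotient.eq_zero_iff_mem.2 (Ideal.mul_mem_right _ _ ha)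

/-- Induction by splitting off free summands. -/
lemma free_of_split (R : Type u) [CommRing R] [IsNoetherianRing R] [IsLocalRing R]
    (P : ∀ (N : Type u) [AddCommGroup N] [Module R N], Prop)
    (hP : ∀ (N K : Type u) [AddCommGroup N] [Module R N] [AddCommGroup K] [Module R K]
      (_ : N ≃ₗ[R] R × K), P N → P K)
    (h0 : ∀ (N : Type u) [AddCommGroup N] [Module R N] [Module.Finite R N], P N →
      (∀ (f : N →ₗ[R] R) (n : N), f n ∈ maximalIdeal R) → Subsingleton N)
    (M : Type u) [AddCommGroup M] [Module R M] [Module.Finite R M] (hM : P M) :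
    Module.Free R M := by
  obtain ⟨k, hk⟩ : ∃ k, Module.finrank (ResidueField R) (TensorProduct R (ResidueField R) M) = k :=
    ⟨_, rfl⟩
  induction k using Nat.strong_induction_on generalizing M with
  | _ k ih =>
  by_cases h : ∀ (f : M →ₗ[R] R) (n : M), f n ∈ maximalIdeal R
  · have := h0 M hM h
    infer_instance
  · push Not at h
    obtain ⟨f, n, hn⟩ := h
    have hu : IsUnit (f n) := by simpa using hn
    obtain ⟨u, hu⟩ := hu
    have hs : Function.Surjective f := by
      intro r
      refine ⟨(r * (↑u⁻¹ : R)) • n, ?_⟩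
      simp [← hu]
    obtain ⟨g, hg⟩ := Module.projective_lifting_property f LinearMap.id hs
    have e : M ≃ₗ[R] R × LinearMap.ker f := by
      refine LinearEquiv.ofBijective (LinearMap.prod f
        (LinearMap.codRestrict (LinearMap.ker f) (LinearMap.id - g ∘ₗ f) ?_)) ⟨?_, ?_⟩
      · intro c
        have := LinearMap.congr_fun hg (f c)
        simp at this
        simp [this]
      · rw [← LinearMap.ker_eq_bot, eq_bot_iff]
        intro c hc
        simp [LinearMap.codRestrict, Subtype.ext_iff] at hc
        simpa [hc.1] using hc.2
      · rintro ⟨r, c, hc⟩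
        have hc' : f c = 0 := hc
        have := LinearMap.congr_fun hg r
        simp at this
        exact ⟨g r + c, by simp [LinearMap.codRestrict, this, hc']⟩
    have hK := hP _ _ e hM
    have hfr : Module.finrank (ResidueField R) (TensorProduct R (ResidueField R) M) = 1 +
        Module.finrank (ResidueField R)
          (TensorProduct R (ResidueField R) (LinearMap.ker f)) := by
      have : Module.Free (ResidueField R) (TensorProduct R (ResidueField R) (LinearMap.ker f)) :=
        Module.Free.of_divisionRing _ _
      rw [((e.baseChange R (ResidueField R)).trans
        (TensorProduct.prodRight R (ResidueField R) _ _ _)).finrank_eq, Module.finrank_prod]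
      congr 1
      simp
    have := ih _ (by omega) (LinearMap.ker f) hK rfl
    exact Module.Free.of_equiv e.symm


lemma liftQ_exists (R : Type*) [CommRing R] [IsLocalRing R] (x : R)
    (hx : ∀ a ∈ maximalIdeal R, a * x = 0) :
    ∃ ψ : (R ⧸ maximalIdeal R) →ₗ[R] R, ψ (Ideal.Quotient.mk _ 1) = x ∧
      ∀ t, ∃ r, ψ t = x * r := by
  refine ⟨(maximalIdeal R).liftQ (LinearMap.toSpanSingleton R R x) (by
      intro a ha
      simpa using hx a ha), (Submodule.liftQ_apply _ _ _).trans (by simp), ?_⟩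
  intro t
  obtain ⟨t, rfl⟩ := Submodule.Quotient.mk_surjective _ t
  exact ⟨t, (Submodule.liftQ_apply _ _ _).trans (by simp [mul_comm])⟩

lemma three_one (R : Type u) [CommRing R] [IsNoetherianRing R] [IsLocalRing R]
    (x : maximalIdeal R) (θ : maximalIdeal R →ₗ[R] R)
    (hx : ∀ a ∈ maximalIdeal R, a * x = 0) (hθ : ∀ r : R, θ x ≠ (x : R) * r)
    (M : Type u) [AddCommGroup M] [Module R M] [Module.Finite R M]
    (hM : Function.Surjective (Module.Dual.eval R M)) : Module.Free R M := by
  refine free_of_split R (fun N _ _ => Function.Surjective (Module.Dual.eval R N)) ?_ ?_ M hM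
  · intro N K _ _ _ _ e h φ
    let p : N →ₗ[R] K := LinearMap.snd R R K ∘ₗ e.toLinearMap
    let i : K →ₗ[R] N := e.symm.toLinearMap ∘ₗ LinearMap.inr R R K
    obtain ⟨n, hn⟩ := h (φ ∘ₗ i.dualMap)
    refine ⟨p n, ?_⟩
    ext f
    have := LinearMap.congr_fun hn (p.dualMap f)
    have hpi : i.dualMap (p.dualMap f) = f := by
      ext k; simp [p, i]
    simp only [LinearMap.comp_apply, hpi] at this
    rw [← this]; rfl
  · intro N _ _ _ h hN
    by_contra hne
    rw [not_subsingleton_iff_nontrivial] at hne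
    obtain ⟨l, n, hln⟩ := exists_functional R N
    obtain ⟨ψ, hψ, hψ'⟩ := liftQ_exists R (x : R) hx
    let ev : Module.Dual R N →ₗ[R] maximalIdeal R :=
      LinearMap.codRestrict (maximalIdeal R) (Module.Dual.eval R N n) (fun f => hN f n)
    obtain ⟨m, hm⟩ := h (θ ∘ₗ ev)
    have h1 := LinearMap.congr_fun hm (ψ ∘ₗ l)
    have h2 : ev (ψ ∘ₗ l) = x := by
      apply Subtype.ext
      show ψ (l n) = x
      rw [hln, hψ]
    obtain ⟨r, hr⟩ := hψ' (l m)
    apply hθ r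
    rw [← hr, ← h2]
    exact h1.symm

lemma dual_one (R : Type u) [CommRing R] [IsNoetherianRing R] [IsLocalRing R]
    (x : maximalIdeal R)
    (hx : ∀ a ∈ maximalIdeal R, a * x = 0) (hx0 : (x : R) ≠ 0)
    (M : Type u) [AddCommGroup M] [Module R M] [Module.Finite R M]
    (hM : Module.Free R (Module.Dual R M)) : Module.Free R M := by
  refine free_of_split R (fun N _ _ => Module.Projective R (Module.Dual R N)) ?_ ?_ M
    inferInstance
  · intro N K _ _ _ _ e h
    let p : N →ₗ[R] K := LinearMap.snd R R K ∘ₗ e.toLinearMap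
    let i : K →ₗ[R] N := e.symm.toLinearMap ∘ₗ LinearMap.inr R R K
    refine Module.Projective.of_split p.dualMap i.dualMap ?_
    ext f k; simp [p, i]
  · intro N _ _ _ h hN
    by_contra hne
    rw [not_subsingleton_iff_nontrivial] at hne
    obtain ⟨l, n, hln⟩ := exists_functional R N
    obtain ⟨ψ, hψ, hψ'⟩ := liftQ_exists R (x : R) hx
    have hfree : Module.Free R (Module.Dual R N) := Module.free_of_flat_of_isLocalRing
    let b := Module.Free.chooseBasis R (Module.Dual R N)
    have hz : ∀ f : Module.Dual R N, f = 0 := by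
      by_contra! hf
      obtain ⟨f, hf⟩ := hf
      have : ∃ j, b.repr f j ≠ 0 := by
        by_contra! hj
        exact hf (b.repr.injective (by ext j; simp [hj j]))
      obtain ⟨j, -⟩ := this
      have hxb : (x : R) • b j = 0 := by
        ext n
        simpa [mul_comm] using hx _ (hN (b j) n)
      have := congrArg (fun f => b.repr f j) hxb
      simp at this
      exact hx0 (by simpa using this)
    have := LinearMap.congr_fun (hz (ψ ∘ₗ l)) n
    simp only [LinearMap.comp_apply, hln, hψ] at this
    exact hx0 (by simpa using this)

/-- Minimal free covers. -/
lemma exists_cover (R : Type*) [CommRing R] [IsLocalRing R]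
    (M : Type*) [AddCommGroup M] [Module R M] [Module.Finite R M] :
    ∃ (k : ℕ) (q : (Fin k → R) →ₗ[R] M), Function.Surjective q ∧
      ∀ c, q c = 0 → ∀ i, c i ∈ maximalIdeal R := by
  let w := Module.finBasis (ResidueField R) (TensorProduct R (ResidueField R) M)
  obtain ⟨v, eq⟩ := (TensorProduct.mk_surjective R M (ResidueField R)
    Ideal.Quotient.mk_surjective).comp_left w
  have hs := span_eq_top_of_tmul_eq_basis v w (congrFun eq)
  refine ⟨_, Fintype.linearCombination R v, ?_, ?_⟩
  · rw [← LinearMap.range_eq_top, Fintype.range_linearCombination, hs]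
  · intro c hc i
    have h1 := congrArg (TensorProduct.mk R (ResidueField R) M 1) hc
    simp only [Fintype.linearCombination_apply, map_sum, map_smul, map_zero] at h1
    have h2 : ∑ j, (residue R (c j)) • w j = 0 := by
      rw [← h1]
      refine Finset.sum_congr rfl fun j _ => ?_
      rw [← congrFun eq j]
      exact algebraMap_smul (ResidueField R) (c j) _
    have h3 := Fintype.linearIndependent_iff.1 w.linearIndependent _ h2 i
    exact (residue_eq_zero_iff _).1 h3

lemma ext_two_core (R : Type*) [CommRing R] [IsNoetherianRing R] [IsLocalRing R]
    (x : maximalIdeal R) (θ : maximalIdeal R →ₗ[R] R)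
    (hx : ∀ a ∈ maximalIdeal R, a * x = 0) (hθ : ∀ r : R, θ x ≠ (x : R) * r)
    (M : Type*) [AddCommGroup M] [Module R M] [Module.Finite R M]
    (P0 P1 P2 : Type*) [AddCommGroup P0] [Module R P0] [AddCommGroup P1] [Module R P1]
    [AddCommGroup P2] [Module R P2] [Module.Projective R P0] [Module.Projective R P1]
    (d2 : P2 →ₗ[R] P1) (d1 : P1 →ₗ[R] P0) (p : P0 →ₗ[R] M) (hp : Function.Surjective p)
    (h21 : Function.Exact d2 d1) (h10 : Function.Exact d1 p)
    (H : ∀ f : P2 →ₗ[R] R, LinearMap.ker d2 ≤ LinearMap.ker f → ∃ g : P1 →ₗ[R] R, g ∘ₗ d2 = f) :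
    Module.Free R M := by
  obtain ⟨k, q, hq, hmin⟩ := exists_cover R M
  by_cases hN : Subsingleton (LinearMap.ker q)
  · have : Function.Injective q := by
      rw [← LinearMap.ker_eq_bot]; exact Submodule.subsingleton_iff_eq_bot.1 hN
    exact Module.Free.of_equiv (LinearEquiv.ofBijective q ⟨this, hq⟩)
  exfalso
  rw [not_subsingleton_iff_nontrivial] at hN
  obtain ⟨l, n, hln⟩ := exists_functional R (LinearMap.ker q)
  obtain ⟨a, ha⟩ := Module.projective_lifting_property q p hq
  obtain ⟨s, hs⟩ := Module.projective_lifting_property p q hp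
  have ha' : ∀ z, q (a z) = p z := LinearMap.congr_fun ha
  have hs' : ∀ z, p (s z) = q z := LinearMap.congr_fun hs
  -- the map `P1 → ker q`
  let a1 : P1 →ₗ[R] LinearMap.ker q := LinearMap.codRestrict _ (a ∘ₗ d1) (fun z => by
    simp [ha', h10.apply_apply_eq_zero])
  obtain ⟨L, hL⟩ := Module.projective_lifting_property (maximalIdeal R).mkQ (l ∘ₗ a1)
    (Submodule.mkQ_surjective _)
  have hL' : ∀ z, (Ideal.Quotient.mk (maximalIdeal R) (L z)) = l (a1 z) := LinearMap.congr_fun hL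
  -- the element `e`
  obtain ⟨e, he⟩ := (h10 (s n)).1 (by rw [hs']; exact n.2)
  have hunit : L e - 1 ∈ maximalIdeal R := by
    rw [← Ideal.Quotient.eq, hL', ← hln]
    let t : (Fin k → R) →ₗ[R] LinearMap.ker q :=
      LinearMap.codRestrict _ (a ∘ₗ s - LinearMap.id) (fun z => by simp [ha', hs'])
    have h1 : a1 e = n + t n := by
      apply Subtype.ext
      show a (d1 e) = n + (a (s n) - n)
      rw [he]; abel
    have h2 : l (t n) = 0 := by
      have h3 : (n : Fin k → R) = ∑ i, (n : Fin k → R) i • Pi.single i (1 : R) := by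
        ext j; simp [Finset.sum_apply, Pi.single_apply]
      rw [h3, map_sum, map_sum]
      refine Finset.sum_eq_zero fun i _ => ?_
      rw [map_smul, map_smul]
      exact quot_smul R (hmin n n.2 i) _
    rw [h1, map_add, h2, add_zero]
  have hK : ∀ z, L (d2 z) ∈ maximalIdeal R := by
    intro z
    rw [← Ideal.Quotient.eq_zero_iff_mem, hL']
    have : a1 (d2 z) = 0 := by
      apply Subtype.ext
      show a (d1 (d2 z)) = 0
      rw [h21.apply_apply_eq_zero, map_zero]
    rw [this, map_zero]
  let L2 : P2 →ₗ[R] maximalIdeal R := LinearMap.codRestrict (maximalIdeal R) (L ∘ₗ d2) hK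
  obtain ⟨g, hg⟩ := H (θ ∘ₗ L2) (by
    intro z hz
    have hz' : d2 z = 0 := hz
    have : L2 z = 0 := by
      apply Subtype.ext
      show L (d2 z) = 0
      rw [hz', map_zero]
    simp [this])
  obtain ⟨z, hz⟩ := (h21 ((x : R) • e)).1 (by
    rw [map_smul, he, ← map_smul]
    have : (x : R) • (n : Fin k → R) = 0 := by
      ext i
      simpa [mul_comm] using hx _ (hmin n n.2 i)
    rw [this, map_zero])
  have h1 := LinearMap.congr_fun hg z
  have h2 : L2 z = x := by
    apply Subtype.ext
    show L (d2 z) = x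
    rw [hz, map_smul, smul_eq_mul]
    have := hx _ hunit
    linear_combination this
  apply hθ (g e)
  rw [← h2, ← smul_eq_mul, h2, ← map_smul, ← hz]
  exact h1.symm ▸ (by simp [h2])

lemma four_one (R : Type u) [CommRing R] [IsNoetherianRing R] [IsLocalRing R]
    (x : maximalIdeal R) (θ : maximalIdeal R →ₗ[R] R)
    (hx : ∀ a ∈ maximalIdeal R, a * x = 0) (hθ : ∀ r : R, θ x ≠ (x : R) * r)
    (M : Type u) [AddCommGroup M] [Module R M] [Module.Finite R M]
    (h : Subsingleton (((Ext R (ModuleCat R) 2).obj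
          (Opposite.op (ModuleCat.of R M))).obj (ModuleCat.of R R))) : Module.Free R M := by
  let P := projectiveResolution (ModuleCat.of R M)
  have hP : ∀ i, Module.Projective R (P.complex.X i) := fun i =>
    (IsProjective.iff_projective (R := R) (P.complex.X i)).2 (P.projective i)
  have hex : (P.complex.linearYonedaObj R (ModuleCat.of R R)).ExactAt 2 := by
    rw [HomologicalComplex.exactAt_iff_isZero_homology]
    exact Limits.IsZero.of_iso (ModuleCat.isZero_of_subsingleton _)
      (P.isoExt (R := R) 2 (ModuleCat.of R R)).symm
  rw [HomologicalComplex.exactAt_iff' _ 1 2 3 (by simp) (by simp),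
    ShortComplex.moduleCat_exact_iff] at hex
  have e1 := (ShortComplex.ShortExact.moduleCat_exact_iff_function_exact _).1 (P.exact_succ 0)
  have e2 := (ShortComplex.ShortExact.moduleCat_exact_iff_function_exact _).1 (P.exact_succ 1)
  have e0 := (ShortComplex.ShortExact.moduleCat_exact_iff_function_exact _).1 P.exact₀
  have := hP 0
  have := hP 1
  refine ext_two_core R x θ hx hθ M (P.complex.X 0) (P.complex.X 1) (P.complex.X 2)
    (P.complex.d 2 1).hom (P.complex.d 1 0).hom (P.π.f 0).hom ?_ e1 e0 ?_
  · exact (ModuleCat.epi_iff_surjective _).1 inferInstance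
  · intro f hf
    obtain ⟨g, hg⟩ := hex (ModuleCat.ofHom f : P.complex.X 2 ⟶ ModuleCat.of R R) (by
      show P.complex.d 3 2 ≫ ModuleCat.ofHom f = 0
      ext z
      have : (P.complex.d 3 2).hom z ∈ LinearMap.ker (P.complex.d 2 1).hom :=
        e2.apply_apply_eq_zero z
      exact hf this)
    have hg' : P.complex.d 2 1 ≫ (show P.complex.X 1 ⟶ ModuleCat.of R R from g) =
      ModuleCat.ofHom f := hg
    exact ⟨(show P.complex.X 1 ⟶ ModuleCat.of R R from g).hom, congrArg ModuleCat.Hom.hom hg'⟩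

lemma ext_free (R : Type u) [CommRing R] (M : Type u) [AddCommGroup M] [Module R M]
    [Module.Free R M] (i : ℕ) (hi : 0 < i) :
    Subsingleton (((Ext R (ModuleCat R) i).obj
          (Opposite.op (ModuleCat.of R M))).obj (ModuleCat.of R R)) := by
  obtain ⟨i, rfl⟩ := Nat.exists_eq_succ_of_ne_zero hi.ne'
  have : Projective (ModuleCat.of R M) := (IsProjective.iff_projective (R := R) M).1 inferInstance
  exact ModuleCat.subsingleton_of_isZero (isZero_Ext_succ_of_projective (R := R) _ _ i)

end Stmt7



/-- Let `(R,𝔪)` be a noetherian local ring with `𝔪³ = 0`, `𝔪` not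
generated by a single element, and `𝔪² ≠ (0 :_R 𝔪)` (the socle of `R`). Then for a
finitely generated `R`-module `M` the following are equivalent:
(1) `M` is free; (2) `M` is reflexive; (3) the evaluation map `M → M**` is surjective;
(4) `Ext^i_R(M,R) = 0` for all `i > 0`; (5) `Ext^i_R(M*,R) = 0` for all `i > 0`. -/
theorem stmt7 (R : Type u) [CommRing R] [IsNoetherianRing R] [IsLocalRing R]
    (hm3 : IsLocalRing.maximalIdeal R ^ 3 = ⊥)
    (hmp : ¬ (IsLocalRing.maximalIdeal R).IsPrincipal)
    (hsoc : IsLocalRing.maximalIdeal R ^ 2 ≠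
      Submodule.colon (⊥ : Ideal R) (IsLocalRing.maximalIdeal R))
    (M : Type u) [AddCommGroup M] [Module R M] [Module.Finite R M] :
    List.TFAE [
      Module.Free R M,
      Module.IsReflexive R M,
      Function.Surjective (Module.Dual.eval R M),
      ∀ i : ℕ, 0 < i →
        Subsingleton (((Ext R (ModuleCat R) i).obj
          (Opposite.op (ModuleCat.of R M))).obj (ModuleCat.of R R)),
      ∀ i : ℕ, 0 < i →
        Subsingleton (((Ext R (ModuleCat R) i).obj
          (Opposite.op (ModuleCat.of R (Module.Dual R M)))).obj (ModuleCat.of R R))] := by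
  obtain ⟨x, θ, hx, hx0, hθ⟩ := Stmt7.exists_data R hm3 hmp hsoc
  tfae_have 1 → 2 := fun _ => inferInstance
  tfae_have 2 → 3 := fun h => (Module.bijective_dual_eval R M).2
  tfae_have 3 → 1 := fun h => Stmt7.three_one R x θ hx hθ M h
  tfae_have 1 → 4 := fun _ i hi => Stmt7.ext_free R M i hi
  tfae_have 4 → 1 := fun h => Stmt7.four_one R x θ hx hθ M (h 2 (by norm_num))
  tfae_have 1 → 5 := fun _ i hi => Stmt7.ext_free R (Module.Dual R M) i hi
  tfae_have 5 → 1 := fun h => Stmt7.dual_one R x hx hx0 M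
    (Stmt7.four_one R x θ hx hθ (Module.Dual R M) (h 2 (by norm_num)))
  tfae_finish
end

section
/- Let R = ℚ[X,Y]/(X², XY, Y³). Then every reflexive R-module is finitely generated and free. -/
/-- The ring `R = ℚ[X,Y]/(X², XY, Y³)`. -/
abbrev RamrasRing : Type :=
  MvPolynomial (Fin 2) ℚ ⧸
    (Ideal.span {MvPolynomial.X 0 ^ 2,
        MvPolynomial.X 0 * MvPolynomial.X 1,
        MvPolynomial.X 1 ^ 3} : Ideal (MvPolynomial (Fin 2) ℚ))

namespace Ramras

section general

variable {k R : Type} [Field k] [CommRing R] [Algebra k R]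

/-- The hypotheses on the ring which are used in the proof. -/
structure Good (ε : R →ₐ[k] k) (x y : R) : Prop where
  ker : ∀ r, ε r = 0 → ∃ a b, r = x * a + y * b
  xx : x * x = 0
  xy : x * y = 0
  yyy : y * y * y = 0
  ind : ∀ r b, x * r = y * b → ε r = 0
  yy : y * y ≠ 0

/-- The submodule `𝔪 M`. -/
def mT (x y : R) (M : Type) [AddCommGroup M] [Module R M] : Submodule R M :=
  LinearMap.range (LinearMap.lsmul R M x) ⊔ LinearMap.range (LinearMap.lsmul R M y)

theorem mem_mT {x y : R} {M : Type} [AddCommGroup M] [Module R M] {v : M} :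
    v ∈ mT x y M ↔ ∃ u w, v = x • u + y • w := by
  simp only [mT, Submodule.mem_sup, LinearMap.mem_range, LinearMap.lsmul_apply]
  constructor
  · rintro ⟨_, ⟨u, rfl⟩, _, ⟨w, rfl⟩, rfl⟩
    exact ⟨u, w, rfl⟩
  · rintro ⟨u, w, rfl⟩
    exact ⟨_, ⟨u, rfl⟩, _, ⟨w, rfl⟩, rfl⟩

variable {ε : R →ₐ[k] k} {x y : R}

theorem Good.dec (h : Good ε x y) (r : R) :
    ∃ a b, r = algebraMap k R (ε r) + x * a + y * b := by
  obtain ⟨a, b, hab⟩ := h.ker (r - algebraMap k R (ε r)) (by simp)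
  exact ⟨a, b, by linear_combination hab⟩

theorem Good.mul_x (h : Good ε x y) (r : R) : r * x = algebraMap k R (ε r) * x := by
  obtain ⟨a, b, hab⟩ := h.dec r
  linear_combination x * hab + a * h.xx + b * h.xy

theorem Good.mul_yy (h : Good ε x y) (r : R) :
    r * (y * y) = algebraMap k R (ε r) * (y * y) := by
  obtain ⟨a, b, hab⟩ := h.dec r
  linear_combination (y * y) * hab + a * y * h.xy + b * h.yyy

variable {M : Type} [AddCommGroup M] [Module R M] [Module k M] [IsScalarTower k R M]

theorem Good.smul_mem (h : Good ε x y) (r : R) (v : M) : r • v - ε r • v ∈ mT x y M := by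
  obtain ⟨a, b, hab⟩ := h.dec r
  rw [mem_mT]
  refine ⟨a • v, b • v, ?_⟩
  rw [← algebraMap_smul R (ε r) v]
  simp only [smul_smul, ← add_smul, ← sub_smul]
  congr 1
  linear_combination hab

theorem Good.mk_smul (h : Good ε x y) (r : R) (v : M) :
    (mT x y M).mkQ (r • v) = ε r • (mT x y M).mkQ v := by
  have : (mT x y M).mkQ (r • v) = (mT x y M).mkQ (ε r • v) := by
    rw [← sub_eq_zero, ← map_sub]
    exact (Submodule.Quotient.mk_eq_zero _).2 (h.smul_mem r v)
  rw [this]; rfl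

theorem Good.nak {M : Type} [AddCommGroup M] [Module R M]
    (h : Good ε x y) (N : Submodule R M) (hN : ∀ v, ∃ n ∈ N, v - n ∈ mT x y M) :
    N = ⊤ := by
  have key : ∀ v : M, ∃ n ∈ N, ∃ u w, v = n + (x • u + y • w) := by
    intro v
    obtain ⟨n, hn, hv⟩ := hN v
    obtain ⟨u, w, e⟩ := mem_mT.1 hv
    exact ⟨n, hn, u, w, by rw [← e]; abel⟩
  have hyx : y * x = 0 := by rw [mul_comm]; exact h.xy
  rw [eq_top_iff]
  rintro v -
  obtain ⟨n, hn, u, w, rfl⟩ := key v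
  obtain ⟨n1, hn1, u1, w1, rfl⟩ := key u
  obtain ⟨n2, hn2, u2, w2, rfl⟩ := key w
  obtain ⟨n3, hn3, u3, w3, rfl⟩ := key w2
  simp only [smul_add, smul_smul, h.xx, h.xy, hyx, h.yyy, mul_zero, zero_smul, mul_assoc,
    add_zero, zero_add]
  have h3 : y * (y * y) = 0 := by rw [← mul_assoc]; exact h.yyy
  simp only [h3, zero_smul, add_zero]
  exact N.add_mem hn (N.add_mem (N.smul_mem _ hn1) (N.add_mem (N.smul_mem _ hn2)
    (N.smul_mem _ hn3)))

theorem Good.star (h : Good ε x y) [Module.IsReflexive R M]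
    (φ : Module.Dual R M → k) (hadd : ∀ f g, φ (f + g) = φ f + φ g)
    (hsmul : ∀ (r : R) f, φ (r • f) = ε r * φ f) :
    ∃ u : M, ∀ f, φ f = ε (f u) := by
  let Φ : Module.Dual R (Module.Dual R M) :=
    { toFun := fun f => algebraMap k R (φ f) * x
      map_add' := fun f g => by rw [hadd, map_add, add_mul]
      map_smul' := fun r f => by
        rw [hsmul, map_mul, RingHom.id_apply, smul_eq_mul]
        linear_combination (-algebraMap k R (φ f)) * h.mul_x r }
  obtain ⟨e, he⟩ := (Module.bijective_dual_eval R M).2 Φ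
  have he' : ∀ f : Module.Dual R M, f e = algebraMap k R (φ f) * x := fun f => by
    exact LinearMap.congr_fun he f
  have hmem : e ∈ mT x y M := by
    by_contra hne
    have hne' : (mT x y M).mkQ e ≠ 0 := by simpa using hne
    have : ∃ ψ : Module.Dual k (M ⧸ mT x y M), ψ ((mT x y M).mkQ e) ≠ 0 := by
      by_contra! hc
      exact hne' ((Module.forall_dual_apply_eq_zero_iff k _).1 hc)
    obtain ⟨ψ, hψ⟩ := this
    let f : Module.Dual R M :=
      { toFun := fun v => algebraMap k R (ψ ((mT x y M).mkQ v)) * (y * y)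
        map_add' := fun u v => by rw [map_add, map_add, map_add, add_mul]
        map_smul' := fun r v => by
          rw [h.mk_smul, map_smul, smul_eq_mul, map_mul, RingHom.id_apply, smul_eq_mul]
          linear_combination (-algebraMap k R (ψ ((mT x y M).mkQ v))) * h.mul_yy r }
    have h1 : f e = algebraMap k R (ψ ((mT x y M).mkQ e)) * (y * y) := rfl
    have h2 := he' f
    have h3 := h.ind (algebraMap k R (φ f)) (algebraMap k R (ψ ((mT x y M).mkQ e)) * y)
      (by linear_combination h1 - h2)
    have h4 : φ f = 0 := by simpa using h3
    rw [h4, map_zero, zero_mul, h1] at h2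
    apply h.yy
    have h5 : algebraMap k R (ψ ((mT x y M).mkQ e))⁻¹ * algebraMap k R (ψ ((mT x y M).mkQ e))
        = 1 := by
      rw [← map_mul, inv_mul_cancel₀ hψ, map_one]
    linear_combination (algebraMap k R (ψ ((mT x y M).mkQ e))⁻¹) * h2 - (y * y) * h5
  obtain ⟨u, v, huv⟩ := mem_mT.1 hmem
  refine ⟨u, fun f => ?_⟩
  have h1 := he' f
  rw [huv, map_add, map_smul, map_smul, smul_eq_mul, smul_eq_mul] at h1
  have h2 := h.ind (algebraMap k R (φ f) - f u) (f v) (by linear_combination -h1)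
  rw [map_sub, sub_eq_zero] at h2
  simpa using h2

theorem Good.star' (h : Good ε x y) [Module.IsReflexive R M]
    (β : Module.Dual k (M ⧸ mT x y M)) :
    ∃ f : Module.Dual R M, ∀ v, β ((mT x y M).mkQ v) = ε (f v) := by
  obtain ⟨f, hf⟩ := h.star (M := Module.Dual R M)
    (fun Φ => β ((mT x y M).mkQ ((Module.evalEquiv R M).symm Φ)))
    (fun f g => by simp only [map_add])
    (fun r f => by rw [map_smul, h.mk_smul, map_smul, smul_eq_mul])
  refine ⟨f, fun v => ?_⟩
  have := hf (Module.evalEquiv R M v)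
  rw [LinearEquiv.symm_apply_apply] at this
  exact this

/-- The reduction of a functional. -/
def red (ε : R →ₐ[k] k) (x y : R) (hx : ε x = 0) (hy : ε y = 0) (f : Module.Dual R M) :
    Module.Dual k (M ⧸ mT x y M) where
  toFun := fun q => Quotient.liftOn' q (fun v => ε (f v)) (by
    intro a b hab
    rw [Submodule.quotientRel_def, mem_mT] at hab
    obtain ⟨u, w, e⟩ := hab
    have := congrArg (fun t => ε (f t)) e
    simpa [hx, hy, sub_eq_zero] using this)
  map_add' := by
    rintro ⟨a⟩ ⟨b⟩
    change ε (f (a + b)) = ε (f a) + ε (f b)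
    simp
  map_smul' := by
    rintro c ⟨a⟩
    change ε (f (c • a)) = c • ε (f a)
    rw [← algebraMap_smul R c a]
    simp

theorem red_add (hx : ε x = 0) (hy : ε y = 0) (f g : Module.Dual R M) :
    red ε x y hx hy (f + g) = red ε x y hx hy f + red ε x y hx hy g := by
  refine LinearMap.ext fun q => ?_
  obtain ⟨v, rfl⟩ := (mT x y M).mkQ_surjective q
  change ε ((f + g) v) = ε (f v) + ε (g v)
  rw [LinearMap.add_apply, map_add]

theorem red_smul (hx : ε x = 0) (hy : ε y = 0) (r : R) (f : Module.Dual R M) :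
    red ε x y hx hy (r • f) = ε r • red ε x y hx hy f := by
  refine LinearMap.ext fun q => ?_
  obtain ⟨v, rfl⟩ := (mT x y M).mkQ_surjective q
  change ε ((r • f) v) = ε r • ε (f v)
  rw [LinearMap.smul_apply, smul_eq_mul, map_mul, smul_eq_mul]

theorem Good.finiteQ (h : Good ε x y) [Module.IsReflexive R M] :
    Module.Finite k (M ⧸ mT x y M) := by
  have hx : ε x = 0 := h.ind x 0 (by rw [h.xx, mul_zero])
  have hy : ε y = 0 := h.ind y 0 (by rw [h.xy, mul_zero])
  have : Module.IsReflexive k (M ⧸ mT x y M) := by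
    refine ⟨⟨?_, ?_⟩⟩
    · rw [injective_iff_map_eq_zero]
      intro q hq
      refine (Module.forall_dual_apply_eq_zero_iff k _).1 fun φ => ?_
      simpa using LinearMap.congr_fun hq φ
    · intro Ψ
      obtain ⟨u, hu⟩ := h.star (M := M) (fun f => Ψ (red ε x y hx hy f))
        (fun f g => by rw [red_add, map_add])
        (fun r f => by rw [red_smul, map_smul, smul_eq_mul])
      refine ⟨(mT x y M).mkQ u, ?_⟩
      refine LinearMap.ext fun β => ?_
      obtain ⟨f, hf⟩ := h.star' β
      have hβ : β = red ε x y hx hy f := by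
        refine LinearMap.ext fun q => ?_
        obtain ⟨v, rfl⟩ := (mT x y M).mkQ_surjective q
        exact hf v
      rw [Module.Dual.eval_apply, hf u, hβ]
      exact (hu f).symm
  infer_instance

theorem Good.main (h : Good ε x y) [Module.IsReflexive R M] :
    Module.Finite R M ∧ Module.Free R M := by
  have := h.finiteQ (M := M)
  let b := Module.finBasis k (M ⧸ mT x y M)
  choose e he using fun i => (mT x y M).mkQ_surjective (b i)
  choose f hf using fun i => h.star' (b.coord i)
  let g := Fintype.linearCombination R e
  have hg : Function.Surjective g := by
    rw [← LinearMap.range_eq_top]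
    apply h.nak
    intro v
    refine ⟨g (fun i => algebraMap k R (b.coord i ((mT x y M).mkQ v))), ⟨_, rfl⟩, ?_⟩
    rw [← Submodule.Quotient.mk_eq_zero, ← Submodule.mkQ_apply, map_sub, sub_eq_zero]
    simp only [g, Fintype.linearCombination_apply, map_sum, h.mk_smul, he]
    simp only [AlgHom.commutes, Algebra.algebraMap_self, RingHom.id_apply, Module.Basis.coord_apply]
    exact (b.sum_repr _).symm
  have hs : Function.Surjective (LinearMap.pi f ∘ₗ g) := by
    rw [← LinearMap.range_eq_top]
    apply h.nak
    intro w
    refine ⟨_, ⟨fun i => algebraMap k R (ε (w i)), rfl⟩, ?_⟩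
    have : ∀ j, ∃ p q, (w - (LinearMap.pi f ∘ₗ g) fun i => algebraMap k R (ε (w i))) j
        = x * p + y * q := by
      intro j
      apply h.ker
      have hfe : ∀ i, ε (f j (e i)) = if i = j then 1 else 0 := fun i => by
        rw [← hf, he, Module.Basis.coord_apply, Module.Basis.repr_self, Finsupp.single_apply]
      have e1 : (w - (LinearMap.pi f ∘ₗ g) fun i => algebraMap k R (ε (w i))) j
          = w j - f j (∑ i, algebraMap k R (ε (w i)) • e i) := rfl
      rw [e1]
      simp [hfe]
    choose p q hpq using this
    exact mem_mT.2 ⟨p, q, funext hpq⟩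
  have hi := OrzechProperty.injective_of_surjective_endomorphism _ hs
  have hgi : Function.Injective g := by
    rw [LinearMap.coe_comp] at hi
    exact hi.of_comp
  let E := LinearEquiv.ofBijective g ⟨hgi, hg⟩
  exact ⟨Module.Finite.equiv E, Module.Free.of_equiv E⟩

theorem Good.main' (h : Good ε x y) (M : Type) [AddCommGroup M] [Module R M]
    [Module.IsReflexive R M] : Module.Finite R M ∧ Module.Free R M := by
  let _ : Module k M := Module.compHom M (algebraMap k R)
  have : IsScalarTower k R M := IsScalarTower.of_algebraMap_smul (fun _ _ => rfl)
  exact h.main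

end general

open MvPolynomial

/-- The defining ideal. -/
noncomputable abbrev rI : Ideal (MvPolynomial (Fin 2) ℚ) :=
  Ideal.span {MvPolynomial.X 0 ^ 2, MvPolynomial.X 0 * MvPolynomial.X 1, MvPolynomial.X 1 ^ 3}

/-- The augmentation. -/
noncomputable def aug : RamrasRing →ₐ[ℚ] ℚ :=
  Ideal.Quotient.liftₐ rI (aeval (fun _ => (0 : ℚ))) (by
    intro a ha
    have : rI ≤ RingHom.ker (aeval (R := ℚ) (fun _ : Fin 2 => (0 : ℚ))) := by
      rw [Ideal.span_le]
      rintro z (rfl | rfl | rfl) <;> simp [RingHom.mem_ker]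
    exact this ha)

theorem aug_mk (p : MvPolynomial (Fin 2) ℚ) :
    aug (Ideal.Quotient.mk rI p) = aeval (fun _ => (0 : ℚ)) p := rfl

theorem good : Good aug (Ideal.Quotient.mk rI (X 0)) (Ideal.Quotient.mk rI (X 1)) where
  ker := by
    have key : ∀ p : MvPolynomial (Fin 2) ℚ, ∃ a b,
        p = C (aeval (fun _ => (0 : ℚ)) p) + X 0 * a + X 1 * b := by
      intro p
      induction p using MvPolynomial.induction_on with
      | C c => exact ⟨0, 0, by simp⟩
      | add p q hp hq =>
        obtain ⟨a, b, h1⟩ := hp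
        obtain ⟨c, d, h2⟩ := hq
        refine ⟨a + c, b + d, ?_⟩
        rw [map_add, map_add]
        linear_combination h1 + h2
      | mul_X p i _ =>
        fin_cases i
        · exact ⟨p, 0, by simp [mul_comm]⟩
        · exact ⟨0, p, by simp [mul_comm]⟩
    intro r hr
    obtain ⟨p, rfl⟩ := Ideal.Quotient.mk_surjective r
    obtain ⟨a, b, hab⟩ := key p
    rw [aug_mk] at hr
    refine ⟨Ideal.Quotient.mk rI a, Ideal.Quotient.mk rI b, ?_⟩
    rw [hr] at hab
    conv_lhs => rw [hab]
    simp
  xx := by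
    rw [← map_mul, Ideal.Quotient.eq_zero_iff_mem, ← pow_two]
    exact Ideal.subset_span (by simp)
  xy := by
    rw [← map_mul, Ideal.Quotient.eq_zero_iff_mem]
    exact Ideal.subset_span (by simp)
  yyy := by
    rw [← map_mul, ← map_mul, Ideal.Quotient.eq_zero_iff_mem]
    exact Ideal.subset_span (by right; right; simp; ring)
  ind := by
    intro r b hrb
    obtain ⟨p, rfl⟩ := Ideal.Quotient.mk_surjective r
    obtain ⟨q, rfl⟩ := Ideal.Quotient.mk_surjective b
    rw [aug_mk]
    rw [← map_mul, ← map_mul, Ideal.Quotient.eq] at hrb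
    let θ : MvPolynomial (Fin 2) ℚ →ₐ[ℚ] DualNumber ℚ := aeval ![DualNumber.eps, 0]
    have hle : rI ≤ RingHom.ker θ := by
      rw [Ideal.span_le]
      rintro z (rfl | rfl | rfl) <;> simp [RingHom.mem_ker, θ, pow_two]
    have h1 : θ (X 0 * p - X 1 * q) = 0 := hle hrb
    have h2 : (DualNumber.eps : DualNumber ℚ) * θ p = 0 := by
      simpa [θ] using h1
    have h3 := congrArg TrivSqZeroExt.snd h2
    have h4 : (TrivSqZeroExt.fstHom ℚ ℚ ℚ).comp θ = aeval (fun _ => (0 : ℚ)) := by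
      ext i
      fin_cases i <;> simp [θ]
    rw [← h4]
    simpa using h3
  yy := by
    rw [← map_mul, Ne, Ideal.Quotient.eq_zero_iff_mem]
    intro hmem
    let θ : MvPolynomial (Fin 2) ℚ →ₐ[ℚ] Polynomial ℚ := aeval ![0, Polynomial.X]
    have hle : rI ≤ (Ideal.span {(Polynomial.X : Polynomial ℚ) ^ 3}).comap θ := by
      rw [Ideal.span_le]
      rintro z (rfl | rfl | rfl) <;> simp [θ, Ideal.mem_span_singleton]
    have h1 := hle hmem
    rw [Ideal.mem_comap, Ideal.mem_span_singleton] at h1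
    have h2 : (Polynomial.X : Polynomial ℚ) ^ 3 ∣ Polynomial.X ^ 2 := by
      simpa [θ, pow_two] using h1
    rw [Polynomial.X_pow_dvd_iff] at h2
    have := h2 2 (by norm_num)
    simp at this

end Ramras

/-- Let `R = ℚ[X,Y]/(X², XY, Y³)`. Then every reflexive `R`-module is
finitely generated and free. -/
theorem stmt8 (M : Type) [AddCommGroup M] [Module RamrasRing M]
    (h : Module.IsReflexive RamrasRing M) :
    Module.Finite RamrasRing M ∧ Module.Free RamrasRing M := by
  exact Ramras.good.main' M
end

section
/- Let R = ℚ[[X,Y,Z]]/(XY, XZ), the quotient of the formal power series ring in three variables over ℚ by the ideal generated by XY and XZ, and let M = R/(y,z) where y, z denote the images of Y, Z in R. Then M is a reflexive R-module which is not free. -/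
/-- The ring `R = ℚ[[X,Y,Z]]/(XY, XZ)`. -/
abbrev FiberProdRing : Type :=
  MvPowerSeries (Fin 3) ℚ ⧸
    (Ideal.span {MvPowerSeries.X 0 * MvPowerSeries.X 1,
        MvPowerSeries.X 0 * MvPowerSeries.X 2} : Ideal (MvPowerSeries (Fin 3) ℚ))

/-- The ideal `(y,z)` of `R`, generated by the images of `Y` and `Z`. -/
noncomputable abbrev yzIdeal : Ideal FiberProdRing :=
  Ideal.span {Ideal.Quotient.mk _ (MvPowerSeries.X 1),
    Ideal.Quotient.mk _ (MvPowerSeries.X 2)}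

theorem refl_aux {R : Type*} [CommRing R] (x y z : R) (hxy : x * y = 0) (hxz : x * z = 0)
    (h1 : ∀ r, r * y = 0 → ∃ s, r = x * s)
    (h2 : ∀ r, x * r = 0 → r ∈ Ideal.span {y, z}) :
    Module.IsReflexive R (R ⧸ (Ideal.span {y, z} : Ideal R)) := by
  set I : Ideal R := Ideal.span {y, z} with hI
  have hyI : y ∈ I := Ideal.subset_span (by simp)
  have hle : I ≤ LinearMap.ker (LinearMap.mulLeft R x) := by
    rw [hI, Ideal.span_le]
    rintro a (rfl | rfl) <;> simpa using ‹_›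
  let φ : Module.Dual R (R ⧸ I) := Submodule.liftQ I (LinearMap.mulLeft R x) hle
  have hφ : ∀ r : R, φ (Submodule.Quotient.mk r) = x * r := fun r => rfl
  have hext : ∀ f g : Module.Dual R (R ⧸ I),
      f (Submodule.Quotient.mk 1) = g (Submodule.Quotient.mk 1) → f = g := by
    intro f g h
    refine LinearMap.ext fun m => ?_
    obtain ⟨r, rfl⟩ := Submodule.Quotient.mk_surjective I m
    have : (Submodule.Quotient.mk r : R ⧸ I) = r • Submodule.Quotient.mk 1 := by
      rw [← Submodule.Quotient.mk_smul]; simp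
    rw [this, map_smul, map_smul, h]
  have hgen : ∀ f : Module.Dual R (R ⧸ I), ∃ s : R, f = s • φ := by
    intro f
    have : f (Submodule.Quotient.mk 1) * y = 0 := by
      rw [mul_comm, ← smul_eq_mul, ← map_smul, ← Submodule.Quotient.mk_smul,
        (Submodule.Quotient.mk_eq_zero I).2 (by simpa using hyI), map_zero]
    obtain ⟨s, hs⟩ := h1 _ this
    refine ⟨s, hext _ _ ?_⟩
    rw [hs, LinearMap.smul_apply, hφ, smul_eq_mul]; ring
  have hyφ : y • φ = 0 := by
    refine hext _ _ ?_
    rw [LinearMap.smul_apply, hφ, smul_eq_mul, LinearMap.zero_apply]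
    linear_combination hxy
  refine ⟨?_, ?_⟩
  · rw [injective_iff_map_eq_zero]
    intro m hm
    obtain ⟨r, rfl⟩ := Submodule.Quotient.mk_surjective I m
    have := LinearMap.congr_fun hm φ
    rw [Module.Dual.eval_apply, hφ] at this
    exact (Submodule.Quotient.mk_eq_zero I).2 (h2 _ this)
  · intro ψ
    have : ψ φ * y = 0 := by
      rw [mul_comm, ← smul_eq_mul, ← map_smul, hyφ, map_zero]
    obtain ⟨s, hs⟩ := h1 _ this
    refine ⟨Submodule.Quotient.mk s, LinearMap.ext fun f => ?_⟩
    obtain ⟨t, rfl⟩ := hgen f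
    rw [map_smul, map_smul, Module.Dual.eval_apply, hφ, hs]

theorem X_ndvd {i j : Fin 3} (h : i ≠ j) :
    ¬ (MvPowerSeries.X i : MvPowerSeries (Fin 3) ℚ) ∣ MvPowerSeries.X j := by
  intro hd
  have := MvPowerSeries.X_dvd_iff.1 hd (Finsupp.single j 1) (by simp [h.symm])
  simp at this

theorem X_dvd_of_mul {i j : Fin 3} (h : i ≠ j) (f : MvPowerSeries (Fin 3) ℚ)
    (hd : (MvPowerSeries.X i : MvPowerSeries (Fin 3) ℚ) ∣ f * MvPowerSeries.X j) :
    MvPowerSeries.X i ∣ f := by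
  rw [MvPowerSeries.X_dvd_iff] at hd ⊢
  intro m hm
  have := hd (m + Finsupp.single j 1) (by simp [hm, h.symm])
  rwa [MvPowerSeries.X, MvPowerSeries.coeff_add_mul_monomial, mul_one] at this

/-- Let `R = ℚ[[X,Y,Z]]/(XY, XZ)` and `M = R/(y,z)`, where `y, z` are the
images of `Y, Z` in `R`. Then `M` is a reflexive `R`-module which is not free. -/
theorem stmt9 :
    Module.IsReflexive FiberProdRing (FiberProdRing ⧸ yzIdeal) ∧
      ¬ Module.Free FiberProdRing (FiberProdRing ⧸ yzIdeal) := by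
  let J : Ideal (MvPowerSeries (Fin 3) ℚ) := Ideal.span {MvPowerSeries.X 0 * MvPowerSeries.X 1,
        MvPowerSeries.X 0 * MvPowerSeries.X 2}
  have hJ : ∀ f, f ∈ J → ∃ a b, f = MvPowerSeries.X 0 *
      (a * MvPowerSeries.X 1 + b * MvPowerSeries.X 2) := by
    intro f hf
    obtain ⟨a, b, h⟩ := Ideal.mem_span_pair.1 hf
    exact ⟨a, b, by rw [← h]; ring⟩
  have hxy : (Ideal.Quotient.mk J (MvPowerSeries.X 0)) * Ideal.Quotient.mk J (MvPowerSeries.X 1)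
      = 0 := by
    rw [← map_mul, Ideal.Quotient.eq_zero_iff_mem]
    exact Ideal.subset_span (by simp)
  have hxz : (Ideal.Quotient.mk J (MvPowerSeries.X 0)) * Ideal.Quotient.mk J (MvPowerSeries.X 2)
      = 0 := by
    rw [← map_mul, Ideal.Quotient.eq_zero_iff_mem]
    exact Ideal.subset_span (by simp)
  have hX0 : (MvPowerSeries.X 0 : MvPowerSeries (Fin 3) ℚ) ≠ 0 := by
    intro h
    exact X_ndvd (i := 1) (j := 0) (by decide) (h ▸ dvd_zero _)
  refine ⟨refl_aux (Ideal.Quotient.mk J (MvPowerSeries.X 0)) _ _ hxy hxz ?_ ?_, ?_⟩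
  · intro r hr
    obtain ⟨f, rfl⟩ := Ideal.Quotient.mk_surjective r
    have hr' : Ideal.Quotient.mk J (f * MvPowerSeries.X 1) = 0 := by
      rw [map_mul]; exact hr
    obtain ⟨a, b, h⟩ := hJ _ (Ideal.Quotient.eq_zero_iff_mem.1 hr')
    obtain ⟨s, rfl⟩ := X_dvd_of_mul (i := 0) (j := 1) (by decide) f ⟨_, h⟩
    exact ⟨Ideal.Quotient.mk J s, map_mul _ _ _⟩
  · intro r hr
    obtain ⟨f, rfl⟩ := Ideal.Quotient.mk_surjective r
    have hr' : Ideal.Quotient.mk J (MvPowerSeries.X 0 * f) = 0 := by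
      rw [map_mul]; exact hr
    obtain ⟨a, b, h⟩ := hJ _ (Ideal.Quotient.eq_zero_iff_mem.1 hr')
    have := mul_left_cancel₀ hX0 h
    subst this
    exact Ideal.mem_span_pair.2 ⟨Ideal.Quotient.mk J a, Ideal.Quotient.mk J b, by
      rw [map_add, map_mul, map_mul]⟩
  · intro hfree
    have hy : Ideal.Quotient.mk J (MvPowerSeries.X 1) ≠ 0 := by
      intro h
      obtain ⟨a, b, h⟩ := hJ _ (Ideal.Quotient.eq_zero_iff_mem.1 h)
      exact X_ndvd (i := 0) (j := 1) (by decide) ⟨_, h⟩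
    have hne : yzIdeal ≠ ⊤ := by
      intro h
      obtain ⟨a, b, hab⟩ := Ideal.mem_span_pair.1 ((Ideal.eq_top_iff_one _).1 h)
      have hx : Ideal.Quotient.mk J (MvPowerSeries.X 0) = 0 := by
        linear_combination a * hxy + b * hxz - Ideal.Quotient.mk J (MvPowerSeries.X 0) * hab
      obtain ⟨a, b, h⟩ := hJ _ (Ideal.Quotient.eq_zero_iff_mem.1 hx)
      have h1 := mul_left_cancel₀ hX0 ((mul_one _).trans h)
      have := congrArg MvPowerSeries.constantCoeff h1
      simp at this
    have : Nontrivial (FiberProdRing ⧸ yzIdeal) := Ideal.Quotient.nontrivial_iff.2 hne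
    let b := Module.Free.chooseBasis FiberProdRing (FiberProdRing ⧸ yzIdeal)
    obtain ⟨i⟩ := b.index_nonempty
    have h0 : (Ideal.Quotient.mk J (MvPowerSeries.X 1) : FiberProdRing) • b i = 0 := by
      obtain ⟨r, hr⟩ := Submodule.Quotient.mk_surjective yzIdeal (b i)
      rw [← hr, ← Submodule.Quotient.mk_smul, Submodule.Quotient.mk_eq_zero, smul_eq_mul]
      exact Ideal.mul_mem_right _ _ (Ideal.subset_span (by simp [J]))
    have := congrArg (fun m => b.repr m i) h0
    simp only [map_smul, Module.Basis.repr_self, map_zero, Finsupp.smul_apply,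
      Finsupp.single_eq_same, Finsupp.zero_apply, smul_eq_mul, mul_one] at this
    exact hy this
end

section
/- Let (A,𝔫) be a regular local ring of dimension n ≥ 2 and let f ∈ 𝔫 be nonzero. Let R = A/(f·𝔫), where f·𝔫 denotes the product of the principal ideal (f) with the maximal ideal 𝔫. Then the principal ideal fR of R (generated by the image of f) is a reflexive R-module which is not free. -/
open IsLocalRing in
lemma aux_exchange (A : Type u) [CommRing A] [IsLocalRing A] (s : Finset A)
    (hs : Ideal.span (s : Set A) = maximalIdeal A) (x : A) (hx : x ∈ maximalIdeal A)
    (hx2 : x ∉ maximalIdeal A ^ 2) :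
    ∃ t : Finset A, t.card + 1 = s.card ∧ Ideal.span (insert x (t : Set A)) = maximalIdeal A := by
  classical
  have h1 := hx
  rw [← hs] at h1
  obtain ⟨c, hc⟩ := (Submodule.mem_span_finset'.mp h1)
  have hmem : ∀ i : s, (i : A) ∈ maximalIdeal A := fun i => hs ▸ Ideal.subset_span i.2
  have : ∃ i : s, c i ∉ maximalIdeal A := by
    by_contra! h
    apply hx2
    rw [← hc, pow_two]
    exact Ideal.sum_mem _ fun i _ => Ideal.mul_mem_mul (h i) (hmem i)
  obtain ⟨i, hi⟩ := this
  have hu : IsUnit (c i) := by simpa using hi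
  refine ⟨s.erase i, Finset.card_erase_add_one i.2, ?_⟩
  apply le_antisymm
  · rw [Ideal.span_le]
    rintro y (rfl | hy)
    · exact hx
    · exact hmem ⟨y, Finset.mem_of_mem_erase hy⟩
  · rw [← hs, Ideal.span_le]
    intro y hy
    by_cases hyi : y = i
    · subst hyi
      have h3 : c i * (i : A) = x - ∑ j ∈ Finset.univ.erase i, c j * (j : A) := by
        rw [← hc, ← Finset.add_sum_erase _ _ (Finset.mem_univ i)]
        simp
      have h4 : c i * (i : A) ∈ Ideal.span (insert x ((s.erase (i : A) : Finset A) : Set A)) := by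
        rw [h3]
        refine Ideal.sub_mem _ (Ideal.subset_span (Set.mem_insert _ _)) (Ideal.sum_mem _ fun j hj => ?_)
        refine Ideal.mul_mem_left _ _ (Ideal.subset_span (Set.mem_insert_of_mem _ ?_))
        have := Finset.ne_of_mem_erase hj
        simp only [Finset.coe_erase, Set.mem_diff, Set.mem_singleton_iff]
        exact ⟨j.2, fun h => this (Subtype.ext h)⟩
      exact (Ideal.unit_mul_mem_iff_mem _ hu).mp h4
    · exact Ideal.subset_span (Set.mem_insert_of_mem _ (by simpa [hyi] using hy))

open IsLocalRing in
lemma aux_regular (n : ℕ) : ∀ (A : Type u) [CommRing A] [IsLocalRing A] [IsNoetherianRing A]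
    (_ : (n : WithBot ℕ∞) ≤ ringKrullDim A)
    (s : Finset A) (_ : Ideal.span (s : Set A) = maximalIdeal A) (_ : s.card ≤ n),
    IsDomain A ∧ (0 < n → ∃ x ∈ maximalIdeal A, Prime x) := by
  induction n with
  | zero =>
    intro A _ _ _ hd s hs hc
    have : s = ∅ := by simpa using hc
    subst this
    have hb : maximalIdeal A = ⊥ := by simpa using hs.symm
    exact ⟨(isField_iff_maximalIdeal_eq.mpr hb).isDomain, by simp⟩
  | succ n ih =>
    intro A _ _ _ hd s hs hc
    have hmin : maximalIdeal A ∉ minimalPrimes A := by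
      intro h
      have h0 : (maximalIdeal A).height = 0 := by
        exact Ideal.height_eq_zero_iff.mpr h
      have := maximalIdeal_height_eq_ringKrullDim (R := A)
      rw [h0] at this
      rw [← this] at hd
      have h2 : ((n + 1 : ℕ) : WithBot ℕ∞) ≤ ((0 : ℕ) : WithBot ℕ∞) := by exact_mod_cast hd
      have := Nat.cast_le.mp h2
      omega
    have hbot : maximalIdeal A ≠ ⊥ := by
      intro h
      apply hmin
      refine ⟨⟨inferInstance, bot_le⟩, fun q _ _ => ?_⟩
      rw [h]; exact bot_le
    have hsq : ¬ maximalIdeal A ≤ maximalIdeal A ^ 2 := by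
      intro h
      apply hbot
      refine Submodule.eq_bot_of_le_smul_of_le_jacobson_bot (maximalIdeal A) _ (IsNoetherian.noetherian _) ?_ ?_
      · rwa [smul_eq_mul, ← pow_two]
      · rw [jacobson_eq_maximalIdeal _ bot_ne_top]
    have hav : ∃ x ∈ maximalIdeal A, x ∉ maximalIdeal A ^ 2 ∧ ∀ p ∈ minimalPrimes A, x ∉ p := by
      by_contra! h
      have hfin := minimalPrimes.finite_of_isNoetherianRing A
      have := (Ideal.subset_union_prime_finite (f := id)
        (s := insert (maximalIdeal A ^ 2) (minimalPrimes A)) (hfin.insert _)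
        (maximalIdeal A ^ 2) (maximalIdeal A ^ 2) (by
          rintro i (rfl | hi) h1 h2
          · exact absurd rfl h1
          · exact hi.1.1) (I := maximalIdeal A)).mp (by
          intro x hx
          simp only [Set.mem_iUnion]
          by_cases hx2 : x ∈ maximalIdeal A ^ 2
          · exact ⟨_, Set.mem_insert _ _, hx2⟩
          · obtain ⟨p, hp, hxp⟩ := h x hx hx2
            exact ⟨p, Set.mem_insert_of_mem _ hp, hxp⟩)
      obtain ⟨p, (rfl | hp), hle⟩ := this
      · exact hsq hle
      · have : maximalIdeal A = p := le_antisymm hle (le_maximalIdeal hp.1.1.ne_top)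
        exact hmin (this ▸ hp)
    obtain ⟨x, hx, hx2, hxp⟩ := hav
    obtain ⟨t, htc, ht⟩ := aux_exchange A s hs x hx hx2
    have hxtop : Ideal.span {x} ≠ ⊤ := by
      intro h
      rw [Ideal.span_singleton_eq_top] at h
      exact hx h
    haveI : Nontrivial (A ⧸ Ideal.span {x}) := Ideal.Quotient.nontrivial_iff.mpr hxtop
    haveI : IsLocalRing (A ⧸ Ideal.span {x}) :=
      IsLocalRing.of_surjective' (Ideal.Quotient.mk _) Ideal.Quotient.mk_surjective
    have hd' : (n : WithBot ℕ∞) ≤ ringKrullDim (A ⧸ Ideal.span {x}) := by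
      have h := Ideal.height_le_ringKrullDim_quotient_add_one hx
      rw [maximalIdeal_height_eq_ringKrullDim] at h
      have h2 := hd.trans h
      rw [Nat.cast_add, Nat.cast_one] at h2
      exact (ENat.WithBot.add_le_add_one_right_iff).mp h2
    classical
    have hmax : Ideal.span ((t.image (Ideal.Quotient.mk (Ideal.span {x})) : Finset _) : Set _)
        = maximalIdeal (A ⧸ Ideal.span {x}) := by
      have h1 : (maximalIdeal A).map (Ideal.Quotient.mk (Ideal.span {x})) =
          maximalIdeal (A ⧸ Ideal.span {x}) := by
        exact map_maximalIdeal_of_surjective _ Ideal.Quotient.mk_surjective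
      rw [← h1, ← ht, Ideal.map_span, Set.image_insert_eq]
      have : Ideal.Quotient.mk (Ideal.span {x}) x = 0 :=
        Ideal.Quotient.eq_zero_iff_mem.mpr (Ideal.mem_span_singleton_self x)
      rw [this, Ideal.span_insert_zero, Finset.coe_image]
    have hdom := (ih (A ⧸ Ideal.span {x}) hd' _ hmax (Finset.card_image_le.trans (by omega))).1
    have hpr : (Ideal.span {x}).IsPrime := (Ideal.Quotient.isDomain_iff_prime _).mp hdom
    obtain ⟨p, hp, hpx⟩ := Ideal.exists_minimalPrimes_le (I := (⊥ : Ideal A)) (J := Ideal.span {x}) bot_le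
    have hpp : p.IsPrime := hp.1.1
    have hp0 : p = ⊥ := by
      refine Submodule.eq_bot_of_le_smul_of_le_jacobson_bot (maximalIdeal A) _ (IsNoetherian.noetherian _) ?_ ?_
      · intro y hy
        obtain ⟨a, rfl⟩ := Ideal.mem_span_singleton'.mp (hpx hy)
        have : a ∈ p := (hpp.mem_or_mem hy).resolve_right (hxp p hp)
        rw [mul_comm]
        exact Ideal.mul_mem_mul hx this
      · rw [jacobson_eq_maximalIdeal _ bot_ne_top]
    subst hp0
    have hx0 : x ≠ 0 := fun h => hxp _ hp (by simp [h])
    exact ⟨(IsDomain.of_bot_isPrime A), fun _ => ⟨x, hx, (Ideal.span_singleton_prime hx0).mp hpr⟩⟩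

open IsLocalRing in
lemma aux_socle (A : Type u) [CommRing A] [IsLocalRing A] [IsNoetherianRing A]
    (n : ℕ) (hn : 2 ≤ n) (hdim : ringKrullDim A = n)
    (hreg : ∃ s : Finset A, Ideal.span (s : Set A) = maximalIdeal A ∧ s.card = n)
    (f : A) (hf0 : f ≠ 0) :
    f ∉ Ideal.span {f} * maximalIdeal A ∧
    ∀ r, (∀ a ∈ maximalIdeal A, a * r ∈ Ideal.span {f} * maximalIdeal A) → ∃ b, r = b * f := by
  obtain ⟨s, hs, hc⟩ := hreg
  obtain ⟨hdom, h⟩ := aux_regular n A hdim.ge s hs hc.le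
  obtain ⟨x, hx, hxp⟩ := h (by omega)
  have hy : ∃ y ∈ maximalIdeal A, y ∉ Ideal.span {x} := by
    by_contra! h
    have he : maximalIdeal A = Ideal.span {x} :=
      le_antisymm h ((Ideal.span_singleton_le_iff_mem _).mpr hx)
    have h1 := Ideal.height_span_singleton_le_one (x := x) hx
    have h2 := maximalIdeal_height_eq_ringKrullDim (R := A)
    rw [hdim, he] at h2
    have h3 : (Ideal.span {x}).height = (n : ℕ∞) := by exact_mod_cast h2
    rw [h3] at h1
    have : n ≤ 1 := by exact_mod_cast h1
    omega
  obtain ⟨y, hy, hyx⟩ := hy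
  rw [Ideal.mem_span_singleton] at hyx
  constructor
  · intro h
    obtain ⟨a, ha, hfa⟩ := Ideal.mem_span_singleton_mul.mp h
    have : a = 1 := mul_left_cancel₀ hf0 (by rw [hfa, mul_one])
    subst this
    exact ha isUnit_one
  · intro r hr
    obtain ⟨a, -, ha⟩ := Ideal.mem_span_singleton_mul.mp (hr x hx)
    obtain ⟨b, -, hb⟩ := Ideal.mem_span_singleton_mul.mp (hr y hy)
    have h1 : y * a = x * b := mul_left_cancel₀ hf0 (by linear_combination y * ha - x * hb)
    obtain ⟨c, rfl⟩ := (hxp.dvd_or_dvd (Dvd.intro _ h1.symm)).resolve_left hyx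
    exact ⟨c, mul_left_cancel₀ hxp.ne_zero (by linear_combination -ha)⟩

lemma aux_final (R : Type u) [CommRing R] (g : R) (hg : g ≠ 0) (hgg : g * g = 0)
    (S : Set R) (hS : ∀ a ∈ S, a * g = 0)
    (hsoc : ∀ c : R, (∀ a ∈ S, a * c = 0) → ∃ b, c = b * g) :
    Module.IsReflexive R (Ideal.span {g}) ∧ ¬ Module.Free R (Ideal.span {g}) := by
  let g' : Ideal.span {g} := ⟨g, Ideal.mem_span_singleton_self g⟩
  have hgen : ∀ z : Ideal.span {g}, ∃ b : R, z = b • g' := by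
    rintro ⟨z, hz⟩
    obtain ⟨b, rfl⟩ := Ideal.mem_span_singleton'.mp hz
    exact ⟨b, rfl⟩
  have hS' : ∀ a ∈ S, a • g' = 0 := fun a ha => Subtype.ext (hS a ha)
  let φ₀ : Module.Dual R (Ideal.span {g}) := (Ideal.span {g}).subtype
  have hφ₀ : φ₀ g' = g := rfl
  have hdual : ∀ φ : Module.Dual R (Ideal.span {g}), ∃ b : R, φ = b • φ₀ := by
    intro φ
    obtain ⟨b, hb⟩ := hsoc (φ g') (fun a ha => by
      rw [← smul_eq_mul, ← map_smul, hS' a ha, map_zero])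
    refine ⟨b, LinearMap.ext fun z => ?_⟩
    obtain ⟨c, rfl⟩ := hgen z
    rw [map_smul, hb, LinearMap.smul_apply, map_smul, hφ₀]
    simp only [smul_eq_mul]; ring
  have hSφ : ∀ a ∈ S, a • φ₀ = 0 := by
    intro a ha
    refine LinearMap.ext fun z => ?_
    obtain ⟨c, rfl⟩ := hgen z
    rw [LinearMap.smul_apply, map_smul, hφ₀, smul_comm, smul_eq_mul a, hS a ha]
    simp
  refine ⟨⟨⟨?_, ?_⟩⟩, ?_⟩
  · rw [injective_iff_map_eq_zero]
    intro z hz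
    have := LinearMap.congr_fun hz φ₀
    exact Subtype.ext this
  · intro Ψ
    obtain ⟨b, hb⟩ := hsoc (Ψ φ₀) (fun a ha => by
      rw [← smul_eq_mul, ← map_smul, hSφ a ha, map_zero])
    refine ⟨b • g', LinearMap.ext fun φ => ?_⟩
    obtain ⟨c, rfl⟩ := hdual φ
    rw [map_smul Ψ, hb, Module.Dual.eval_apply, LinearMap.smul_apply, map_smul, hφ₀]
    simp
  · intro hfree
    haveI : Nontrivial (Ideal.span {g}) := ⟨g', 0, fun h => hg (congrArg Subtype.val h)⟩
    apply hg
    have : FaithfulSMul R (Ideal.span {g}) := inferInstance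
    apply this.eq_of_smul_eq_smul
    intro z
    obtain ⟨c, rfl⟩ := hgen z
    apply Subtype.ext
    change g * (c * g) = 0 * (c * g)
    linear_combination c * hgg


/-- Let `(A,𝔫)` be a regular local ring of dimension `n ≥ 2` (regular:
the maximal ideal `𝔫` is generated by `n` elements where `n` is the Krull dimension) and
let `f ∈ 𝔫` be nonzero. Let `R = A/(f·𝔫)`. Then the principal ideal `fR` of `R`
(generated by the image of `f`) is a reflexive `R`-module which is not free. -/
theorem stmt10 (A : Type u) [CommRing A] [IsLocalRing A] [IsNoetherianRing A]
    (n : ℕ) (hn : 2 ≤ n) (hdim : ringKrullDim A = n)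
    (hreg : ∃ s : Finset A, Ideal.span (s : Set A) = IsLocalRing.maximalIdeal A ∧
      s.card = n)
    (f : A) (hf : f ∈ IsLocalRing.maximalIdeal A) (hf0 : f ≠ 0) :
    Module.IsReflexive (A ⧸ (Ideal.span {f} * IsLocalRing.maximalIdeal A))
      (Ideal.span {Ideal.Quotient.mk (Ideal.span {f} * IsLocalRing.maximalIdeal A) f}) ∧
    ¬ Module.Free (A ⧸ (Ideal.span {f} * IsLocalRing.maximalIdeal A))
      (Ideal.span {Ideal.Quotient.mk (Ideal.span {f} * IsLocalRing.maximalIdeal A) f}) := by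
  obtain ⟨h1, h2⟩ := aux_socle A n hn hdim hreg f hf0
  refine aux_final _ _ ?_ ?_
    ((Ideal.Quotient.mk _) '' (IsLocalRing.maximalIdeal A : Set A)) ?_ ?_
  · rwa [Ne, Ideal.Quotient.eq_zero_iff_mem]
  · rw [← map_mul, Ideal.Quotient.eq_zero_iff_mem]
    exact Ideal.mul_mem_mul (Ideal.mem_span_singleton_self f) hf
  · rintro _ ⟨a, ha, rfl⟩
    rw [← map_mul, Ideal.Quotient.eq_zero_iff_mem, mul_comm a f]
    exact Ideal.mul_mem_mul (Ideal.mem_span_singleton_self f) ha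
  · intro c hc
    obtain ⟨r, rfl⟩ := Ideal.Quotient.mk_surjective c
    obtain ⟨b, rfl⟩ := h2 r (fun a ha => by
      rw [← Ideal.Quotient.eq_zero_iff_mem, map_mul]
      exact hc _ ⟨a, ha, rfl⟩)
    exact ⟨Ideal.Quotient.mk _ b, map_mul _ _ _⟩
end

section
/- Let (R,𝔪,k) be a noetherian local ring which is eventually BNSI, i.e., there exists ℓ ≥ 1 such that for every finitely generated non-free R-module M and every i > ℓ one has β_i(M) > β_{i-1}(M). Then every finitely generated totally reflexive R-module is free. -/
open CategoryTheory

/-- The `i`-th Betti number of the `R`-module `M` over the local ring `R`: the length of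
the `R`-module `Tor_i^R(k, M)` where `k` is the residue field of `R`. (The length of a
module is the Krull dimension of its lattice of submodules, valued in `WithBot ℕ∞`.) -/
noncomputable def bettiNumber (R : Type u) [CommRing R] [IsLocalRing R]
    (M : Type u) [AddCommGroup M] [Module R M] (i : ℕ) : WithBot ℕ∞ :=
  Order.krullDim (Submodule R
    (((Tor (ModuleCat R) i).obj
      (ModuleCat.of R (IsLocalRing.ResidueField R))).obj (ModuleCat.of R M)))




section Splice
open Limits

variable {C : Type*} [Category* C] [Abelian C]

noncomputable def augm {X : C} (P : ProjectiveResolution X) : P.complex.X 0 ⟶ X := P.π.f 0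

lemma d_augm {X : C} (P : ProjectiveResolution X) : P.complex.d 1 0 ≫ augm P = 0 :=
  P.complex_d_comp_π_f_zero

instance epi_augm {X : C} (P : ProjectiveResolution X) : Epi (augm P) :=
  inferInstanceAs (Epi (P.π.f 0))

lemma exact_augm {X : C} (P : ProjectiveResolution X) :
    (ShortComplex.mk _ _ (d_augm P)).Exact := P.exact₀

lemma splice_w {S : ShortComplex C} (P : ProjectiveResolution S.X₁) :
    P.complex.d 1 0 ≫ (augm P ≫ S.f) = 0 := by
  rw [← Category.assoc, d_augm, zero_comp]

noncomputable def spliceComplex {S : ShortComplex C} (P : ProjectiveResolution S.X₁) :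
    ChainComplex C ℕ :=
  P.complex.augment (augm P ≫ S.f) (splice_w P)

lemma splice_w' {S : ShortComplex C} (P : ProjectiveResolution S.X₁) :
    (spliceComplex P).d 1 0 ≫ (S.g : (spliceComplex P).X 0 ⟶ S.X₃) = 0 := by
  change (augm P ≫ S.f) ≫ S.g = 0
  rw [Category.assoc, S.zero, comp_zero]

lemma splice_f_zero {S : ShortComplex C} (P : ProjectiveResolution S.X₁) :
    ((ChainComplex.toSingle₀Equiv (spliceComplex P) S.X₃).symm ⟨S.g, splice_w' P⟩).f 0 = S.g :=
  ChainComplex.toSingle₀Equiv_symm_apply_f_zero (C := spliceComplex P) (X := S.X₃) S.g (splice_w' P)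

lemma splice_exact0 {S : ShortComplex C} (hS : S.ShortExact) (P : ProjectiveResolution S.X₁)
    (w : (augm P ≫ S.f) ≫ S.g = 0) :
    (ShortComplex.mk (augm P ≫ S.f) S.g w).Exact := by
  let α : ShortComplex.mk (augm P ≫ S.f) S.g w ⟶ S :=
    { τ₁ := augm P
      τ₂ := 𝟙 _
      τ₃ := 𝟙 _
      comm₁₂ := (Category.comp_id _).symm
      comm₂₃ := by simp }
  have h1 : Epi α.τ₁ := epi_augm P
  have h2 : IsIso α.τ₂ := inferInstanceAs (IsIso (𝟙 S.X₂))
  have h3 : Mono α.τ₃ := inferInstanceAs (Mono (𝟙 S.X₃))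
  rw [ShortComplex.exact_iff_of_epi_of_isIso_of_mono α]
  exact hS.exact

lemma splice_exact1 {S : ShortComplex C} (hS : S.ShortExact) (P : ProjectiveResolution S.X₁) :
    (ShortComplex.mk _ _ (splice_w P)).Exact := by
  have := hS.mono_f
  let α : ShortComplex.mk _ _ (d_augm P) ⟶ ShortComplex.mk _ _ (splice_w P) :=
    { τ₁ := 𝟙 _
      τ₂ := 𝟙 _
      τ₃ := S.f
      comm₁₂ := by simp
      comm₂₃ := Category.id_comp _ }
  have h1 : Epi α.τ₁ := inferInstanceAs (Epi (𝟙 _))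
  have h2 : IsIso α.τ₂ := inferInstanceAs (IsIso (𝟙 _))
  have h3 : Mono α.τ₃ := this
  exact (ShortComplex.exact_iff_of_epi_of_isIso_of_mono α).1 (exact_augm P)

lemma splice_exactAt {S : ShortComplex C} (hS : S.ShortExact) (P : ProjectiveResolution S.X₁) (n : ℕ) :
    (spliceComplex P).ExactAt (n+1) := by
  rw [HomologicalComplex.exactAt_iff' _ (n + 1 + 1) (n + 1) n (by simp) (by simp)]
  match n with
  | 0 => exact splice_exact1 hS P
  | n + 1 => exact P.exact_succ n

noncomputable def splice {S : ShortComplex C} (hS : S.ShortExact) [Projective S.X₂]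
    (P : ProjectiveResolution S.X₁) : ProjectiveResolution S.X₃ where
  complex := spliceComplex P
  projective n := by
    cases n
    · exact inferInstanceAs (Projective S.X₂)
    · exact P.projective _
  π := (ChainComplex.toSingle₀Equiv _ _).symm ⟨S.g, splice_w' P⟩
  quasiIso := ⟨fun n => by
    cases n
    · have := hS.epi_g
      rw [ChainComplex.quasiIsoAt₀_iff, ShortComplex.quasiIso_iff_of_zeros']
      · refine (ShortComplex.exact_and_epi_g_iff_of_iso ?_).2
          ⟨splice_exact0 hS P (by rw [Category.assoc, S.zero, comp_zero]), this⟩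
        exact ShortComplex.isoMk (Iso.refl _) (Iso.refl _) (Iso.refl _)
          ((Category.id_comp _).trans (Category.comp_id _).symm)
          ((Category.id_comp _).trans (.trans (splice_f_zero P).symm (Category.comp_id _).symm))
      all_goals rfl
    · rw [quasiIsoAt_iff_exactAt']
      · apply splice_exactAt hS
      · apply ChainComplex.exactAt_succ_single_obj⟩

noncomputable def leftDerivedShift [HasProjectiveResolutions C] {D : Type*} [Category* D] [Abelian D]
    (F : C ⥤ D) [F.Additive] {S : ShortComplex C} (hS : S.ShortExact) [Projective S.X₂] (n : ℕ) :
    (F.leftDerived (n+2)).obj S.X₃ ≅ (F.leftDerived (n+1)).obj S.X₁ := by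
  let P := projectiveResolution S.X₁
  refine (splice hS P).isoLeftDerivedObj F (n+2) ≪≫ ?_ ≪≫ (P.isoLeftDerivedObj F (n+1)).symm
  refine ShortComplex.homologyMapIso ?_
  refine HomologicalComplex.isoSc' _ (n+3) (n+2) (n+1) (by simp) (by simp) ≪≫ ?_ ≪≫
    (HomologicalComplex.isoSc' _ (n+2) (n+1) n (by simp) (by simp)).symm
  exact Iso.refl _

end Splice

section Mod
open Limits
universe u
variable {R : Type u} [CommRing R]

lemma betti_shift [IsLocalRing R] {S : ShortComplex (ModuleCat.{u} R)} (hS : S.ShortExact) [Projective S.X₂] (n : ℕ) :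
    bettiNumber R S.X₃ (n+2) = bettiNumber R S.X₁ (n+1) := by
  let e := leftDerivedShift ((MonoidalCategory.tensoringLeft (ModuleCat.{u} R)).obj
    (ModuleCat.of R (IsLocalRing.ResidueField R))) hS n
  exact Order.krullDim_eq_of_orderIso (Submodule.orderIsoMapComap e.toLinearEquiv)

lemma ext_shift {S : ShortComplex (ModuleCat.{u} R)} (hS : S.ShortExact) [Projective S.X₂] (Y : ModuleCat.{u} R) (n : ℕ)
    (h : Subsingleton (((Ext R (ModuleCat R) (n+2)).obj (Opposite.op S.X₃)).obj Y)) :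
    Subsingleton (((Ext R (ModuleCat R) (n+1)).obj (Opposite.op S.X₁)).obj Y) := by
  let e := leftDerivedShift ((linearYoneda R (ModuleCat.{u} R)).obj Y).rightOp hS n
  exact (e.unop.toLinearEquiv.toEquiv.subsingleton_congr).2 h

lemma ext_one {S : ShortComplex (ModuleCat.{u} R)} (hS : S.ShortExact) [Projective S.X₂] (Y : ModuleCat.{u} R)
    (h : Subsingleton (((Ext R (ModuleCat R) 1).obj (Opposite.op S.X₃)).obj Y)) (φ : S.X₁ ⟶ Y) :
    ∃ ψ : S.X₂ ⟶ Y, S.f ≫ ψ = φ := by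
  let P := projectiveResolution S.X₁
  let Q := splice hS P
  have hz : IsZero ((Q.complex.linearYonedaObj R Y).homology 1) :=
    (ModuleCat.isZero_of_subsingleton _).of_iso (Q.isoExt 1 Y).symm
  rw [← HomologicalComplex.exactAt_iff_isZero_homology,
    HomologicalComplex.exactAt_iff' _ 0 1 2 (by simp) (by simp),
    ShortComplex.moduleCat_exact_iff] at hz
  obtain ⟨ψ, h2⟩ : ∃ ψ : S.X₂ ⟶ Y, (augm P ≫ S.f) ≫ ψ = augm P ≫ φ := hz (augm P ≫ φ) (by
    change P.complex.d 1 0 ≫ (augm P ≫ φ) = 0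
    rw [← Category.assoc, d_augm, zero_comp])
  refine ⟨ψ, ?_⟩
  rw [Category.assoc] at h2
  exact (cancel_epi (augm P)).1 h2

end Mod

section Main
universe u
variable {R : Type u} [CommRing R] [IsNoetherianRing R] [IsLocalRing R]

lemma finite_dual (K : Type u) [AddCommGroup K] [Module R K] [Module.Finite R K] :
    Module.Finite R (Module.Dual R K) := by
  obtain ⟨m, f, hf⟩ := Module.Finite.exists_fin' R K
  exact Module.Finite.of_injective f.dualMap (LinearMap.dualMap_injective_of_surjective hf)

lemma step (K : Type u) [AddCommGroup K] [Module R K] [Module.Finite R K]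
    (hfree : ¬ Module.Free R (Module.Dual R K))
    (hext : ∀ i : ℕ, 0 < i → Subsingleton (((Ext R (ModuleCat R) i).obj
        (Opposite.op (ModuleCat.of R K))).obj (ModuleCat.of R R))) :
    ∃ (K' : ModuleCat.{u} R), Module.Finite R K' ∧ ¬ Module.Free R (Module.Dual R K') ∧
      (∀ i : ℕ, 0 < i → Subsingleton (((Ext R (ModuleCat R) i).obj
        (Opposite.op K')).obj (ModuleCat.of R R))) ∧
      ∀ n, bettiNumber R (Module.Dual R K') (n+2) = bettiNumber R (Module.Dual R K) (n+1) := by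
  obtain ⟨m, f, hf⟩ := Module.Finite.exists_fin' R K
  let S : ShortComplex (ModuleCat.{u} R) := ShortComplex.mk
    (ModuleCat.ofHom (LinearMap.ker f).subtype) (ModuleCat.ofHom f) (by ext x; exact x.2)
  have hS : S.ShortExact := ModuleCat.shortComplex_shortExact S
    (fun x => ⟨fun h => ⟨⟨x, h⟩, rfl⟩, by rintro ⟨y, rfl⟩; exact y.2⟩)
    (Submodule.subtype_injective _) hf
  have hp : Projective S.X₂ := ModuleCat.projective_of_free (Pi.basisFun R (Fin m))
  have hsurj : Function.Surjective ((LinearMap.ker f).subtype.dualMap) := by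
    intro φ
    obtain ⟨ψ, hψ⟩ := ext_one hS (ModuleCat.of R R) (hext 1 one_pos) (ModuleCat.ofHom φ)
    refine ⟨ψ.hom, ?_⟩
    ext x
    exact congrArg (fun g => g.hom x) hψ
  have hex : Function.Exact f.dualMap (LinearMap.ker f).subtype.dualMap := by
    intro φ
    constructor
    · intro h
      have hk : LinearMap.ker f ≤ LinearMap.ker φ := fun x hx =>
        DFunLike.congr_fun h (⟨x, hx⟩ : LinearMap.ker f)
      refine ⟨((LinearMap.ker f).liftQ φ hk) ∘ₗ (f.quotKerEquivOfSurjective hf).symm.toLinearMap, ?_⟩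
      ext x
      have : (f.quotKerEquivOfSurjective hf).symm (f (Pi.single x 1)) = (LinearMap.ker f).mkQ (Pi.single x 1) := by
        rw [LinearEquiv.symm_apply_eq]; rfl
      simp [LinearMap.dualMap_apply, this]
    · rintro ⟨g, rfl⟩
      ext x
      change g (f x.1) = 0
      rw [x.2, map_zero]
  have hinj : Function.Injective f.dualMap := LinearMap.dualMap_injective_of_surjective hf
  let T : ShortComplex (ModuleCat.{u} R) := ShortComplex.mk
    (ModuleCat.ofHom f.dualMap) (ModuleCat.ofHom (LinearMap.ker f).subtype.dualMap)
    (ModuleCat.hom_ext hex.linearMap_comp_eq_zero)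
  have hT : T.ShortExact := ModuleCat.shortComplex_shortExact T hex hinj hsurj
  have hTp : Projective T.X₂ :=
    ModuleCat.projective_of_free (Pi.basisFun R (Fin m)).dualBasis
  refine ⟨S.X₁, inferInstanceAs (Module.Finite R (LinearMap.ker f)), ?_, ?_, ?_⟩
  · intro hfr
    apply hfree
    have hfr' : Module.Free R (Module.Dual R (LinearMap.ker f)) := hfr
    obtain ⟨l, hl⟩ := Module.projective_lifting_property _ LinearMap.id hsurj
    have hsp := (hex.split_tfae').out 0 1
    obtain ⟨_, r, hr⟩ := hsp.1 ⟨hinj, l, hl⟩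
    have : Module.Projective R (Module.Dual R K) := Module.Projective.of_split _ r hr
    exact Module.free_of_flat_of_isLocalRing
  · intro i hi
    obtain ⟨n, rfl⟩ := Nat.exists_eq_succ_of_ne_zero hi.ne'
    exact ext_shift hS _ n (hext (n+2) (by omega))
  · intro n
    exact betti_shift hT n

lemma main_aux (ℓ : ℕ) (hl : 1 ≤ ℓ) (hB : ∀ (N : Type u) [AddCommGroup N] [Module R N],
      Module.Finite R N → ¬ Module.Free R N →
      ∀ i : ℕ, ℓ < i → bettiNumber R N (i - 1) < bettiNumber R N i) (b : WithBot ℕ∞) :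
    ∀ (K : Type u) [AddCommGroup K] [Module R K] [Module.Finite R K]
    (_ : ¬ Module.Free R (Module.Dual R K))
    (_ : ∀ i : ℕ, 0 < i → Subsingleton (((Ext R (ModuleCat R) i).obj
        (Opposite.op (ModuleCat.of R K))).obj (ModuleCat.of R R))),
     bettiNumber R (Module.Dual R K) ℓ ≠ b := by
  induction b using WellFoundedLT.induction with
  | ind b ih =>
    intro K _ _ _ hfree hext hb
    obtain ⟨K', h1, h2, h3, h4⟩ := step K hfree hext
    refine ih (bettiNumber R (Module.Dual R K') ℓ) ?_ K' h2 h3 rfl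
    obtain ⟨n, rfl⟩ : ∃ n, ℓ = n + 1 := ⟨ℓ - 1, by omega⟩
    have := hB (Module.Dual R K') (finite_dual K') h2 (n+2) (by omega)
    rw [h4, hb] at this
    exact this

end Main

/-- Let `(R,𝔪,k)` be a noetherian local ring which is eventually BNSI,
i.e. there is `ℓ ≥ 1` such that for every finitely generated non-free `R`-module `M` and
every `i > ℓ` one has `β_i(M) > β_{i-1}(M)`. Then every finitely generated totally
reflexive `R`-module (reflexive with `Ext^i_R(M,R) = Ext^i_R(M*,R) = 0` for all `i > 0`)
is free. -/
theorem stmt11 (R : Type u) [CommRing R] [IsNoetherianRing R] [IsLocalRing R]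
    (hBNSI : ∃ ℓ : ℕ, 1 ≤ ℓ ∧ ∀ (N : Type u) [AddCommGroup N] [Module R N],
      Module.Finite R N → ¬ Module.Free R N →
      ∀ i : ℕ, ℓ < i → bettiNumber R N (i - 1) < bettiNumber R N i)
    (M : Type u) [AddCommGroup M] [Module R M] [Module.Finite R M]
    (hrefl : Module.IsReflexive R M)
    (hext : ∀ i : ℕ, 0 < i →
      Subsingleton (((Ext R (ModuleCat R) i).obj
        (Opposite.op (ModuleCat.of R M))).obj (ModuleCat.of R R)))
    (hext' : ∀ i : ℕ, 0 < i →
      Subsingleton (((Ext R (ModuleCat R) i).obj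
        (Opposite.op (ModuleCat.of R (Module.Dual R M)))).obj (ModuleCat.of R R))) :
    Module.Free R M := by
  obtain ⟨ℓ, hl, hB⟩ := hBNSI
  by_contra hfree
  have hfree' : ¬ Module.Free R (Module.Dual R (Module.Dual R M)) := fun h =>
    hfree (Module.Free.of_equiv (Module.evalEquiv R M).symm)
  have := finite_dual (R := R) M
  exact main_aux ℓ hl hB _ (Module.Dual R M) hfree' hext' rfl
end

section
/- Let (R,𝔪) be a noetherian local ring such that for every finitely generated R-module M, freeness of the dual M* implies freeness of M. Then R has depth zero, i.e., every element of 𝔪 is a zerodivisor on R. -/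
/-- Let `(R,𝔪)` be a noetherian local ring such that for every finitely
generated `R`-module `M`, freeness of the dual `M*` implies freeness of `M`. Then `R` has
depth zero, i.e. every element of `𝔪` is a zerodivisor on `R`. -/
theorem stmt12 (R : Type u) [CommRing R] [IsNoetherianRing R] [IsLocalRing R]
    (h : ∀ (M : Type u) [AddCommGroup M] [Module R M], Module.Finite R M →
      Module.Free R (Module.Dual R M) → Module.Free R M) :
    ∀ x ∈ IsLocalRing.maximalIdeal R, ¬ Function.Injective (fun r : R => x * r) := by
  intro x hx hinj
  have hz : ∀ r : R, x * r = 0 → r = 0 := fun r hr => hinj (by simpa using hr)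
  have hkill : ∀ m : R ⧸ Ideal.span {x}, x • m = 0 := by
    intro m
    obtain ⟨r, rfl⟩ := Ideal.Quotient.mk_surjective m
    rw [← Ideal.Quotient.mk_eq_mk, ← Submodule.Quotient.mk_smul, Submodule.Quotient.mk_eq_zero]
    exact Ideal.mul_mem_right r _ (Ideal.mem_span_singleton_self x)
  have hsub : Subsingleton (Module.Dual R (R ⧸ Ideal.span {x})) := by
    refine ⟨fun f g => LinearMap.ext fun m => ?_⟩
    have key : ∀ k : Module.Dual R (R ⧸ Ideal.span {x}), k m = 0 := fun k => hz _ (by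
      rw [← smul_eq_mul, ← map_smul, hkill, map_zero])
    rw [key f, key g]
  have hfree : Module.Free R (R ⧸ Ideal.span {x}) :=
    h _ inferInstance (Module.Free.of_subsingleton R _)
  have hne : Ideal.span {x} ≠ ⊤ := by
    intro ht
    rw [Ideal.span_singleton_eq_top] at ht
    exact (IsLocalRing.mem_maximalIdeal x).1 hx ht
  have : Nontrivial (R ⧸ Ideal.span {x}) := Ideal.Quotient.nontrivial_iff.2 hne
  let b := Module.Free.chooseBasis R (R ⧸ Ideal.span {x})
  obtain ⟨i⟩ := b.index_nonempty
  have h0 : x = 0 := by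
    have := congrArg (fun m => b.repr m i) (hkill (b i))
    simpa using this
  exact one_ne_zero (hz 1 (by rw [h0, zero_mul]))
end

section
/- Let (R,𝔪) be a noetherian local ring such that for every finitely generated torsion-less R-module M, freeness of the dual M* implies freeness of M. Then the depth of R is less than 2, i.e., there is no R-regular sequence of length two consisting of elements of 𝔪. -/
/-- Let `(R,𝔪)` be a noetherian local ring such that for every finitely
generated torsion-less `R`-module `M` (the evaluation map `M → M**` is injective),
freeness of the dual `M*` implies freeness of `M`. Then the depth of `R` is less than 2:
there is no `R`-regular sequence `x₁, x₂` of elements of `𝔪` (i.e. `x₁` a nonzerodivisor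
on `R`, `x₂` a nonzerodivisor on `R/(x₁)`, and `(x₁,x₂) ≠ R`). -/
theorem stmt13 (R : Type u) [CommRing R] [IsNoetherianRing R] [IsLocalRing R]
    (h : ∀ (M : Type u) [AddCommGroup M] [Module R M], Module.Finite R M →
      Function.Injective (Module.Dual.eval R M) →
      Module.Free R (Module.Dual R M) → Module.Free R M) :
    ¬ ∃ x₁ x₂ : R, x₁ ∈ IsLocalRing.maximalIdeal R ∧ x₂ ∈ IsLocalRing.maximalIdeal R ∧
      Function.Injective (fun r : R => x₁ * r) ∧
      Function.Injective (fun r : R ⧸ Ideal.span {x₁} =>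
        Ideal.Quotient.mk (Ideal.span {x₁}) x₂ * r) ∧
      Ideal.span {x₁, x₂} ≠ (⊤ : Ideal R) := by
  rintro ⟨x, y, hx, hy, hinj, hinj2, hne⟩
  have hxI : x ∈ Ideal.span {x, y} := Ideal.subset_span (by simp)
  have hyI : y ∈ Ideal.span {x, y} := Ideal.subset_span (by simp)
  generalize hI : Ideal.span {x, y} = I at hne hxI hyI
  have hx0 : x ≠ 0 := by
    rintro rfl
    exact one_ne_zero (hinj (a₁ := (1 : R)) (a₂ := 0) (by simp))
  -- every functional on `I` is multiplication by an element of `R`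
  have key : ∀ f : Module.Dual R I, ∃ c : R, ∀ z : I, f z = c * (z : R) := by
    intro f
    have h1 : x * f ⟨y, hyI⟩ = y * f ⟨x, hxI⟩ := by
      rw [← smul_eq_mul, ← smul_eq_mul, ← map_smul, ← map_smul]
      congr 1
      ext
      simp [mul_comm]
    have h2 : f ⟨x, hxI⟩ ∈ Ideal.span {x} := by
      rw [← Ideal.Quotient.eq_zero_iff_mem]
      apply hinj2
      simp only [mul_zero]
      rw [← map_mul, Ideal.Quotient.eq_zero_iff_mem, ← h1]
      exact Ideal.mul_mem_right _ _ (Ideal.mem_span_singleton_self x)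
    obtain ⟨c, hc⟩ := Ideal.mem_span_singleton'.1 h2
    have h3 : f ⟨y, hyI⟩ = c * y := by
      apply hinj
      simp only
      rw [h1, ← hc]
      ring
    refine ⟨c, ?_⟩
    rintro ⟨z, hz⟩
    have hz' := hz
    rw [← hI, Ideal.mem_span_pair] at hz'
    obtain ⟨a, b, hab⟩ := hz'
    have : (⟨z, hz⟩ : I) = a • ⟨x, hxI⟩ + b • ⟨y, hyI⟩ := by
      ext
      simp [hab]
    rw [this, map_add, map_smul, map_smul, h3, ← hc]
    simp only [smul_eq_mul, Submodule.coe_add, Submodule.coe_smul]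
    ring
  have hev : Function.Injective (Module.Dual.eval R I) := by
    intro a b hab
    have := LinearMap.congr_fun hab (Submodule.subtype I)
    exact Subtype.ext (by simpa using this)
  have hdual : Module.Free R (Module.Dual R I) := by
    refine Module.Free.of_equiv (LinearEquiv.ofBijective
      (LinearMap.toSpanSingleton R (Module.Dual R I) (Submodule.subtype I)) ⟨?_, ?_⟩)
    · intro a b hab
      have := LinearMap.congr_fun hab ⟨x, hxI⟩
      apply hinj
      simpa [mul_comm] using this
    · intro f
      obtain ⟨c, hc⟩ := key f
      refine ⟨c, ?_⟩
      ext z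
      simp [hc]
  have hfree : Module.Free R I := h I inferInstance hev hdual
  have hnt : Nontrivial I := ⟨⟨⟨x, hxI⟩, 0, fun hh => hx0 (congrArg Subtype.val hh)⟩⟩
  let b := Module.Free.chooseBasis R I
  obtain ⟨i⟩ : Nonempty (Module.Free.ChooseBasisIndex R I) := b.index_nonempty
  obtain ⟨c, hc⟩ := key (b.coord i)
  have h1 := hc (b i)
  simp only [Module.Basis.coord_apply, Module.Basis.repr_self, Finsupp.single_eq_same] at h1
  apply hne
  rw [Ideal.eq_top_iff_one, h1]
  exact Ideal.mul_mem_left _ _ (b i).2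
end

section
/- Let (R,𝔪) be a noetherian local ring such that for every finitely generated R-module M, the dual M* is free. Then R is a regular local ring of Krull dimension at most two. -/
theorem aux_lt (a : WithBot ℕ∞) (n : ℕ) (h : a < ((n + 1 : ℕ) : WithBot ℕ∞)) :
    a ≤ (n : WithBot ℕ∞) := by
  induction a using WithBot.recBotCoe with
  | bot => exact bot_le
  | coe a =>
    have h : a < ((n + 1 : ℕ) : ℕ∞) := by exact_mod_cast h
    have : a ≤ (n : ℕ∞) := by
      induction a using ENat.recTopCoe with
      | top => simp at h
      | coe a =>
        have h : a < n + 1 := by exact_mod_cast h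
        exact_mod_cast Nat.lt_succ_iff.1 h
    exact_mod_cast this

open IsLocalRing in
theorem aux_ker_free {R : Type u} [CommRing R]
    (h : ∀ (M : Type u) [AddCommGroup M] [Module R M], Module.Finite R M →
      Module.Free R (Module.Dual R M)) {n : ℕ} (v : Fin n → R) :
    Module.Free R (LinearMap.ker (Module.piEquiv (Fin n) R R v)) := by
  have h1 := h ((Fin n → R) ⧸ Submodule.span R {v}) inferInstance
  have e1 := Submodule.dualQuotEquivDualAnnihilator (Submodule.span R {v})
  have e2 : LinearMap.ker (Module.piEquiv (Fin n) R R v) ≃ₗ[R]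
      (Submodule.span R {v}).dualAnnihilator := by
    refine (Module.piEquiv (Fin n) R R).ofSubmodules _ _ ?_
    ext φ
    obtain ⟨w, rfl⟩ := (Module.piEquiv (Fin n) R R).surjective φ
    simp only [Submodule.mem_map, LinearMap.mem_ker, Submodule.mem_dualAnnihilator,
      Submodule.mem_span_singleton, LinearEquiv.coe_coe, EmbeddingLike.apply_eq_iff_eq,
      exists_eq_right, forall_exists_index, forall_apply_eq_imp_iff,
      Module.piEquiv_apply_apply, smul_eq_mul]
    constructor
    · intro hw a
      simp only [Pi.smul_apply, smul_eq_mul]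
      rw [← mul_zero a, ← hw, Finset.mul_sum]
      exact Finset.sum_congr rfl fun i _ => by ring
    · intro hw
      simpa [mul_comm] using hw 1
  exact Module.Free.of_equiv (e1.trans e2.symm)

theorem aux_domain {R : Type u} [CommRing R] [IsLocalRing R]
    (h : ∀ (M : Type u) [AddCommGroup M] [Module R M], Module.Finite R M →
      Module.Free R (Module.Dual R M)) : IsDomain R := by
  have : NoZeroDivisors R := by
    refine ⟨fun {x y} hxy => ?_⟩
    by_contra! hc
    have hf := aux_ker_free h ![x]
    have : Nontrivial (LinearMap.ker (Module.piEquiv (Fin 1) R R ![x])) := by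
      refine ⟨⟨⟨![y], ?_⟩, 0, ?_⟩⟩
      · simp [Module.piEquiv_apply_apply, mul_comm y, hxy]
      · intro h0
        have := congrFun (congrArg Subtype.val h0) 0
        exact hc.2 (by simpa using this)
    have hfs : FaithfulSMul R (LinearMap.ker (Module.piEquiv (Fin 1) R R ![x])) := inferInstance
    refine hc.1 (hfs.eq_of_smul_eq_smul (m₁ := x) (m₂ := 0) ?_)
    rintro ⟨w, hw⟩
    ext i
    have : w 0 * x = 0 := by simpa [Module.piEquiv_apply_apply] using hw
    fin_cases i
    simpa [mul_comm] using this
  exact NoZeroDivisors.to_isDomain R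

theorem aux_finrank {R : Type u} [CommRing R] [IsDomain R] {n : ℕ} (v : Fin n → R)
    (i : Fin n) (hi : v i ≠ 0) :
    Module.finrank R (LinearMap.ker (Module.piEquiv (Fin n) R R v)) + 1 = n := by
  set f := Module.piEquiv (Fin n) R R v
  have h1 := Submodule.finrank_quotient_add_finrank (LinearMap.ker f)
  rw [f.quotKerEquivRange.finrank_eq] at h1
  have h2 : Module.finrank R (LinearMap.range f) = 1 := by
    apply le_antisymm
    · simpa using Submodule.finrank_le (LinearMap.range f)
    · have : Nontrivial (LinearMap.range f) := by
        refine ⟨⟨⟨v i, ⟨Pi.single i 1, ?_⟩⟩, 0, ?_⟩⟩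
        · simp [f, Module.piEquiv_apply_apply, Pi.single_apply]
        · simpa [Subtype.ext_iff] using hi
      exact Module.finrank_pos
  rw [h2] at h1
  simp at h1
  omega

theorem aux_colon {R : Type u} [CommRing R] [IsNoetherianRing R] [IsDomain R]
    (h : ∀ (M : Type u) [AddCommGroup M] [Module R M], Module.Finite R M →
      Module.Free R (Module.Dual R M)) (x w : R) (hx : x ≠ 0) :
    ∃ d, ∀ r, x ∣ r * w ↔ d ∣ r := by
  have hf := aux_ker_free h (n := 2) ![w, x]
  have hr := aux_finrank (n := 2) ![w, x] 1 (by simpa using hx)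
  have hr : Module.finrank R (LinearMap.ker (Module.piEquiv (Fin 2) R R ![w, x])) = 1 := by omega
  set K := LinearMap.ker (Module.piEquiv (Fin 2) R R ![w, x]) with hK
  have hmem : ∀ v : Fin 2 → R, v ∈ K ↔ v 0 * w + v 1 * x = 0 := by
    intro v
    simp [hK, Module.piEquiv_apply_apply, Fin.sum_univ_two]
  let b := Module.finBasisOfFinrankEq R K hr
  refine ⟨(b 0).1 0, fun r => ⟨?_, ?_⟩⟩
  · rintro ⟨s, hs⟩
    have hv : ![r, -s] ∈ K := by
      rw [hmem]
      simp [hs, mul_comm]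
    have h1 := b.sum_repr ⟨_, hv⟩
    simp only [Finset.univ_unique, Fin.default_eq_zero, Finset.sum_singleton] at h1
    have h2 := congrFun (congrArg Subtype.val h1) 0
    simp only [Submodule.coe_smul, Pi.smul_apply, smul_eq_mul, Matrix.cons_val_zero] at h2
    exact ⟨_, by rw [mul_comm]; exact h2.symm⟩
  · rintro ⟨s, rfl⟩
    have h1 := (hmem _).1 (b 0).2
    exact ⟨-((b 0).1 1 * s), by linear_combination s * h1⟩

open IsLocalRing in
theorem aux_three {R : Type u} [CommRing R] [IsNoetherianRing R] [IsLocalRing R] [IsDomain R]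
    (h : ∀ (M : Type u) [AddCommGroup M] [Module R M], Module.Finite R M →
      Module.Free R (Module.Dual R M)) (x y z : R)
    (hx : x ∈ maximalIdeal R) (hy : y ∈ maximalIdeal R) (hz : z ∈ maximalIdeal R)
    (hi : ∀ a b c, a * x + b * y + c * z ∈ maximalIdeal R ^ 2 →
      a ∈ maximalIdeal R ∧ b ∈ maximalIdeal R ∧ c ∈ maximalIdeal R) : False := by
  have hx0 : x ≠ 0 := by
    rintro rfl
    have := (hi 1 0 0 (by simp)).1
    exact (Ideal.ne_top_iff_one _).1 (maximalIdeal.isMaximal R).ne_top this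
  have hf := aux_ker_free h (n := 3) ![x, y, z]
  have hr := aux_finrank (n := 3) ![x, y, z] 0 (by simpa using hx0)
  have hr : Module.finrank R (LinearMap.ker (Module.piEquiv (Fin 3) R R ![x,y,z])) = 2 := by omega
  set K := LinearMap.ker (Module.piEquiv (Fin 3) R R ![x,y,z]) with hK
  have hKm : ∀ w : Fin 3 → R, w ∈ K → ∀ i, w i ∈ maximalIdeal R := by
    intro w hw
    have hw : w 0 * x + w 1 * y + w 2 * z = 0 := by
      simpa [hK, Module.piEquiv_apply_apply, Fin.sum_univ_three] using hw
    have := hi (w 0) (w 1) (w 2) (by rw [hw]; exact zero_mem _)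
    intro i; fin_cases i <;> simp [this]
  let b := Module.finBasisOfFinrankEq R K hr
  let k : Fin 3 → K := ![⟨![y, -x, 0], by simp [hK, Module.piEquiv_apply_apply, Fin.sum_univ_three]; ring⟩,
    ⟨![z, 0, -x], by simp [hK, Module.piEquiv_apply_apply, Fin.sum_univ_three]; ring⟩,
    ⟨![0, z, -y], by simp [hK, Module.piEquiv_apply_apply, Fin.sum_univ_three]; ring⟩]
  have hdep : ¬ LinearIndependent (ResidueField R)
      (fun i => fun j => residue R (b.repr (k i) j) : Fin 3 → Fin 2 → ResidueField R) := by
    intro hl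
    have := hl.fintype_card_le_finrank
    simp at this
  rw [Fintype.not_linearIndependent_iff] at hdep
  obtain ⟨g, hg, i0, hi0⟩ := hdep
  choose c hc using fun i => residue_surjective (g i)
  have hcoord : ∀ j, b.repr (∑ i, c i • k i) j ∈ maximalIdeal R := by
    intro j
    rw [← residue_eq_zero_iff]
    have := congrFun hg j
    simpa [← hc] using this
  have hsq : ∀ i, (∑ i, c i • k i : K).1 i ∈ maximalIdeal R ^ 2 := by
    intro i
    rw [← b.sum_repr (∑ i, c i • k i)]
    simp only [Submodule.coe_sum, Submodule.coe_smul, Finset.sum_apply, Pi.smul_apply, smul_eq_mul]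
    refine sum_mem fun j _ => ?_
    rw [pow_two]
    exact Ideal.mul_mem_mul (hcoord j) (hKm _ (b j).2 i)
  have h0 := hsq 0
  have h1 := hsq 1
  simp [Fin.sum_univ_three, k] at h0 h1
  have q1 := hi 0 (c 0) (c 1) (by simpa using h0)
  have q2 := hi (- c 0) 0 (c 2) (by simpa using h1)
  apply hi0
  rw [← hc, residue_eq_zero_iff]
  fin_cases i0
  · exact q1.2.1
  · exact q1.2.2
  · exact q2.2.2

open IsLocalRing in
theorem aux_le_two {R : Type u} [CommRing R] [IsNoetherianRing R] [IsLocalRing R] [IsDomain R]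
    (h : ∀ (M : Type u) [AddCommGroup M] [Module R M], Module.Finite R M →
      Module.Free R (Module.Dual R M)) : (maximalIdeal R).spanFinrank ≤ 2 := by
  by_contra! hn
  rw [spanFinrank_maximalIdeal_eq_finrank_cotangentSpace] at hn
  obtain ⟨f, hf⟩ := exists_linearIndependent_of_le_finrank (R := ResidueField R) (M := CotangentSpace R) hn
  choose t ht using fun i => (maximalIdeal R).toCotangent_surjective (f i)
  refine aux_three h (t 0) (t 1) (t 2) (t 0).2 (t 1).2 (t 2).2 ?_
  intro a b c habc
  rw [Fintype.linearIndependent_iff] at hf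
  have h1 : (maximalIdeal R).toCotangent (a • t 0 + b • t 1 + c • t 2) = 0 := by
    rw [Ideal.toCotangent_eq_zero]
    simpa using habc
  have h2 := hf ![residue R a, residue R b, residue R c] (by
    rw [Fin.sum_univ_three]
    simp only [map_add, map_smul, ht] at h1
    exact h1)
  simp_rw [← residue_eq_zero_iff]
  exact ⟨h2 0, h2 1, h2 2⟩

open IsLocalRing in
theorem aux_principal_s14 {R : Type u} [CommRing R] [IsNoetherianRing R] [IsLocalRing R] [IsDomain R]
    (h : ∀ (M : Type u) [AddCommGroup M] [Module R M], Module.Finite R M →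
      Module.Free R (Module.Dual R M)) (hd : Ring.KrullDimLE 1 R) :
    ∃ d, maximalIdeal R = Ideal.span {d} := by
  by_cases hb : maximalIdeal R = ⊥
  · exact ⟨0, by simp [hb]⟩
  obtain ⟨x, hx, hx0⟩ := Submodule.exists_mem_ne_zero_of_ne_bot hb
  have : Nontrivial (R ⧸ Ideal.span {x}) := by
    apply Ideal.Quotient.nontrivial_iff.2
    rw [Ne, Ideal.span_singleton_eq_top]
    exact hx
  obtain ⟨P, hP, -⟩ := exists_le_isAssociatedPrime_of_isNoetherianRing (R := R) (1 : R ⧸ Ideal.span {x}) one_ne_zero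
  rw [isAssociatedPrime_iff] at hP
  obtain ⟨hp, w, hw⟩ := hP
  obtain ⟨w, rfl⟩ := Ideal.Quotient.mk_surjective w
  have hmem : ∀ r, r ∈ P ↔ x ∣ r * w := by
    intro r
    rw [hw, Submodule.mem_colon_singleton, Submodule.mem_bot, ← Ideal.mem_span_singleton,
      ← Ideal.Quotient.eq_zero_iff_mem, map_mul]
    rfl
  have hP0 : P ≠ ⊥ := fun h0 => hx0 (by
    have := (hmem x).2 (dvd_mul_right _ _)
    simpa [h0] using this)
  have hPm := eq_maximalIdeal (hp.isMaximal_of_ne_bot hP0)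
  obtain ⟨d, hd⟩ := aux_colon h x w hx0
  refine ⟨d, ?_⟩
  ext r
  rw [← hPm, hmem, hd, Ideal.mem_span_singleton]

/-- Let `(R,𝔪)` be a noetherian local ring such that for every finitely
generated `R`-module `M`, the dual `M*` is free. Then `R` is a regular local ring
(the maximal ideal is generated by as many elements as the Krull dimension) of Krull
dimension at most two. -/
theorem stmt14 (R : Type u) [CommRing R] [IsNoetherianRing R] [IsLocalRing R]
    (h : ∀ (M : Type u) [AddCommGroup M] [Module R M], Module.Finite R M →
      Module.Free R (Module.Dual R M)) :
    (∃ s : Finset R, Ideal.span (s : Set R) = IsLocalRing.maximalIdeal R ∧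
      (s.card : WithBot ℕ∞) = ringKrullDim R) ∧ ringKrullDim R ≤ 2 := by
  have hdom := aux_domain h
  have hle := aux_le_two h
  have hkd := ringKrullDim_le_spanFinrank_maximalIdeal R
  have heq : ((IsLocalRing.maximalIdeal R).spanFinrank : WithBot ℕ∞) = ringKrullDim R := by
    refine le_antisymm ?_ hkd
    by_contra! hlt
    by_cases hF : IsField R
    · rw [IsLocalRing.isField_iff_maximalIdeal_eq.1 hF, Submodule.spanFinrank_bot] at hlt
      exact absurd hlt (not_lt.2 (by simpa using ringKrullDim_nonneg_of_nontrivial (R := R)))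
    · have h1 : (1 : WithBot ℕ∞) ≤ ringKrullDim R := by
        by_contra! hlt1
        apply hF
        have h0 : Ring.KrullDimLE 0 R :=
          (Order.krullDimLE_iff _ _).2 (aux_lt _ 0 (by simpa using! hlt1))
        rw [IsLocalRing.isField_iff_maximalIdeal_eq]
        exact (IsLocalRing.eq_maximalIdeal (Ideal.isMaximal_of_isPrime (⊥ : Ideal R))).symm
      have hn2 : (IsLocalRing.maximalIdeal R).spanFinrank = 2 := by
        have : 1 < (IsLocalRing.maximalIdeal R).spanFinrank := by
          exact_mod_cast h1.trans_lt hlt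
        omega
      rw [hn2] at hlt
      have hd1 : Ring.KrullDimLE 1 R :=
        (Order.krullDimLE_iff _ _).2 (aux_lt _ 1 hlt)
      obtain ⟨d, hd⟩ := aux_principal_s14 h hd1
      have := Submodule.spanFinrank_span_le_ncard_of_finite (R := R) (Set.finite_singleton d)
      rw [← Ideal.submodule_span_eq] at hd
      rw [← hd, hn2, Set.ncard_singleton] at this
      omega
  refine ⟨?_, hkd.trans (by exact_mod_cast hle)⟩
  have hfg : (IsLocalRing.maximalIdeal R).FG := IsNoetherian.noetherian _
  refine ⟨(Submodule.FG.finite_generators hfg).toFinset, ?_, ?_⟩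
  · simpa using! Submodule.span_generators (IsLocalRing.maximalIdeal R)
  · rw [← heq, ← Submodule.FG.generators_ncard hfg, Set.ncard_eq_toFinset_card _ (Submodule.FG.finite_generators hfg)]
end
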